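/- arXiv:1511.03724 — 2 statements merged into one kernel-verified Lean document; each statement's English description precedes it below -/
import Mathlib

section
/- Let s, t be real with t > s > 0, and let w = u + iv ∈ ℂ with u > 0. If F₊(s,t;w) = 0 or F₋(s,t;w) = 0, then −(1/(2t))·log(1 + 2(su)²) < v < −(1/(4t))·log(1 + (su)²) (log denotes the natural logarithm). In particular, all zeros of F₊ and F₋ with positive real part lie strictly below the real axis. -/
/-- `F₊(s,t;w) = 1 + i(1 + e^{itw})/(sw)` -/
noncomputable def Fplus (s t : ℝ) (w : ℂ) : ℂ :=
  1 + Complex.I * (1 + Complex.exp (Complex.I * t * w)) / (s * w)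

/-- `F₋(s,t;w) = 1 + i(1 − e^{itw})/(sw)` -/
noncomputable def Fminus (s t : ℝ) (w : ℂ) : ℂ :=
  1 + Complex.I * (1 - Complex.exp (Complex.I * t * w)) / (s * w)

lemma key_abs (s t : ℝ) (hs : 0 < s) (w : ℂ) (hu : 0 < w.re)
    (hzero : Fplus s t w = 0 ∨ Fminus s t w = 0) :
    Real.exp (-(2 * t * w.im)) = (1 + s * w.im) ^ 2 + (s * w.re) ^ 2 := by
  have hw : w ≠ 0 := by
    rintro rfl
    simp at hu
  have hsc : (s : ℂ) ≠ 0 := by exact_mod_cast hs.ne'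
  have hI : Complex.I * Complex.I = -1 := Complex.I_mul_I
  have hN : Complex.normSq (Complex.exp (Complex.I * t * w))
      = Complex.normSq (Complex.I * s * w - 1) := by
    rcases hzero with h | h
    · unfold Fplus at h
      field_simp at h
      have : Complex.exp (Complex.I * t * w) = Complex.I * s * w - 1 := by
        linear_combination (-Complex.I) * h + (1 + Complex.exp (Complex.I * t * w)) * hI
      rw [this]
    · unfold Fminus at h
      field_simp at h
      have : Complex.exp (Complex.I * t * w) = -(Complex.I * s * w - 1) := by
        linear_combination (Complex.I) * h - (1 - Complex.exp (Complex.I * t * w)) * hI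
      rw [this, Complex.normSq_neg]
  rw [Complex.normSq_eq_norm_sq, Complex.norm_exp, ← Real.exp_nat_mul, Complex.normSq_apply] at hN
  simp at hN
  rw [show -(2 * t * w.im) = -(2 * (t * w.im)) by ring, hN]
  ring

/-- Location of the zeros of `F₊` and `F₋` in the right half-plane: writing
`w = u + iv` with `u > 0`, any zero satisfies
`−(1/(2t))·log(1 + 2(su)²) < v < −(1/(4t))·log(1 + (su)²)`. -/
theorem stmt1 (s t : ℝ) (hs : 0 < s) (hts : s < t) (w : ℂ) (hu : 0 < w.re)
    (hzero : Fplus s t w = 0 ∨ Fminus s t w = 0) :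
    -(1 / (2 * t)) * Real.log (1 + 2 * (s * w.re) ^ 2) < w.im ∧
      w.im < -(1 / (4 * t)) * Real.log (1 + (s * w.re) ^ 2) := by
  have h := key_abs s t hs w hu hzero
  have ht : 0 < t := hs.trans hts
  have ha : 0 < (s * w.re) ^ 2 := by positivity
  generalize (s * w.re) ^ 2 = A at *
  generalize w.im = v at *
  have hv : v < 0 := by
    by_contra hv
    push Not at hv
    have h1 : Real.exp (-(2 * t * v)) ≤ 1 := by
      rw [Real.exp_le_one_iff]
      have : 0 ≤ 2 * t * v := by positivity
      linarith
    nlinarith [mul_nonneg hs.le hv]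
  obtain ⟨y, rfl⟩ : ∃ y, v = -y := ⟨-v, by ring⟩
  have hy : 0 < y := by linarith
  have hz : 0 < s * y := by positivity
  have hzt : s * y < t * y := by nlinarith
  have hq := Real.quadratic_le_exp_of_nonneg (x := -(2 * t * -y)) (by nlinarith)
  have hX : 1 + 2 * (s * y) + 2 * (s * y) ^ 2 < Real.exp (-(2 * t * -y)) := by nlinarith
  have e1 : Real.log (Real.exp (-(2 * t * -y))) = 2 * t * y := by rw [Real.log_exp]; ring
  generalize Real.exp (-(2 * t * -y)) = X at *
  have hX0 : 0 < X := by nlinarith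
  constructor
  · have : Real.log X < Real.log (1 + 2 * A) := Real.log_lt_log hX0 (by nlinarith)
    rw [e1] at this
    have h2 : y < 1 / (2 * t) * Real.log (1 + 2 * A) := by
      rw [one_div, ← div_eq_inv_mul, lt_div_iff₀ (by positivity)]
      linarith
    linarith
  · have : Real.log (1 + A) < Real.log (X ^ 2) :=
      Real.log_lt_log (by linarith) (by nlinarith)
    rw [Real.log_pow, e1] at this
    push_cast at this
    have h2 : 1 / (4 * t) * Real.log (1 + A) < y := by
      rw [one_div, ← div_eq_inv_mul, div_lt_iff₀ (by positivity)]
      linarith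
    linarith
end

section
/- Fix real κ > 0 and η > 0. For every a ∈ (0, 1/2) and every M > 20 there exists f₀ > 0 such that for all f ∈ (0, f₀): D_f(z) ≠ 0 for every z ∈ R₁ ∪ R₂, where R₁ = {z = re^{iθ} : r > f^a, −2π/3 + r^{−3/2}·M·f·log(r + f⁻¹) < θ < −r^{−3/2}·M·f·log(r + f⁻¹)} and R₂ = {z = re^{iθ} : r > f^a, −2π < θ < −2π/3 − r⁻¹·(1 + r^{−1/2})·M·f·log(r + f⁻¹)} (log denotes the natural logarithm). -/
open Real

/-- Taylor coefficients of the Airy function `Ai`: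
`a₀ = 3^{−2/3}/Γ(2/3)`, `a₁ = −3^{−1/3}/Γ(1/3)`, `a₂ = 0`,
`a_{k+3} = a_k/((k+3)(k+2))`. -/
noncomputable def airyCoeff : ℕ → ℂ
  | 0 => (3 : ℂ) ^ (-(2 : ℂ) / 3) / Complex.Gamma (2 / 3)
  | 1 => -((3 : ℂ) ^ (-(1 : ℂ) / 3) / Complex.Gamma (1 / 3))
  | 2 => 0
  | (k + 3) => airyCoeff k / (((k : ℂ) + 3) * ((k : ℂ) + 2))

/-- The Airy function `Ai`, as the entire function with the above Taylor
coefficients at `0`. -/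
noncomputable def Ai (z : ℂ) : ℂ := ∑' k : ℕ, airyCoeff k * z ^ k

/-- `ω = e^{2πi/3}` -/
noncomputable def ωc : ℂ := Complex.exp (2 * π * Complex.I / 3)

/-- `W = f^{1/3}·e^{−iπ/6}/(2π)` -/
noncomputable def Wf (f : ℝ) : ℂ :=
  ((f ^ ((1 : ℝ) / 3) : ℝ) : ℂ) * Complex.exp (-(π : ℂ) * Complex.I / 6) / (2 * π)

/-- `α₊(z) = Ai(−ω(z − κf)f^{−2/3})·Ai(−(z − κf)f^{−2/3})` -/
noncomputable def alphaP (κ f : ℝ) (z : ℂ) : ℂ :=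
  Ai (-ωc * (z - κ * f) * ((f ^ (-(2 : ℝ) / 3) : ℝ) : ℂ)) *
    Ai (-(z - κ * f) * ((f ^ (-(2 : ℝ) / 3) : ℝ) : ℂ))

/-- `α₋(z) = Ai(−ω(z + κf)f^{−2/3})·Ai(−(z + κf)f^{−2/3})` -/
noncomputable def alphaM (κ f : ℝ) (z : ℂ) : ℂ :=
  Ai (-ωc * (z + κ * f) * ((f ^ (-(2 : ℝ) / 3) : ℝ) : ℂ)) *
    Ai (-(z + κ * f) * ((f ^ (-(2 : ℝ) / 3) : ℝ) : ℂ))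

/-- `β₊(z) = Ai(−ω(z + κf)f^{−2/3})·Ai(−(z − κf)f^{−2/3})` -/
noncomputable def betaP (κ f : ℝ) (z : ℂ) : ℂ :=
  Ai (-ωc * (z + κ * f) * ((f ^ (-(2 : ℝ) / 3) : ℝ) : ℂ)) *
    Ai (-(z - κ * f) * ((f ^ (-(2 : ℝ) / 3) : ℝ) : ℂ))

/-- `β₋(z) = Ai(−ω(z − κf)f^{−2/3})·Ai(−(z + κf)f^{−2/3})` -/
noncomputable def betaM (κ f : ℝ) (z : ℂ) : ℂ :=
  Ai (-ωc * (z - κ * f) * ((f ^ (-(2 : ℝ) / 3) : ℝ) : ℂ)) *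
    Ai (-(z + κ * f) * ((f ^ (-(2 : ℝ) / 3) : ℝ) : ℂ))

/-- The resonance determinant `D_f` of the Stark Hamiltonian
`p² + fx + η⁻¹(δ_κ + δ_{−κ})`:
`D_f(z) = 1 + (α₊ + α₋)/(ηW) + β₊(β₋ − β₊)/(η²W²)`. -/
noncomputable def Df (κ η f : ℝ) (z : ℂ) : ℂ :=
  1 + (alphaP κ f z + alphaM κ f z) / (η * Wf f)
    + betaP κ f z * (betaM κ f z - betaP κ f z) / (η ^ 2 * (Wf f) ^ 2)

/-! ### Ray integrals -/

noncomputable def AiM (k : ℕ) : ℝ := ∫ s in Set.Ioi (0 : ℝ), s ^ k * Real.exp (-(s ^ 3) / 3)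

lemma AiM_eq (k : ℕ) :
    AiM k = (1 / 3 : ℝ) ^ (-((k : ℝ) + 1) / 3) * (1 / 3) * Real.Gamma (((k : ℝ) + 1) / 3) := by
  have h := integral_rpow_mul_exp_neg_mul_rpow (p := 3) (q := k) (b := 1 / 3) (by norm_num)
    (by have : (0 : ℝ) ≤ k := Nat.cast_nonneg k
        linarith) (by norm_num)
  rw [← h, AiM]
  refine MeasureTheory.setIntegral_congr_fun measurableSet_Ioi (fun s hs => ?_)
  simp only [Real.rpow_natCast]
  congr 2
  rw [show (3 : ℝ) = ((3 : ℕ) : ℝ) by norm_num, Real.rpow_natCast]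
  norm_num
  ring

lemma AiM_rec (k : ℕ) : AiM (k + 3) = (k + 1) * AiM k := by
  rw [AiM_eq, AiM_eq]
  have h0 : (0 : ℝ) ≤ k := Nat.cast_nonneg k
  have e1 : (((k + 3 : ℕ) : ℝ) + 1) / 3 = ((k : ℝ) + 1) / 3 + 1 := by push_cast; ring
  have e2 : -(((k + 3 : ℕ) : ℝ) + 1) / 3 = -((k : ℝ) + 1) / 3 + (-1) := by push_cast; ring
  rw [e1, e2, Real.Gamma_add_one (by positivity), Real.rpow_add (by norm_num), Real.rpow_neg_one]
  field_simp

lemma AiM_zero : AiM 0 = (3 : ℝ) ^ (-(2 : ℝ) / 3) * Real.Gamma (1 / 3) := by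
  rw [AiM_eq]
  have : (1 / 3 : ℝ) = (3 : ℝ) ^ (-1 : ℝ) := by rw [Real.rpow_neg_one]; norm_num
  norm_num
  left
  rw [show (1 / 3 : ℝ) = (3 : ℝ)⁻¹ by norm_num, Real.inv_rpow (by norm_num), ← Real.rpow_neg (by norm_num),
    show (3 : ℝ)⁻¹ = (3 : ℝ) ^ (-1 : ℝ) by rw [Real.rpow_neg_one], ← Real.rpow_add (by norm_num)]
  norm_num

lemma AiM_one : AiM 1 = (3 : ℝ) ^ (-(1 : ℝ) / 3) * Real.Gamma (2 / 3) := by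
  rw [AiM_eq]
  norm_num
  left
  rw [show (1 / 3 : ℝ) = (3 : ℝ)⁻¹ by norm_num, Real.inv_rpow (by norm_num), ← Real.rpow_neg (by norm_num),
    show (3 : ℝ)⁻¹ = (3 : ℝ) ^ (-1 : ℝ) by rw [Real.rpow_neg_one], ← Real.rpow_add (by norm_num)]
  norm_num

noncomputable def eP : ℂ := Complex.exp (π * Complex.I / 3)
noncomputable def eM : ℂ := Complex.exp (-(π * Complex.I / 3))

lemma eP_val : eP = 1 / 2 + (Real.sqrt 3 / 2 : ℝ) * Complex.I := by
  rw [eP, show (π * Complex.I / 3 : ℂ) = ((π / 3 : ℝ) : ℂ) * Complex.I by push_cast; ring,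
    Complex.exp_mul_I, ← Complex.ofReal_cos, ← Complex.ofReal_sin, Real.cos_pi_div_three,
    Real.sin_pi_div_three]
  push_cast; ring

lemma eM_val : eM = 1 / 2 - (Real.sqrt 3 / 2 : ℝ) * Complex.I := by
  rw [eM, show (-(π * Complex.I / 3) : ℂ) = ((-(π / 3) : ℝ) : ℂ) * Complex.I by push_cast; ring,
    Complex.exp_mul_I, ← Complex.ofReal_cos, ← Complex.ofReal_sin, Real.cos_neg, Real.sin_neg,
    Real.cos_pi_div_three, Real.sin_pi_div_three]
  push_cast; ring

lemma sqrt3_sq : ((Real.sqrt 3 : ℝ) : ℂ) ^ 2 = 3 := by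
  rw [← Complex.ofReal_pow, Real.sq_sqrt (by norm_num)]; norm_num

lemma eP_cube : eP ^ 3 = -1 := by
  rw [eP, ← Complex.exp_nat_mul]
  rw [show ((3 : ℕ) : ℂ) * (π * Complex.I / 3) = π * Complex.I by push_cast; ring, Complex.exp_pi_mul_I]

lemma eM_cube : eM ^ 3 = -1 := by
  rw [eM, ← Complex.exp_nat_mul]
  rw [show ((3 : ℕ) : ℂ) * (-(π * Complex.I / 3)) = -(π * Complex.I) by push_cast; ring, Complex.exp_neg,
    Complex.exp_pi_mul_I]; norm_num

lemma norm_eP : ‖eP‖ = 1 := by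
  rw [eP, show (π * Complex.I / 3 : ℂ) = ((π / 3 : ℝ) : ℂ) * Complex.I by push_cast; ring]
  exact Complex.norm_exp_ofReal_mul_I _

lemma norm_eM : ‖eM‖ = 1 := by
  rw [eM, show (-(π * Complex.I / 3) : ℂ) = ((-(π / 3) : ℝ) : ℂ) * Complex.I by push_cast; ring]
  exact Complex.norm_exp_ofReal_mul_I _

lemma Gamma_third_mul : Real.Gamma (1 / 3) * Real.Gamma (2 / 3) = 2 * π / Real.sqrt 3 := by
  have h := Real.Gamma_mul_Gamma_one_sub (1 / 3)
  rw [show (1 - 1 / 3 : ℝ) = 2 / 3 by norm_num, show π * (1 / 3) = π / 3 by ring,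
    Real.sin_pi_div_three] at h
  rw [h]; field_simp

lemma airyCoeff_zero : airyCoeff 0 = (((3 : ℝ) ^ (-(2 : ℝ) / 3) / Real.Gamma (2 / 3) : ℝ) : ℂ) := by
  rw [airyCoeff, Complex.ofReal_div, Complex.ofReal_cpow (by norm_num), ← Complex.Gamma_ofReal]
  push_cast; rfl

lemma airyCoeff_one : airyCoeff 1 = ((-((3 : ℝ) ^ (-(1 : ℝ) / 3) / Real.Gamma (1 / 3)) : ℝ) : ℂ) := by
  rw [airyCoeff, Complex.ofReal_neg, Complex.ofReal_div, Complex.ofReal_cpow (by norm_num), ← Complex.Gamma_ofReal]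
  push_cast; rfl

lemma airyCoeff_eq (k : ℕ) : airyCoeff k =
    1 / (2 * π * Complex.I) * ((-1) ^ k / (k.factorial : ℂ) * (eP ^ (k + 1) - eM ^ (k + 1)) * AiM k) := by
  have hG1 : Real.Gamma (1 / 3) ≠ 0 := (Real.Gamma_pos_of_pos (by norm_num)).ne'
  have hG2 : Real.Gamma (2 / 3) ≠ 0 := (Real.Gamma_pos_of_pos (by norm_num)).ne'
  have h3 : Real.sqrt 3 ≠ 0 := by positivity
  have hpi : (π : ℂ) ≠ 0 := by exact_mod_cast Real.pi_ne_zero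
  have hsub : eP - eM = Real.sqrt 3 * Complex.I := by rw [eP_val, eM_val]; push_cast; ring
  have hsub2 : eP ^ 2 - eM ^ 2 = Real.sqrt 3 * Complex.I := by
    rw [eP_val, eM_val]; push_cast; ring
  induction k using Nat.strong_induction_on with
  | _ k ih =>
    match k with
    | 0 =>
      rw [airyCoeff_zero, AiM_zero]
      simp only [zero_add, pow_one, hsub]
      have : (3 : ℝ) ^ (-(2 : ℝ) / 3) / Real.Gamma (2 / 3)
          = Real.sqrt 3 / (2 * π) * ((3 : ℝ) ^ (-(2 : ℝ) / 3) * Real.Gamma (1 / 3)) := by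
        have := Gamma_third_mul
        field_simp at this ⊢
        linear_combination -this
      rw [this]
      push_cast
      have := Complex.I_ne_zero
      field_simp
      simp
    | 1 =>
      rw [airyCoeff_one, AiM_one]
      simp only [Nat.reduceAdd, hsub2]
      have : (3 : ℝ) ^ (-(1 : ℝ) / 3) / Real.Gamma (1 / 3)
          = Real.sqrt 3 / (2 * π) * ((3 : ℝ) ^ (-(1 : ℝ) / 3) * Real.Gamma (2 / 3)) := by
        have := Gamma_third_mul
        field_simp at this ⊢
        linear_combination -this
      rw [this]
      push_cast
      have := Complex.I_ne_zero
      field_simp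
      simp
    | 2 =>
      simp [airyCoeff, eP_cube, eM_cube]
    | (n + 3) =>
      rw [airyCoeff, ih n (by omega), AiM_rec]
      have e1 : eP ^ (n + 3 + 1) = - eP ^ (n + 1) := by
        rw [show n + 3 + 1 = (n + 1) + 3 by ring, pow_add, eP_cube]; ring
      have e2 : eM ^ (n + 3 + 1) = - eM ^ (n + 1) := by
        rw [show n + 3 + 1 = (n + 1) + 3 by ring, pow_add, eM_cube]; ring
      rw [e1, e2]
      have hf : ((n + 3).factorial : ℂ) = (n + 3) * (n + 2) * (n + 1) * n.factorial := by
        rw [Nat.factorial_succ, Nat.factorial_succ, Nat.factorial_succ]; push_cast; ring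
      rw [hf]
      have h1 : (n : ℂ) + 1 ≠ 0 := by exact_mod_cast Nat.succ_ne_zero n
      have h2 : (n : ℂ) + 2 ≠ 0 := by exact_mod_cast Nat.succ_ne_zero (n + 1)
      have h3 : (n : ℂ) + 3 ≠ 0 := by exact_mod_cast Nat.succ_ne_zero (n + 2)
      have h4 : (n.factorial : ℂ) ≠ 0 := by exact_mod_cast Nat.factorial_ne_zero n
      have := Complex.I_ne_zero
      push_cast
      field_simp
      ring

lemma cubic_bound {c s : ℝ} (hc : 0 ≤ c) (hs : 0 ≤ s) :
    c * s - s ^ 3 / 3 ≤ 3 * (c + 1) ^ 2 - s := by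
  rcases le_total s (3 * (c + 1)) with h | h
  · have : (c + 1) * s ≤ (c + 1) * (3 * (c + 1)) := by gcongr
    have : 0 ≤ s ^ 3 := by positivity
    nlinarith
  · have h2 : 3 * (c + 1) ≤ s ^ 2 := by nlinarith
    have : s * (3 * (c + 1)) ≤ s * s ^ 2 := by gcongr
    nlinarith

lemma integrableOn_exp_cubic {c : ℝ} (hc : 0 ≤ c) :
    MeasureTheory.IntegrableOn (fun s : ℝ => Real.exp (c * s - s ^ 3 / 3)) (Set.Ioi 0) := by
  have h : MeasureTheory.IntegrableOn (fun s : ℝ => Real.exp (3 * (c + 1) ^ 2) * Real.exp (-s)) (Set.Ioi 0) :=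
    (integrableOn_exp_neg_Ioi 0).const_mul _
  refine MeasureTheory.Integrable.mono h (by fun_prop) ?_
  refine (MeasureTheory.ae_restrict_iff' measurableSet_Ioi).2 (Filter.Eventually.of_forall fun s hs => ?_)
  rw [← Real.exp_add, Real.norm_of_nonneg (Real.exp_pos _).le, Real.norm_of_nonneg (Real.exp_pos _).le]
  exact Real.exp_le_exp.2 (by linarith [cubic_bound hc (le_of_lt hs)])

lemma hasSum_ray {e : ℂ} (he : e ^ 3 = -1) (hn : ‖e‖ = 1) (x : ℂ) :
    HasSum (fun k : ℕ => (-1) ^ k / (k.factorial : ℂ) * e ^ (k + 1) * AiM k * x ^ k)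
      (∫ s in Set.Ioi (0 : ℝ), Complex.exp ((e * s) ^ 3 / 3 - x * (e * s)) * e) := by
  have key := MeasureTheory.hasSum_integral_of_dominated_convergence
    (μ := MeasureTheory.volume.restrict (Set.Ioi (0 : ℝ)))
    (F := fun (k : ℕ) (s : ℝ) => (-x * (e * s)) ^ k / (k.factorial : ℂ) * (Complex.exp ((e * s) ^ 3 / 3) * e))
    (f := fun s : ℝ => Complex.exp ((e * s) ^ 3 / 3 - x * (e * s)) * e)
    (fun k s => (‖x‖ * s) ^ k / (k.factorial : ℝ) * Real.exp (-(s ^ 3) / 3)) ?_ ?_ ?_ ?_ ?_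
  · convert! key using 1
    funext k
    have : (AiM k : ℂ) = ∫ s in Set.Ioi (0 : ℝ), ((s ^ k * Real.exp (-(s ^ 3) / 3) : ℝ) : ℂ) := by
      rw [AiM]; exact integral_ofReal.symm
    rw [this, mul_right_comm, ← MeasureTheory.integral_const_mul]
    congr 1
    funext s
    rw [mul_pow, mul_pow, mul_pow, neg_pow x, he]
    push_cast
    rw [show (-1 * (s : ℂ) ^ 3 / 3) = -(s : ℂ) ^ 3 / 3 by ring]
    ring
  · intro k
    exact Continuous.aestronglyMeasurable (by fun_prop)
  · intro k
    refine (MeasureTheory.ae_restrict_iff' measurableSet_Ioi).2 (Filter.Eventually.of_forall fun s hs => ?_)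
    have hs' : (0 : ℝ) < s := hs
    rw [norm_mul, norm_mul, norm_div, norm_pow, norm_mul, norm_mul, norm_neg, hn, Complex.norm_exp]
    have : ((e * s) ^ 3 / 3 : ℂ).re = -(s ^ 3) / 3 := by
      rw [mul_pow, he, show (-1 * (s : ℂ) ^ 3 / 3) = ((-(s ^ 3) / 3 : ℝ) : ℂ) by push_cast; ring, Complex.ofReal_re]
    rw [this]
    simp [abs_of_pos hs']
  · refine (MeasureTheory.ae_restrict_iff' measurableSet_Ioi).2 (Filter.Eventually.of_forall fun s hs => ?_)
    exact (Real.summable_pow_div_factorial _).mul_right _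
  · refine (integrableOn_exp_cubic (norm_nonneg x)).congr ?_
    refine Filter.Eventually.of_forall fun s => ?_
    simp only
    rw [tsum_mul_right, sub_eq_add_neg, Real.exp_add, Real.exp_eq_exp_ℝ, NormedSpace.exp_eq_tsum_div]
    congr 2
    ring
  · refine Filter.Eventually.of_forall fun s => ?_
    have h := NormedSpace.expSeries_div_hasSum_exp (𝔸 := ℂ) (-x * (e * s))
    rw [← Complex.exp_eq_exp_ℂ] at h
    have h2 := h.mul_right (Complex.exp ((e * s) ^ 3 / 3) * e)
    convert! h2 using 1
    rw [← mul_assoc (Complex.exp _) (Complex.exp _) e, ← Complex.exp_add]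
    congr 2
    ring

lemma hasSum_Ai (x : ℂ) : HasSum (fun k => airyCoeff k * x ^ k) (1 / (2 * π * Complex.I) *
    ((∫ s in Set.Ioi (0 : ℝ), Complex.exp ((eP * s) ^ 3 / 3 - x * (eP * s)) * eP)
     - ∫ s in Set.Ioi (0 : ℝ), Complex.exp ((eM * s) ^ 3 / 3 - x * (eM * s)) * eM)) := by
  have h := ((hasSum_ray eP_cube norm_eP x).sub (hasSum_ray eM_cube norm_eM x)).mul_left
    (1 / (2 * π * Complex.I))
  convert! h using 1
  funext k
  rw [airyCoeff_eq]; ring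

lemma Ai_eq_rays (x : ℂ) : Ai x = 1 / (2 * π * Complex.I) *
    ((∫ s in Set.Ioi (0 : ℝ), Complex.exp ((eP * s) ^ 3 / 3 - x * (eP * s)) * eP)
     - ∫ s in Set.Ioi (0 : ℝ), Complex.exp ((eM * s) ^ 3 / 3 - x * (eM * s)) * eM) :=
  (hasSum_Ai x).tsum_eq

lemma integrableOn_ray {e : ℂ} (he : e ^ 3 = -1) (hn : ‖e‖ = 1) (x : ℂ) :
    MeasureTheory.IntegrableOn (fun s : ℝ => Complex.exp ((e * s) ^ 3 / 3 - x * (e * s)) * e) (Set.Ioi 0) := by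
  refine MeasureTheory.Integrable.mono (integrableOn_exp_cubic (norm_nonneg x))
    (Continuous.aestronglyMeasurable (by fun_prop)) ?_
  refine (MeasureTheory.ae_restrict_iff' measurableSet_Ioi).2 (Filter.Eventually.of_forall fun s hs => ?_)
  have hs' : (0 : ℝ) < s := hs
  rw [norm_mul, hn, mul_one, Complex.norm_exp, Real.norm_of_nonneg (Real.exp_pos _).le]
  refine Real.exp_le_exp.2 ?_
  have h1 : ((e * s) ^ 3 / 3 : ℂ).re = -(s ^ 3) / 3 := by
    rw [mul_pow, he, show (-1 * (s : ℂ) ^ 3 / 3) = ((-(s ^ 3) / 3 : ℝ) : ℂ) by push_cast; ring, Complex.ofReal_re]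
  rw [Complex.sub_re, h1]
  have h2 : |(x * (e * s)).re| ≤ ‖x‖ * s := by
    refine (Complex.abs_re_le_norm _).trans ?_
    rw [norm_mul, norm_mul, hn]; simp [abs_of_pos hs']
  have := (abs_le.1 h2).1
  linarith

/-! ### Differential equation, connection formula, Wronskian -/

lemma entire_deriv_series (c : ℕ → ℂ) (hc : ∀ z : ℂ, Summable (fun k => c k * z ^ k)) (z : ℂ) :
    HasDerivAt (fun z => ∑' k, c k * z ^ k) (∑' k, c k * (k * z ^ (k - 1))) z := by
  set R : ℝ := ‖z‖ + 1 with hR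
  have hR1 : 1 ≤ R := by rw [hR]; linarith [norm_nonneg z]
  have hs : Summable (fun k => ‖c k * ((2 * R : ℝ) : ℂ) ^ k‖) := (hc _).norm
  refine hasDerivAt_tsum_of_isPreconnected (t := Metric.ball (0 : ℂ) R) (y₀ := 0)
    (g' := fun k y => c k * (k * y ^ (k - 1))) hs Metric.isOpen_ball
    (convex_ball _ _).isPreconnected ?_ ?_ ?_ (hc 0) ?_
  · intro k y _
    exact (hasDerivAt_pow k y).const_mul (c k)
  · intro k y hy
    have hy' : ‖y‖ ≤ R := by simpa using (le_of_lt (by simpa using hy) : ‖y‖ ≤ R)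
    rw [norm_mul, norm_mul, norm_mul, norm_pow, norm_pow]
    gcongr
    rw [Complex.norm_natCast, Complex.norm_real, Real.norm_of_nonneg (by positivity), mul_pow]
    gcongr
    · exact_mod_cast Nat.lt_two_pow_self.le
    · calc ‖y‖ ^ (k - 1) ≤ R ^ (k - 1) := by gcongr
        _ ≤ R ^ k := pow_le_pow_right₀ hR1 (Nat.sub_le k 1)
  · simp; linarith
  · simp [hR]

lemma entire_deriv_summable (c : ℕ → ℂ) (hc : ∀ z : ℂ, Summable (fun k => c k * z ^ k)) (z : ℂ) :
    Summable (fun k => c k * (k * z ^ (k - 1))) := by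
  set R : ℝ := ‖z‖ + 1 with hR
  have hR1 : 1 ≤ R := by rw [hR]; linarith [norm_nonneg z]
  have hs : Summable (fun k => ‖c k * ((2 * R : ℝ) : ℂ) ^ k‖) := (hc _).norm
  refine Summable.of_norm_bounded hs fun k => ?_
  have hy' : ‖z‖ ≤ R := by rw [hR]; linarith
  rw [norm_mul, norm_mul, norm_mul, norm_pow, norm_pow]
  gcongr
  rw [Complex.norm_natCast, Complex.norm_real, Real.norm_of_nonneg (by positivity), mul_pow]
  gcongr
  · exact_mod_cast Nat.lt_two_pow_self.le
  · calc ‖z‖ ^ (k - 1) ≤ R ^ (k - 1) := by gcongr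
      _ ≤ R ^ k := pow_le_pow_right₀ hR1 (Nat.sub_le k 1)

lemma summable_Ai (z : ℂ) : Summable (fun k => airyCoeff k * z ^ k) := (hasSum_Ai z).summable

noncomputable def Ai1 (z : ℂ) : ℂ := ∑' k : ℕ, (airyCoeff (k + 1) * (k + 1)) * z ^ k

lemma summable_Ai1 (z : ℂ) : Summable (fun k : ℕ => (airyCoeff (k + 1) * (k + 1)) * z ^ k) := by
  have h := (summable_nat_add_iff 1).2 (entire_deriv_summable _ summable_Ai z)
  refine h.congr fun k => ?_
  simp; ring

lemma hasDerivAt_Ai (z : ℂ) : HasDerivAt Ai (Ai1 z) z := by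
  have h := entire_deriv_series _ summable_Ai z
  rw [(entire_deriv_summable _ summable_Ai z).tsum_eq_zero_add] at h
  convert! h using 1
  rw [Ai1]
  simp
  congr 1
  funext k
  ring

lemma hasDerivAt_Ai1 (z : ℂ) : HasDerivAt Ai1 (z * Ai z) z := by
  have h := entire_deriv_series _ summable_Ai1 z
  have hs := entire_deriv_summable _ summable_Ai1 z
  convert! h using 1
  rw [hs.tsum_eq_zero_add, ((summable_nat_add_iff 1).2 hs).tsum_eq_zero_add]
  simp only [airyCoeff]
  rw [Ai, ← tsum_mul_left]
  simp
  congr 1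
  funext k
  have h2 : (k : ℂ) + 2 ≠ 0 := by exact_mod_cast Nat.succ_ne_zero (k + 1)
  have h3 : (k : ℂ) + 3 ≠ 0 := by exact_mod_cast Nat.succ_ne_zero (k + 2)
  rw [show (k : ℂ) + 1 + 1 = k + 2 by ring, show (k : ℂ) + 2 + 1 = k + 3 by ring]
  field_simp
  ring

lemma ωc_val : ωc = -1 / 2 + (Real.sqrt 3 / 2 : ℝ) * Complex.I := by
  have : ωc = eP ^ 2 := by
    rw [ωc, eP, ← Complex.exp_nat_mul]; congr 1; push_cast; ring
  rw [this, eP_val]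
  have := sqrt3_sq
  have hI := Complex.I_sq
  push_cast
  linear_combination (1 / 4 * (Real.sqrt 3 : ℂ) ^ 2) * hI - 1 / 4 * this

lemma ωc_cube : ωc ^ 3 = 1 := by
  rw [ωc, ← Complex.exp_nat_mul, show ((3 : ℕ) : ℂ) * (2 * π * Complex.I / 3) = 2 * π * Complex.I by push_cast; ring]
  exact Complex.exp_two_pi_mul_I

lemma ωc_sum : 1 + ωc + ωc ^ 2 = 0 := by
  have := sqrt3_sq
  have hI := Complex.I_sq
  rw [ωc_val]
  push_cast
  linear_combination (1 / 4 * (Real.sqrt 3 : ℂ) ^ 2) * hI - 1 / 4 * this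

lemma airyCoeff_three (k : ℕ) : airyCoeff (3 * k + 2) = 0 := by
  induction k with
  | zero => rfl
  | succ n ih =>
    rw [show 3 * (n + 1) + 2 = (3 * n + 2) + 3 by ring, airyCoeff, ih]; simp

lemma Ai_connection (x : ℂ) : Ai x + ωc * Ai (ωc * x) + ωc ^ 2 * Ai (ωc ^ 2 * x) = 0 := by
  have h1 := (summable_Ai x).hasSum
  have h2 := (summable_Ai (ωc * x)).hasSum.mul_left ωc
  have h3 := (summable_Ai (ωc ^ 2 * x)).hasSum.mul_left (ωc ^ 2)
  have h := (h1.add h2).add h3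
  have h0 : HasSum (fun _ : ℕ => (0 : ℂ)) 0 := hasSum_zero
  refine h.unique ?_
  convert! h0 using 1
  funext k
  have hk : k % 3 = 0 ∨ k % 3 = 1 ∨ k % 3 = 2 := by omega
  rcases hk with hk | hk | hk
  · obtain ⟨n, rfl⟩ : ∃ n, k = 3 * n := ⟨k / 3, by omega⟩
    have e1 : ωc ^ (3 * n) = 1 := by rw [pow_mul, ωc_cube, one_pow]
    have e2 : (ωc ^ 2) ^ (3 * n) = 1 := by rw [← pow_mul, mul_comm, pow_mul, e1, one_pow]
    rw [mul_pow, mul_pow, e1, e2]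
    linear_combination (airyCoeff (3 * n) * x ^ (3 * n)) * ωc_sum
  · obtain ⟨n, rfl⟩ : ∃ n, k = 3 * n + 1 := ⟨k / 3, by omega⟩
    have e1 : ωc ^ (3 * n + 1) = ωc := by rw [pow_succ, pow_mul, ωc_cube, one_pow, one_mul]
    rw [mul_pow, mul_pow, ← pow_mul, mul_comm 2, pow_mul, e1]
    linear_combination (airyCoeff (3 * n + 1) * x ^ (3 * n + 1)) * (ωc_sum + ωc * ωc_cube)
  · obtain ⟨n, rfl⟩ : ∃ n, k = 3 * n + 2 := ⟨k / 3, by omega⟩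
    rw [airyCoeff_three]; simp

lemma Ai_zero : Ai 0 = airyCoeff 0 := by
  rw [Ai, (summable_Ai 0).tsum_eq_zero_add]; simp

lemma Ai1_zero : Ai1 0 = airyCoeff 1 := by
  rw [Ai1, (summable_Ai1 0).tsum_eq_zero_add]; simp

lemma airy_wronskian (x : ℂ) :
    Ai x * (ωc * Ai1 (ωc * x)) - Ai1 x * Ai (ωc * x) = Complex.exp (-(π : ℂ) * Complex.I / 6) / (2 * π) := by
  have hd : ∀ y : ℂ, HasDerivAt (fun x => Ai x * (ωc * Ai1 (ωc * x)) - Ai1 x * Ai (ωc * x)) 0 y := by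
    intro y
    have hl : HasDerivAt (fun x : ℂ => ωc * x) ωc y := by simpa using (hasDerivAt_id y).const_mul ωc
    have a1 := (hasDerivAt_Ai1 (ωc * y)).comp y hl
    have a0 := (hasDerivAt_Ai (ωc * y)).comp y hl
    have := ((hasDerivAt_Ai y).mul (a1.const_mul ωc)).sub ((hasDerivAt_Ai1 y).mul a0)
    convert! this using 1
    simp only [Function.comp]
    linear_combination (-(y * Ai y * Ai (ωc * y))) * ωc_cube
  have hconst := is_const_of_deriv_eq_zero (fun y => (hd y).differentiableAt) (fun y => (hd y).deriv) x 0
  simp only [mul_zero] at hconst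
  rw [hconst, Ai_zero, Ai1_zero, airyCoeff_zero, airyCoeff_one]
  have hp : (3 : ℝ) ^ (-(2 : ℝ) / 3) * (3 : ℝ) ^ (-(1 : ℝ) / 3) = 1 / 3 := by
    rw [← Real.rpow_add (by norm_num)]; norm_num [Real.rpow_neg_one]
  have hG1 : Real.Gamma (1 / 3) ≠ 0 := (Real.Gamma_pos_of_pos (by norm_num)).ne'
  have hG2 : Real.Gamma (2 / 3) ≠ 0 := (Real.Gamma_pos_of_pos (by norm_num)).ne'
  have h3 : Real.sqrt 3 ≠ 0 := by positivity
  have h33 : Real.sqrt 3 ^ 2 = 3 := Real.sq_sqrt (by norm_num)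
  have hpi := Real.pi_ne_zero
  have key : (3 : ℝ) ^ (-(2 : ℝ) / 3) / Real.Gamma (2 / 3) * (-((3 : ℝ) ^ (-(1 : ℝ) / 3) / Real.Gamma (1 / 3)))
      = -(1 / (2 * π * Real.sqrt 3)) := by
    have hG := Gamma_third_mul
    have : (3 : ℝ) ^ (-(2 : ℝ) / 3) / Real.Gamma (2 / 3) * (-((3 : ℝ) ^ (-(1 : ℝ) / 3) / Real.Gamma (1 / 3)))
      = -(((3 : ℝ) ^ (-(2 : ℝ) / 3) * (3 : ℝ) ^ (-(1 : ℝ) / 3)) / (Real.Gamma (1 / 3) * Real.Gamma (2 / 3))) := by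
      field_simp
    rw [this, hp, hG]
    field_simp
    linear_combination -h33
  have e6 : Complex.exp (-(π : ℂ) * Complex.I / 6) = (Real.sqrt 3 / 2 : ℝ) - 1 / 2 * Complex.I := by
    rw [show (-(π : ℂ) * Complex.I / 6) = ((-(π / 6) : ℝ) : ℂ) * Complex.I by push_cast; ring,
      Complex.exp_mul_I, ← Complex.ofReal_cos, ← Complex.ofReal_sin, Real.cos_neg, Real.sin_neg,
      Real.cos_pi_div_six, Real.sin_pi_div_six]
    push_cast; ring
  have key' := congrArg (fun t : ℝ => (t : ℂ)) key
  simp only [Complex.ofReal_mul] at key'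
  rw [e6]
  have hpi' : (π : ℂ) ≠ 0 := by exact_mod_cast hpi
  have h3' : (Real.sqrt 3 : ℂ) ≠ 0 := by exact_mod_cast h3
  have : ((-(1 / (2 * π * Real.sqrt 3)) : ℝ) : ℂ) * (ωc - 1)
      = ((Real.sqrt 3 / 2 : ℝ) - 1 / 2 * Complex.I) / (2 * π) := by
    rw [ωc_val]
    push_cast
    field_simp
    linear_combination (-1 : ℂ) * sqrt3_sq
  rw [← this, ← key']
  ring

/-! ### Vertical line representation -/

lemma quad_decay {c d : ℝ} (hc : 0 < c) :
    Filter.Tendsto (fun Y : ℝ => Real.exp (-c * Y ^ 2 + d * Y) * Y) Filter.atTop (nhds 0) := by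
  have h1 : Filter.Tendsto (fun Y : ℝ => Y ^ 1 * Real.exp (-Y)) Filter.atTop (nhds 0) :=
    Real.tendsto_pow_mul_exp_neg_atTop_nhds_zero 1
  refine squeeze_zero' (Filter.eventually_atTop.2 ⟨0, fun Y hY => by positivity⟩) ?_ h1
  refine Filter.eventually_atTop.2 ⟨max 1 ((d + 1) / c), fun Y hY => ?_⟩
  have hY1 : 1 ≤ Y := le_trans (le_max_left _ _) hY
  have hY2 : (d + 1) / c ≤ Y := le_trans (le_max_right _ _) hY
  rw [div_le_iff₀ hc] at hY2
  rw [pow_one, mul_comm]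
  gcongr
  nlinarith

lemma horiz_est (x : ℂ) (Φ : ℂ → ℂ)
    (hΦ : ∀ t, HasDerivAt Φ (Complex.exp (t ^ 3 / 3 - x * t)) t) (τ : ℝ) (hτ : τ = 1 ∨ τ = -1)
    (q : ℝ) (hq : 0 < q) :
    Filter.Tendsto (fun Y : ℝ => Φ (q + τ * Y * Complex.I) - Φ ((Y / Real.sqrt 3 : ℝ) + τ * Y * Complex.I))
      Filter.atTop (nhds 0) := by
  have hd := quad_decay (c := 8 / 9 * q) (d := 2 * ‖x‖) (by positivity)
  refine squeeze_zero_norm' ?_ hd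
  refine Filter.eventually_atTop.2 ⟨Real.sqrt 3 * q + 1, fun Y hY => ?_⟩
  have h3 : (1 : ℝ) ≤ Real.sqrt 3 := by rw [Real.one_le_sqrt]; norm_num
  have h33 : Real.sqrt 3 ^ 2 = 3 := Real.sq_sqrt (by norm_num)
  have hY0 : 0 < Y := by nlinarith
  have hqY : q ≤ Y / Real.sqrt 3 := by rw [le_div_iff₀ (by positivity)]; linarith
  have hYY : Y / Real.sqrt 3 ≤ Y := div_le_self hY0.le h3
  have hYsq : (Y / Real.sqrt 3) ^ 2 = Y ^ 2 / 3 := by rw [div_pow, h33]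
  have hτ2 : τ ^ 2 = 1 := by rcases hτ with h | h <;> rw [h] <;> norm_num
  have hτa : |τ| = 1 := by rcases hτ with h | h <;> rw [h] <;> norm_num
  set S : Set ℂ := (Set.Icc q (Y / Real.sqrt 3)) ×ℂ {τ * Y} with hS
  have hconv : Convex ℝ S := 
    Convex.inter (Convex.linear_preimage (convex_Icc _ _) Complex.reLm)
      (Convex.linear_preimage (convex_singleton _) Complex.imLm)
  have hb : ∀ t ∈ S, ‖Complex.exp (t ^ 3 / 3 - x * t)‖ ≤ Real.exp (-(8 / 9 * q) * Y ^ 2 + 2 * ‖x‖ * Y) := by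
    intro t ht
    rw [hS, Complex.mem_reProdIm] at ht
    obtain ⟨⟨h1, h2⟩, h4⟩ := ht
    have h4' : t.im = τ * Y := h4
    rw [Complex.norm_exp]
    refine Real.exp_le_exp.2 ?_
    have hre : (t ^ 3 / 3 : ℂ).re = t.re ^ 3 / 3 - t.re * Y ^ 2 := by
      rw [show (t ^ 3 / 3 : ℂ) = ((1 / 3 : ℝ) : ℂ) * (t * t * t) by push_cast; ring, Complex.re_ofReal_mul]
      simp only [Complex.mul_re, Complex.mul_im, h4']
      linear_combination (-t.re * Y ^ 2) * hτ2
    have hn : ‖t‖ ≤ 2 * Y := by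
      refine (Complex.norm_le_abs_re_add_abs_im t).trans ?_
      rw [h4', abs_mul, hτa, one_mul, abs_of_pos hY0, abs_of_pos (by linarith)]
      linarith
    have hx : |(x * t).re| ≤ ‖x‖ * (2 * Y) := by
      refine (Complex.abs_re_le_norm _).trans ?_
      rw [norm_mul]; gcongr
    rw [Complex.sub_re, hre]
    have := (abs_le.1 hx).1
    have hsq : t.re ^ 2 ≤ Y ^ 2 / 3 := by rw [← hYsq]; gcongr; linarith
    have h5 : t.re * t.re ^ 2 ≤ t.re * (Y ^ 2 / 3) := by gcongr; linarith
    have h6 : q * Y ^ 2 ≤ t.re * Y ^ 2 := by gcongr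
    nlinarith
  have hmem1 : ((Y / Real.sqrt 3 : ℝ) + τ * Y * Complex.I : ℂ) ∈ S := by
    rw [hS, Complex.mem_reProdIm]
    simp only [Complex.add_re, Complex.add_im, Complex.mul_re, Complex.mul_im, Complex.ofReal_re,
      Complex.ofReal_im, Complex.I_re, Complex.I_im]
    constructor
    · constructor <;> norm_num <;> linarith
    · simp
  have hmem2 : ((q : ℝ) + τ * Y * Complex.I : ℂ) ∈ S := by
    rw [hS, Complex.mem_reProdIm]
    simp only [Complex.add_re, Complex.add_im, Complex.mul_re, Complex.mul_im, Complex.ofReal_re,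
      Complex.ofReal_im, Complex.I_re, Complex.I_im]
    constructor
    · constructor <;> norm_num <;> linarith
    · simp
  have := hconv.norm_image_sub_le_of_norm_hasDerivWithin_le (f := Φ)
    (fun t _ => (hΦ t).hasDerivWithinAt) hb hmem1 hmem2
  refine this.trans ?_
  gcongr
  rw [show ((q : ℝ) + τ * Y * Complex.I : ℂ) - ((Y / Real.sqrt 3 : ℝ) + τ * Y * Complex.I)
    = ((q - Y / Real.sqrt 3 : ℝ) : ℂ) by push_cast; ring, Complex.norm_real, Real.norm_eq_abs, abs_le]
  constructor <;> linarith

lemma integrable_line {p : ℂ} (hp : 0 < p.re) :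
    MeasureTheory.Integrable (fun s : ℝ => Complex.exp (-p * s ^ 2 - Complex.I * s ^ 3 / 3)) := by
  refine MeasureTheory.Integrable.mono (integrable_exp_neg_mul_sq hp)
    (Continuous.aestronglyMeasurable (by fun_prop)) ?_
  refine Filter.Eventually.of_forall fun s => ?_
  rw [Complex.norm_exp, Real.norm_of_nonneg (Real.exp_pos _).le]
  refine Real.exp_le_exp.2 (le_of_eq ?_)
  rw [show (-p * s ^ 2 - Complex.I * s ^ 3 / 3 : ℂ)
    = ((s ^ 2 : ℝ) : ℂ) * (-p) - ((s ^ 3 / 3 : ℝ) : ℂ) * Complex.I by push_cast; ring]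
  rw [Complex.sub_re, Complex.re_ofReal_mul, Complex.re_ofReal_mul]
  simp
  ring

lemma Ai_line {p : ℂ} (hp : 0 < p.re) :
    Ai (p ^ 2) = Complex.exp (-(2 * p ^ 3 / 3)) / (2 * π) *
      ∫ s : ℝ, Complex.exp (-p * s ^ 2 - Complex.I * s ^ 3 / 3) := by
  obtain ⟨Φ, hΦ'⟩ := (Differentiable.isExactOn_univ
    (f := fun t : ℂ => Complex.exp (t ^ 3 / 3 - p ^ 2 * t)) (by fun_prop))
  have hΦ : ∀ t, HasDerivAt Φ (Complex.exp (t ^ 3 / 3 - p ^ 2 * t)) t := fun t => hΦ' t trivial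
  have hray : ∀ e : ℂ, ∀ s : ℝ, HasDerivAt (fun s : ℝ => Φ (e * s))
      (Complex.exp ((e * s) ^ 3 / 3 - p ^ 2 * (e * s)) * e) s := by
    intro e s
    have h1 : HasDerivAt (fun s : ℝ => e * (s : ℂ)) e s := by
      simpa using (Complex.ofRealCLM.hasDerivAt (x := s)).const_mul e
    exact (hΦ (e * s)).comp s h1
  have lim : ∀ e : ℂ, e ^ 3 = -1 → ‖e‖ = 1 → ∃ L, Filter.Tendsto (fun s : ℝ => Φ (e * s)) Filter.atTop (nhds L) ∧
      ∫ s in Set.Ioi (0 : ℝ), Complex.exp ((e * s) ^ 3 / 3 - p ^ 2 * (e * s)) * e = L - Φ 0 := by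
    intro e he hn
    have hi := integrableOn_ray he hn (p ^ 2)
    have hl := MeasureTheory.tendsto_limUnder_of_hasDerivAt_of_integrableOn_Ioi (fun s _ => hray e s) hi
    refine ⟨_, hl, ?_⟩
    rw [MeasureTheory.integral_Ioi_of_hasDerivAt_of_tendsto' (fun s _ => hray e s) hi hl]
    simp
  obtain ⟨LP, hLP, hIP⟩ := lim eP eP_cube norm_eP
  obtain ⟨LM, hLM, hIM⟩ := lim eM eM_cube norm_eM
  rw [Ai_eq_rays, hIP, hIM]
  have h3 : (0 : ℝ) < Real.sqrt 3 := by positivity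
  have h33 : Real.sqrt 3 ^ 2 = 3 := Real.sq_sqrt (by norm_num)
  have h3' : (Real.sqrt 3 : ℂ) ≠ 0 := by exact_mod_cast h3.ne'
  have htY : Filter.Tendsto (fun Y : ℝ => 2 * Y / Real.sqrt 3) Filter.atTop Filter.atTop := by
    refine Filter.Tendsto.atTop_div_const h3 ?_
    exact Filter.Tendsto.const_mul_atTop (by norm_num) Filter.tendsto_id
  have hP1 : Filter.Tendsto (fun Y : ℝ => Φ (p.re + (1 : ℝ) * Y * Complex.I)) Filter.atTop (nhds LP) := by
    have := (horiz_est (p ^ 2) Φ hΦ 1 (Or.inl rfl) p.re hp).add (hLP.comp htY)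
    rw [zero_add] at this
    refine this.congr fun Y => ?_
    simp only [Function.comp]
    rw [show eP * ((2 * Y / Real.sqrt 3 : ℝ) : ℂ) = ((Y / Real.sqrt 3 : ℝ) + (1 : ℝ) * Y * Complex.I : ℂ) by
      rw [eP_val]; push_cast; field_simp]
    ring
  have hM1 : Filter.Tendsto (fun Y : ℝ => Φ (p.re + (-1 : ℝ) * Y * Complex.I)) Filter.atTop (nhds LM) := by
    have := (horiz_est (p ^ 2) Φ hΦ (-1) (Or.inr rfl) p.re hp).add (hLM.comp htY)
    rw [zero_add] at this
    refine this.congr fun Y => ?_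
    simp only [Function.comp]
    rw [show eM * ((2 * Y / Real.sqrt 3 : ℝ) : ℂ) = ((Y / Real.sqrt 3 : ℝ) + (-1 : ℝ) * Y * Complex.I : ℂ) by
      rw [eM_val]; push_cast; field_simp; ring]
    ring
  have hpdec : p = p.re + p.im * Complex.I := (Complex.re_add_im p).symm
  have htop : Filter.Tendsto (fun s : ℝ => Φ (p + Complex.I * s)) Filter.atTop (nhds LP) := by
    have ht : Filter.Tendsto (fun s : ℝ => s + p.im) Filter.atTop Filter.atTop :=
      Filter.tendsto_atTop_add_const_right _ _ Filter.tendsto_id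
    refine (hP1.comp ht).congr fun s => ?_
    simp only [Function.comp]
    congr 1
    conv_rhs => rw [hpdec]
    push_cast; ring
  have hbot : Filter.Tendsto (fun s : ℝ => Φ (p + Complex.I * s)) Filter.atBot (nhds LM) := by
    have ht : Filter.Tendsto (fun s : ℝ => -s + -p.im) Filter.atBot Filter.atTop :=
      Filter.tendsto_atTop_add_const_right _ _ Filter.tendsto_neg_atBot_atTop
    refine (hM1.comp ht).congr fun s => ?_
    simp only [Function.comp]
    congr 1
    conv_rhs => rw [hpdec]
    push_cast; ring
  have hder : ∀ s : ℝ, HasDerivAt (fun s : ℝ => Φ (p + Complex.I * s))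
      ((Complex.exp (-(2 * p ^ 3 / 3)) * Complex.I) * Complex.exp (-p * s ^ 2 - Complex.I * s ^ 3 / 3)) s := by
    intro s
    have h1 : HasDerivAt (fun s : ℝ => p + Complex.I * (s : ℂ)) Complex.I s := by
      simpa using ((Complex.ofRealCLM.hasDerivAt (x := s)).const_mul Complex.I).const_add p
    have h2 := (hΦ (p + Complex.I * s)).comp s h1
    convert! h2 using 1
    rw [mul_right_comm, ← Complex.exp_add]
    congr 2
    have hI := Complex.I_sq
    have hI3 : Complex.I ^ 3 = -Complex.I := Complex.I_pow_three
    linear_combination (-(p * (s : ℂ) ^ 2)) * hI - (s : ℂ) ^ 3 / 3 * hI3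
  have hfin := MeasureTheory.integral_of_hasDerivAt_of_tendsto hder ((integrable_line hp).const_mul _) hbot htop
  rw [MeasureTheory.integral_const_mul] at hfin
  rw [show LP - Φ 0 - (LM - Φ 0) = LP - LM by ring, ← hfin]
  have hI := Complex.I_ne_zero
  have hpi' : (π : ℂ) ≠ 0 := by exact_mod_cast Real.pi_ne_zero
  field_simp

/-! ### Asymptotics -/

lemma norm_line_integrand (p : ℂ) (s : ℝ) :
    ‖Complex.exp (-p * s ^ 2 - Complex.I * s ^ 3 / 3)‖ = Real.exp (-p.re * s ^ 2) := by
  rw [Complex.norm_exp]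
  congr 1
  rw [show (-p * s ^ 2 - Complex.I * s ^ 3 / 3 : ℂ)
    = ((s ^ 2 : ℝ) : ℂ) * (-p) - ((s ^ 3 / 3 : ℝ) : ℂ) * Complex.I by push_cast; ring]
  rw [Complex.sub_re, Complex.re_ofReal_mul, Complex.re_ofReal_mul]
  simp
  ring

lemma Ai_bound {p : ℂ} (hp : 0 < p.re) (h3 : 0 ≤ (p ^ 3).re) : ‖Ai (p ^ 2)‖ ≤ Real.sqrt (π / p.re) := by
  rw [Ai_line hp, norm_mul, norm_div, Complex.norm_exp]
  have h1 : ‖∫ s : ℝ, Complex.exp (-p * s ^ 2 - Complex.I * s ^ 3 / 3)‖ ≤ Real.sqrt (π / p.re) := by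
    refine (MeasureTheory.norm_integral_le_integral_norm _).trans (le_of_eq ?_)
    simp only [norm_line_integrand]
    exact integral_gaussian p.re
  have h2 : (-(2 * p ^ 3 / 3)).re ≤ 0 := by
    rw [show (-(2 * p ^ 3 / 3)) = ((-2 / 3 : ℝ) : ℂ) * p ^ 3 by push_cast; ring, Complex.re_ofReal_mul]
    nlinarith
  have h4 : Real.exp ((-(2 * p ^ 3 / 3)).re) ≤ 1 := Real.exp_le_one_iff.2 h2
  have h5 : ‖(2 * π : ℂ)‖ = 2 * π := by
    rw [norm_mul, Complex.norm_real, Real.norm_of_nonneg Real.pi_pos.le]; simp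
  rw [h5]
  have h6 : Real.exp ((-(2 * p ^ 3 / 3)).re) / (2 * π) ≤ 1 := by
    rw [div_le_one (by positivity)]
    linarith [Real.pi_gt_three]
  calc _ ≤ 1 * Real.sqrt (π / p.re) := by gcongr
    _ = _ := one_mul _

lemma cube_exp (t : ℝ) (ht : 0 ≤ t) : t ^ 3 * Real.exp (-t) ≤ 48 * Real.exp (-(t / 2)) := by
  have h := Real.pow_div_factorial_le_exp (t / 2) (by positivity) 3
  have h2 : Real.exp (-t) = Real.exp (-(t / 2)) * (Real.exp (t / 2))⁻¹ := by
    rw [← Real.exp_neg, ← Real.exp_add]; congr 1; ring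
  rw [h2]
  have h3 : t ^ 3 ≤ 48 * Real.exp (t / 2) := by
    norm_num [Nat.factorial] at h
    nlinarith
  have hpos := Real.exp_pos (t / 2)
  have hpos2 := Real.exp_pos (-(t / 2))
  calc t ^ 3 * (Real.exp (-(t / 2)) * (Real.exp (t / 2))⁻¹)
      ≤ (48 * Real.exp (t / 2)) * (Real.exp (-(t / 2)) * (Real.exp (t / 2))⁻¹) := by gcongr
    _ = 48 * Real.exp (-(t / 2)) := by field_simp

lemma line_asymp {p : ℂ} (hp : 0 < p.re) :
    ‖(∫ s : ℝ, Complex.exp (-p * s ^ 2 - Complex.I * s ^ 3 / 3)) - (π / p : ℂ) ^ (1 / 2 : ℂ)‖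
      ≤ 3 / p.re ^ 3 * Real.sqrt (2 * π / p.re) := by
  set F : ℝ → ℂ := fun s => Complex.exp (-p * s ^ 2 - Complex.I * s ^ 3 / 3) with hF
  have hFi : MeasureTheory.Integrable F := integrable_line hp
  have hneg : ∫ s : ℝ, F (-s) = ∫ s : ℝ, F s := MeasureTheory.integral_neg_eq_self F MeasureTheory.volume
  have hFn : MeasureTheory.Integrable (fun s => F (-s)) := hFi.comp_neg
  have hgi : MeasureTheory.Integrable (fun s : ℝ => Complex.exp (-p * s ^ 2)) := integrable_cexp_neg_mul_sq hp
  have hg : ∫ s : ℝ, Complex.exp (-p * s ^ 2) = (π / p : ℂ) ^ (1 / 2 : ℂ) := integral_gaussian_complex hp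
  have h2 : (∫ s : ℝ, (F s + F (-s) - 2 * Complex.exp (-p * s ^ 2)))
      = 2 * ((∫ s : ℝ, F s) - (π / p : ℂ) ^ (1 / 2 : ℂ)) := by
    have hadd : MeasureTheory.Integrable (fun s => F s + F (-s)) := hFi.add hFn
    rw [MeasureTheory.integral_sub hadd (hgi.const_mul 2), MeasureTheory.integral_add hFi hFn,
      MeasureTheory.integral_const_mul, hneg, hg]
    ring
  have hpt : ∀ s : ℝ, ‖F s + F (-s) - 2 * Complex.exp (-p * s ^ 2)‖
      ≤ 6 / p.re ^ 3 * Real.exp (-(p.re / 2) * s ^ 2) := by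
    intro s
    have e1 : F s + F (-s) - 2 * Complex.exp (-p * s ^ 2)
        = Complex.exp (-p * s ^ 2) * ((2 * (Real.cos (s ^ 3 / 3) - 1) : ℝ) : ℂ) := by
      simp only [hF]
      push_cast
      rw [Complex.cos]
      rw [show (-p * s ^ 2 - Complex.I * s ^ 3 / 3 : ℂ) = -p * s ^ 2 + -(s ^ 3 / 3) * Complex.I by ring,
        show (-p * (-s) ^ 2 - Complex.I * (-s) ^ 3 / 3 : ℂ) = -p * s ^ 2 + (s ^ 3 / 3) * Complex.I by ring,
        Complex.exp_add, Complex.exp_add]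
      ring
    have e2 : ‖Complex.exp (-p * s ^ 2)‖ = Real.exp (-p.re * s ^ 2) := by
      rw [Complex.norm_exp]
      congr 1
      rw [show (-p * s ^ 2 : ℂ) = ((s ^ 2 : ℝ) : ℂ) * (-p) by push_cast; ring, Complex.re_ofReal_mul]
      simp; ring
    rw [e1, norm_mul, e2, Complex.norm_real, Real.norm_eq_abs]
    have c1 := Real.one_sub_sq_div_two_le_cos (x := s ^ 3 / 3)
    have c2 := Real.cos_le_one (s ^ 3 / 3)
    have c3 : |2 * (Real.cos (s ^ 3 / 3) - 1)| ≤ s ^ 6 / 9 := by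
      rw [abs_le]; constructor <;> nlinarith [sq_nonneg (s ^ 3)]
    have c4 := cube_exp (p.re * s ^ 2) (by positivity)
    calc Real.exp (-p.re * s ^ 2) * |2 * (Real.cos (s ^ 3 / 3) - 1)|
        ≤ Real.exp (-p.re * s ^ 2) * (s ^ 6 / 9) := by gcongr
      _ = 1 / (9 * p.re ^ 3) * ((p.re * s ^ 2) ^ 3 * Real.exp (-(p.re * s ^ 2))) := by
          rw [neg_mul]; field_simp
      _ ≤ 1 / (9 * p.re ^ 3) * (48 * Real.exp (-(p.re * s ^ 2 / 2))) := by gcongr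
      _ = 48 / 9 / p.re ^ 3 * Real.exp (-(p.re / 2) * s ^ 2) := by
          rw [show -(p.re * s ^ 2 / 2) = -(p.re / 2) * s ^ 2 by ring]; field_simp
      _ ≤ _ := by gcongr; norm_num
  have hint : MeasureTheory.Integrable (fun s : ℝ => 6 / p.re ^ 3 * Real.exp (-(p.re / 2) * s ^ 2)) :=
    (integrable_exp_neg_mul_sq (by positivity)).const_mul _
  have h3 := MeasureTheory.norm_integral_le_of_norm_le hint (Filter.Eventually.of_forall hpt)
  rw [h2, norm_mul, MeasureTheory.integral_const_mul, integral_gaussian] at h3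
  rw [show π / (p.re / 2) = 2 * π / p.re by field_simp] at h3
  norm_num at h3
  have : 6 / p.re ^ 3 * Real.sqrt (2 * π / p.re) = 2 * (3 / p.re ^ 3 * Real.sqrt (2 * π / p.re)) := by ring
  rw [← hF] at *
  norm_num
  linarith

lemma cos_lb {y : ℝ} (hy : |y| ≤ 11 / 10) : 1 / 4 ≤ Real.cos y := by
  have h1 := Real.one_sub_sq_div_two_le_cos (x := y)
  have : y ^ 2 ≤ (11 / 10) ^ 2 := by rw [← sq_abs]; gcongr
  norm_num at this
  nlinarith

lemma Ai_asymp (l : ℂ) (hl : |l.im| ≤ 11 / 10) :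
    ∃ ε : ℂ, ‖ε‖ ≤ 600 * Real.exp (-(3 * l.re)) ∧
      Ai (Complex.exp (2 * l)) = Complex.exp (-(2 / 3 * Complex.exp (3 * l))) * Complex.exp (-(l / 2))
        / (2 * Real.sqrt π : ℝ) * (1 + ε) := by
  set p : ℂ := Complex.exp l with hpdef
  have hpre : p.re = Real.exp l.re * Real.cos l.im := Complex.exp_re l
  have hcos := cos_lb hl
  have hE := Real.exp_pos l.re
  have hple : Real.exp l.re / 4 ≤ p.re := by rw [hpre]; nlinarith
  have hp : 0 < p.re := by linarith
  have hsp : (0 : ℝ) < Real.sqrt π := by positivity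
  have hspC : (Real.sqrt π : ℂ) ≠ 0 := by exact_mod_cast hsp.ne'
  have hsp2 : (Real.sqrt π : ℂ) ^ 2 = π := by rw [← Complex.ofReal_pow, Real.sq_sqrt Real.pi_pos.le]
  have hsqrt : (π / p : ℂ) ^ (1 / 2 : ℂ) = Real.sqrt π * Complex.exp (-(l / 2)) := by
    have h1 : (π / p : ℂ) = Complex.exp ((Real.log π : ℝ) - l) := by
      rw [Complex.exp_sub, ← Complex.ofReal_exp, Real.exp_log Real.pi_pos]
    have h2 : Complex.log (π / p : ℂ) = (Real.log π : ℝ) - l := by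
      rw [h1]
      have := abs_le.1 hl
      have := Real.pi_gt_three
      refine Complex.log_exp ?_ ?_ <;> simp <;> linarith
    rw [Complex.cpow_def_of_ne_zero (by rw [h1]; exact Complex.exp_ne_zero _), h2,
      show (((Real.log π : ℝ) : ℂ) - l) * (1 / 2) = ((Real.log π / 2 : ℝ) : ℂ) + -(l / 2) by push_cast; ring,
      Complex.exp_add, ← Complex.ofReal_exp]
    congr 2
    rw [Real.sqrt_eq_rpow, Real.rpow_def_of_pos Real.pi_pos]
    congr 1; ring
  have hA := line_asymp hp
  rw [hsqrt] at hA
  set J : ℂ := ∫ s : ℝ, Complex.exp (-p * s ^ 2 - Complex.I * s ^ 3 / 3) with hJ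
  refine ⟨J * Complex.exp (l / 2) / Real.sqrt π - 1, ?_, ?_⟩
  · have e1 : J * Complex.exp (l / 2) / Real.sqrt π - 1
        = (J - Real.sqrt π * Complex.exp (-(l / 2))) * (Complex.exp (l / 2) / Real.sqrt π) := by
      rw [Complex.exp_neg]
      have := Complex.exp_ne_zero (l / 2)
      field_simp
    have e2 : ‖Complex.exp (l / 2) / Real.sqrt π‖ = Real.exp (l.re / 2) / Real.sqrt π := by
      rw [norm_div, Complex.norm_exp, Complex.norm_real, Real.norm_of_nonneg hsp.le]
      congr 2
      rw [show l / 2 = ((1 / 2 : ℝ) : ℂ) * l by push_cast; ring, Complex.re_ofReal_mul]; ring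
    rw [e1, norm_mul, e2]
    set x := Real.exp l.re with hx
    have hx2 : Real.exp (l.re / 2) = Real.sqrt x := by
      rw [hx, Real.exp_half]
    have hx3 : Real.exp (-(3 * l.re)) = 1 / x ^ 3 := by
      rw [hx, Real.exp_neg, ← Real.exp_nat_mul, one_div]; norm_num
    rw [hx2, hx3]
    have b1 : 3 / p.re ^ 3 ≤ 3 / (x / 4) ^ 3 := by gcongr
    have b2 : Real.sqrt (2 * π / p.re) ≤ 3 * Real.sqrt π / Real.sqrt x := by
      rw [Real.sqrt_le_left (by positivity), div_pow, mul_pow, Real.sq_sqrt Real.pi_pos.le, Real.sq_sqrt hE.le,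
        div_le_div_iff₀ hp hE]
      nlinarith [Real.pi_pos, mul_le_mul_of_nonneg_left hple Real.pi_pos.le]
    have hsx : 0 < Real.sqrt x := by positivity
    calc _ ≤ (3 / (x / 4) ^ 3 * (3 * Real.sqrt π / Real.sqrt x)) * (Real.sqrt x / Real.sqrt π) := by
            gcongr
            exact hA.trans (by gcongr)
      _ = 576 * (1 / x ^ 3) := by field_simp; norm_num
      _ ≤ _ := by gcongr; norm_num
  · have e1 : Complex.exp (2 * l) = p ^ 2 := by rw [hpdef, ← Complex.exp_nat_mul]; norm_num
    have e2 : Complex.exp (3 * l) = p ^ 3 := by rw [hpdef, ← Complex.exp_nat_mul]; norm_num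
    rw [e1, e2, Ai_line hp, ← hJ, show (2 * p ^ 3 / 3) = 2 / 3 * p ^ 3 by ring]
    have e3 : Complex.exp (-(l / 2)) * Complex.exp (l / 2) = 1 := by rw [← Complex.exp_add]; simp
    have hpi' : (π : ℂ) ≠ 0 := by exact_mod_cast Real.pi_ne_zero
    push_cast
    rw [show (1 + (J * Complex.exp (l / 2) / Real.sqrt π - 1)) = J * Complex.exp (l / 2) / Real.sqrt π by ring]
    rw [← hsp2]
    field_simp
    linear_combination (-J) * e3

/-! ### The upper half plane -/

lemma Ai_decay (l : ℂ) (hl : |l.im| ≤ π / 6) :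
    ‖Ai (Complex.exp (2 * l))‖ ≤ Real.sqrt (4 * π / Real.exp l.re) := by
  have hpi := Real.pi_pos
  have h4 := Real.pi_lt_four
  have hcos : 1 / 4 ≤ Real.cos l.im := cos_lb (by linarith)
  have hE := Real.exp_pos l.re
  have hre : Real.exp l.re / 4 ≤ (Complex.exp l).re := by rw [Complex.exp_re]; nlinarith
  have h3 : 0 ≤ ((Complex.exp l) ^ 3).re := by
    rw [← Complex.exp_nat_mul, Complex.exp_re]
    have := abs_le.1 hl
    refine mul_nonneg (Real.exp_pos _).le (Real.cos_nonneg_of_mem_Icc ⟨?_, ?_⟩) <;> simp <;> linarith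
  have e1 : Complex.exp (2 * l) = (Complex.exp l) ^ 2 := by rw [← Complex.exp_nat_mul]; norm_num
  rw [e1]
  refine (Ai_bound (by linarith) h3).trans (Real.sqrt_le_sqrt ?_)
  rw [div_le_div_iff₀ (by linarith) hE]
  nlinarith

/-- decay of `Ai` on a rotated half-strip, with complex logs -/
lemma Ai_decay_rot (s : ℂ) (b : ℝ) (hs : s ≠ 0) (hb : |s.arg + b| ≤ π / 3) :
    ‖Ai (Complex.exp (b * Complex.I) * s)‖ ≤ Real.sqrt (4 * π / Real.sqrt ‖s‖) := by
  have hn : 0 < ‖s‖ := norm_pos_iff.2 hs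
  have h := Ai_decay ((Complex.log s + b * Complex.I) / 2) (by
    have : ((Complex.log s + b * Complex.I) / 2).im = (s.arg + b) / 2 := by
      rw [show (Complex.log s + b * Complex.I) / 2 = ((1 / 2 : ℝ) : ℂ) * (Complex.log s + b * Complex.I) by
        push_cast; ring, Complex.im_ofReal_mul]
      simp [Complex.log_im]; ring
    rw [this, abs_div]; norm_num; linarith)
  have e1 : Complex.exp (2 * ((Complex.log s + b * Complex.I) / 2)) = Complex.exp (b * Complex.I) * s := by
    rw [mul_div_cancel₀ _ two_ne_zero, Complex.exp_add, Complex.exp_log hs, mul_comm]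
  have e2 : ((Complex.log s + b * Complex.I) / 2).re = Real.log ‖s‖ / 2 := by
    rw [show (Complex.log s + b * Complex.I) / 2 = ((1 / 2 : ℝ) : ℂ) * (Complex.log s + b * Complex.I) by
        push_cast; ring, Complex.re_ofReal_mul]
    simp [Complex.log_re]; ring
  rwa [e1, e2, Real.exp_half, Real.exp_log hn] at h

lemma decay_gen (b ρ : ℝ) (w : ℂ) (hρ : 0 < ρ)
    (h : ∀ᶠ t : ℝ in Filter.atTop, ∀ ζ : ℂ, ‖ζ‖ ≤ ρ → |((t : ℂ) + w + ζ).arg + b| ≤ π / 3) :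
    Filter.Tendsto (fun t : ℝ => Ai (Complex.exp (b * Complex.I) * (t + w))) Filter.atTop (nhds 0) ∧
    Filter.Tendsto (fun t : ℝ => Ai1 (Complex.exp (b * Complex.I) * (t + w))) Filter.atTop (nhds 0) := by
  set e := Complex.exp (b * Complex.I) with he
  have hen : ‖e‖ = 1 := Complex.norm_exp_ofReal_mul_I b
  set g : ℝ → ℝ := fun t => Real.sqrt (4 * π / Real.sqrt (t - ‖w‖ - ρ)) with hg
  have hg0 : Filter.Tendsto g Filter.atTop (nhds 0) := by
    rw [← Real.sqrt_zero]
    refine (Real.continuous_sqrt.tendsto _).comp ?_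
    refine Filter.Tendsto.const_div_atTop ?_ _
    refine Real.tendsto_sqrt_atTop.comp ?_
    have : (fun t : ℝ => t - ‖w‖ - ρ) = fun t => t + (-‖w‖ - ρ) := by ext; ring
    rw [this]
    exact Filter.tendsto_atTop_add_const_right _ _ Filter.tendsto_id
  have hb : ∀ᶠ t : ℝ in Filter.atTop, ∀ ζ : ℂ, ‖ζ‖ ≤ ρ → ‖Ai (e * (t + w + ζ))‖ ≤ g t := by
    filter_upwards [h, Filter.eventually_gt_atTop (‖w‖ + ρ)] with t ht htt ζ hζ
    have hn : t - ‖w‖ - ρ ≤ ‖(t : ℂ) + w + ζ‖ := by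
      have h1 : ‖(t : ℂ)‖ ≤ ‖(t : ℂ) + w + ζ‖ + ‖w + ζ‖ := by
        calc ‖(t : ℂ)‖ = ‖((t : ℂ) + w + ζ) - (w + ζ)‖ := by congr 1; ring
          _ ≤ _ := norm_sub_le _ _
      have h2 : t ≤ ‖(t : ℂ)‖ := by rw [Complex.norm_real]; exact le_abs_self t
      linarith [norm_add_le w ζ]
    have hpos : 0 < t - ‖w‖ - ρ := by linarith
    have hne : (t : ℂ) + w + ζ ≠ 0 := norm_pos_iff.1 (by linarith)
    refine (Ai_decay_rot _ b hne (ht ζ hζ)).trans (Real.sqrt_le_sqrt ?_)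
    have : Real.sqrt (t - ‖w‖ - ρ) ≤ Real.sqrt ‖(t : ℂ) + w + ζ‖ := Real.sqrt_le_sqrt hn
    have : 0 < Real.sqrt (t - ‖w‖ - ρ) := Real.sqrt_pos.2 hpos
    gcongr
  constructor
  · refine squeeze_zero_norm' ?_ hg0
    filter_upwards [hb] with t ht
    simpa using ht 0 (by simpa using hρ.le)
  · have : Filter.Tendsto (fun t => g t / ρ) Filter.atTop (nhds 0) := by simpa using hg0.div_const ρ
    refine squeeze_zero_norm' ?_ this
    filter_upwards [hb] with t ht
    rw [← (hasDerivAt_Ai _).deriv]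
    refine Complex.norm_deriv_le_of_forall_mem_sphere_norm_le hρ ?_ ?_
    · exact (show Differentiable ℂ Ai from fun x => (hasDerivAt_Ai x).differentiableAt).diffContOnCl
    · intro x hx
      have hx' : ‖x - e * (t + w)‖ = ρ := by simpa [dist_eq_norm] using hx
      have h1 := ht (e⁻¹ * x - (t + w)) (by
        have : e⁻¹ * x - (t + w) = e⁻¹ * (x - e * (t + w)) := by
          have := Complex.exp_ne_zero (b * Complex.I)
          rw [← he] at this
          field_simp
        rw [this, norm_mul, norm_inv, hen, hx']; simp)
      have h2 : e * (t + w + (e⁻¹ * x - (t + w))) = x := by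
        have := Complex.exp_ne_zero (b * Complex.I)
        rw [← he] at this
        field_simp
        ring
      rwa [h2] at h1

lemma decay_right (w : ℂ) :
    Filter.Tendsto (fun t : ℝ => Ai (t + w)) Filter.atTop (nhds 0) ∧
    Filter.Tendsto (fun t : ℝ => Ai1 (t + w)) Filter.atTop (nhds 0) := by
  have := decay_gen 0 1 w one_pos ?_
  · simpa using this
  filter_upwards [Filter.eventually_gt_atTop (3 * (‖w‖ + 1))] with t ht ζ hζ
  have h1 : |((t : ℂ) + w + ζ).im| ≤ ‖w‖ + 1 := by
    have : ((t : ℂ) + w + ζ).im = (w + ζ).im := by simp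
    rw [this]
    exact (Complex.abs_im_le_norm _).trans ((norm_add_le _ _).trans (by linarith))
  have h2 : 2 * (‖w‖ + 1) ≤ ((t : ℂ) + w + ζ).re := by
    have : ((t : ℂ) + w + ζ).re = t + (w + ζ).re := by simp; ring
    rw [this]
    have := (abs_le.1 ((Complex.abs_re_le_norm (w + ζ)).trans ((norm_add_le _ _)))).1
    linarith
  have hw := norm_nonneg w
  have h3 : ((t : ℂ) + w + ζ).re ≤ ‖(t : ℂ) + w + ζ‖ := Complex.re_le_norm _
  set s := (t : ℂ) + w + ζ
  have hs : 0 < ‖s‖ := by linarith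
  rw [add_zero, Complex.arg_of_re_nonneg (by linarith)]
  have h4 : |s.im / ‖s‖| ≤ 1 / 2 := by
    rw [abs_div, abs_of_pos hs, div_le_iff₀ hs]; linarith
  have hpi := Real.pi_pos
  have h5 : Real.sin (π / 6) = 1 / 2 := Real.sin_pi_div_six
  have h6 := abs_le.1 h4
  rw [abs_le]
  constructor
  · have := (Real.le_arcsin_iff_sin_le (x := -(π / 6)) (y := s.im / ‖s‖) ⟨by linarith, by linarith⟩
      ⟨by linarith, by linarith⟩).2 (by rw [Real.sin_neg]; linarith)
    linarith
  · have := (Real.arcsin_le_iff_le_sin (x := s.im / ‖s‖) (y := π / 6) ⟨by linarith, by linarith⟩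
      ⟨by linarith, by linarith⟩).2 (by linarith)
    linarith

lemma neg_ωc : -ωc = Complex.exp ((-(π / 3) : ℝ) * Complex.I) := by
  rw [ωc]
  rw [show (2 * π * Complex.I / 3 : ℂ) = π * Complex.I + (-(π / 3) : ℝ) * Complex.I by push_cast; ring,
    Complex.exp_add, Complex.exp_pi_mul_I]
  ring

lemma decay_left (w : ℂ) (hw : 0 < w.im) :
    Filter.Tendsto (fun t : ℝ => Ai (-ωc * (t + w))) Filter.atTop (nhds 0) ∧
    Filter.Tendsto (fun t : ℝ => Ai1 (-ωc * (t + w))) Filter.atTop (nhds 0) := by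
  rw [neg_ωc]
  refine decay_gen _ w.im w hw ?_
  filter_upwards [Filter.eventually_gt_atTop (3 * (‖w‖ + w.im))] with t ht ζ hζ
  have h1 : 0 ≤ ((t : ℂ) + w + ζ).im := by
    have : ((t : ℂ) + w + ζ).im = w.im + ζ.im := by simp
    rw [this]
    have := (abs_le.1 ((Complex.abs_im_le_norm ζ).trans hζ)).1
    linarith
  have h2 : 0 ≤ ((t : ℂ) + w + ζ).re := by
    have : ((t : ℂ) + w + ζ).re = t + (w + ζ).re := by simp; ring
    rw [this]
    have := (abs_le.1 ((Complex.abs_re_le_norm (w + ζ)).trans ((norm_add_le _ _)))).1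
    linarith [norm_nonneg w]
  have h3 := Complex.arg_nonneg_iff.2 h1
  have h4 := (abs_le.1 (Complex.abs_arg_le_pi_div_two_iff.2 h2)).2
  have hpi := Real.pi_pos
  rw [abs_le]; constructor <;> linarith

/-- the abstract ODE argument -/
lemma ode_N {z : ℂ} {f : ℝ} {u u' : ℝ → ℂ} (h1 : ∀ x, HasDerivAt u (u' x) x)
    (h2 : ∀ x, HasDerivAt u' ((f * x - z) * u x) x) (x : ℝ) :
    HasDerivAt (fun x => (u' x * (starRingEnd ℂ) (u x)).im) (-(z.im * Complex.normSq (u x))) x := by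
  have hc : HasDerivAt (fun x => (starRingEnd ℂ) (u x)) ((starRingEnd ℂ) (u' x)) x := by
    exact (h1 x).star
  have hm := (h2 x).mul hc
  have := (Complex.imCLM.hasFDerivAt (x := u' x * (starRingEnd ℂ) (u x))).comp_hasDerivAt x hm
  refine HasDerivAt.congr_deriv this ?_
  simp [Complex.normSq_apply]
  ring

lemma abstract_ode {z W : ℂ} {f κ g : ℝ} (hκ : 0 < κ) (hz : 0 < z.im) {φ φ' ψ ψ' : ℝ → ℂ}
    (p1 : ∀ x, HasDerivAt φ (φ' x) x) (p2 : ∀ x, HasDerivAt φ' ((f * x - z) * φ x) x)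
    (q1 : ∀ x, HasDerivAt ψ (ψ' x) x) (q2 : ∀ x, HasDerivAt ψ' ((f * x - z) * ψ x) x)
    (hW : ∀ x, φ x * ψ' x - φ' x * ψ x = W) (hW0 : W ≠ 0)
    (lp : Filter.Tendsto φ Filter.atTop (nhds 0)) (lp' : Filter.Tendsto φ' Filter.atTop (nhds 0))
    (lq : Filter.Tendsto ψ Filter.atBot (nhds 0)) (lq' : Filter.Tendsto ψ' Filter.atBot (nhds 0)) :
    1 + g * (ψ κ * φ κ + ψ (-κ) * φ (-κ)) / W
      + g ^ 2 * (ψ (-κ) * φ κ) * (ψ κ * φ (-κ) - ψ (-κ) * φ κ) / W ^ 2 ≠ 0 := by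
  intro hD
  have anti : ∀ {u u' : ℝ → ℂ}, (∀ x, HasDerivAt u (u' x) x) → (∀ x, HasDerivAt u' ((f * x - z) * u x) x) →
      Antitone (fun x => (u' x * (starRingEnd ℂ) (u x)).im) := by
    intro u u' h1 h2
    refine antitone_of_hasDerivAt_nonpos (fun x => ode_N h1 h2 x) (fun x => ?_)
    have := Complex.normSq_nonneg (u x)
    simp only [Pi.zero_apply, Left.neg_nonpos_iff]
    positivity
  have lim0 : ∀ {u u' : ℝ → ℂ} {l : Filter ℝ}, Filter.Tendsto u l (nhds 0) → Filter.Tendsto u' l (nhds 0) →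
      Filter.Tendsto (fun x => (u' x * (starRingEnd ℂ) (u x)).im) l (nhds 0) := by
    intro u u' l h1 h2
    have h3 : Filter.Tendsto (fun x => (starRingEnd ℂ) (u x)) l (nhds 0) := by
      have := (Complex.continuous_conj.tendsto 0).comp h1
      rw [map_zero] at this
      exact this
    have h4 := h2.mul h3
    have := (Complex.continuous_im.tendsto _).comp h4
    rw [mul_zero, Complex.zero_im] at this
    exact this
  have nφ : ∀ x, 0 ≤ (φ' x * (starRingEnd ℂ) (φ x)).im := fun x => by
    exact (anti p1 p2).le_of_tendsto (lim0 lp lp') x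
  have nψ : ∀ x, (ψ' x * (starRingEnd ℂ) (ψ x)).im ≤ 0 := fun x => by
    exact (anti q1 q2).ge_of_tendsto (lim0 lq lq') x
  have nψ1 : (ψ' (-κ) * (starRingEnd ℂ) (ψ (-κ))).im < 0 := by
    refine lt_of_le_of_ne (nψ _) (fun h0 => ?_)
    have hz0 : ∀ x ≤ -κ, (ψ' x * (starRingEnd ℂ) (ψ x)).im = 0 := by
      intro x hx
      have := anti q1 q2 hx
      simp only [h0] at this
      exact le_antisymm (nψ x) this
    have hψ0 : ∀ x < -κ, ψ x = 0 := by
      intro x hx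
      have hd := ode_N q1 q2 x
      have hd2 : HasDerivAt (fun x => (ψ' x * (starRingEnd ℂ) (ψ x)).im) 0 x := by
        refine (hasDerivAt_const x (0 : ℝ)).congr_of_eventuallyEq ?_
        filter_upwards [Iio_mem_nhds hx] with y hy
        exact hz0 y (le_of_lt hy)
      have := hd.unique hd2
      have h5 : Complex.normSq (ψ x) = 0 := by
        have : z.im * Complex.normSq (ψ x) = 0 := by linarith
        rcases mul_eq_zero.1 this with h | h
        · exact absurd h hz.ne'
        · exact h
      exact Complex.normSq_eq_zero.1 h5
    have hx : -κ - 1 < -κ := by linarith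
    have hψ'0 : ψ' (-κ - 1) = 0 := by
      refine (q1 (-κ - 1)).unique ?_
      refine (hasDerivAt_const (-κ - 1) (0 : ℂ)).congr_of_eventuallyEq ?_
      filter_upwards [Iio_mem_nhds hx] with y hy
      exact hψ0 y hy
    have := hW (-κ - 1)
    rw [hψ0 _ hx, hψ'0] at this
    apply hW0
    rw [← this]; ring
  -- the solution u
  set c2 : ℂ := -g * ψ (-κ) ^ 2 / W with hc2
  set c3 : ℂ := 1 + g * ψ (-κ) * φ (-κ) / W with hc3
  have u1 : ∀ x, HasDerivAt (fun x => c2 * φ x + c3 * ψ x) (c2 * φ' x + c3 * ψ' x) x := fun x =>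
    ((p1 x).const_mul c2).add ((q1 x).const_mul c3)
  have u2 : ∀ x, HasDerivAt (fun x => c2 * φ' x + c3 * ψ' x) ((f * x - z) * (c2 * φ x + c3 * ψ x)) x := fun x => by
    have := ((p2 x).const_mul c2).add ((q2 x).const_mul c3)
    exact HasDerivAt.congr_deriv this (by ring)
  have hle := anti u1 u2 (show -κ ≤ κ by linarith)
  simp only at hle
  have e1 : c2 * φ (-κ) + c3 * ψ (-κ) = ψ (-κ) := by
    rw [hc2, hc3]; ring
  have e2 : c2 * φ' (-κ) + c3 * ψ' (-κ) = ψ' (-κ) + g * ψ (-κ) := by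
    rw [hc2, hc3]; field_simp
    linear_combination g * ψ (-κ) * hW (-κ)
  have e3 : ((ψ' (-κ) + g * ψ (-κ)) * (starRingEnd ℂ) (ψ (-κ))).im = (ψ' (-κ) * (starRingEnd ℂ) (ψ (-κ))).im := by
    rw [add_mul, Complex.add_im, mul_assoc, Complex.mul_conj, ← Complex.ofReal_mul, Complex.ofReal_im, add_zero]
  rw [e1, e2, e3] at hle
  set U := c2 * φ κ + c3 * ψ κ with hU
  set U' := c2 * φ' κ + c3 * ψ' κ with hU'
  have e4 : φ κ * (U' + g * U) - φ' κ * U = 0 := by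
    have : φ κ * (U' + g * U) - φ' κ * U = W * (1 + g * (ψ κ * φ κ + ψ (-κ) * φ (-κ)) / W
      + g ^ 2 * (ψ (-κ) * φ κ) * (ψ κ * φ (-κ) - ψ (-κ) * φ κ) / W ^ 2) := by
      rw [hU, hU', hc2, hc3]
      field_simp
      linear_combination (W + g * ψ (-κ) * φ (-κ)) * hW κ
    rw [this, hD, mul_zero]
  have hlt : (U' * (starRingEnd ℂ) U).im < 0 := lt_of_le_of_lt hle nψ1
  by_cases h0 : φ κ = 0
  · have h1 : φ' κ ≠ 0 := by
      intro h1
      have := hW κ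
      rw [h0, h1] at this
      apply hW0; rw [← this]; ring
    have hU0 : U = 0 := by
      rw [h0] at e4
      have : φ' κ * U = 0 := by linear_combination -e4
      exact (mul_eq_zero.1 this).resolve_left h1
    rw [hU0] at hlt
    simp at hlt
  · have hn : 0 < Complex.normSq (φ κ) := Complex.normSq_pos.2 h0
    have e5 : (Complex.normSq (φ κ) : ℂ) * (U' * (starRingEnd ℂ) U)
        = (Complex.normSq U : ℂ) * (φ' κ * (starRingEnd ℂ) (φ κ)) - (Complex.normSq (φ κ) * g * Complex.normSq U : ℝ) := by
      push_cast
      rw [← Complex.mul_conj, ← Complex.mul_conj]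
      linear_combination (starRingEnd ℂ) (φ κ) * (starRingEnd ℂ) U * e4
    have e6 := congrArg Complex.im e5
    rw [Complex.im_ofReal_mul, Complex.sub_im, Complex.im_ofReal_mul, Complex.ofReal_im] at e6
    have := nφ κ
    have := Complex.normSq_nonneg U
    have : 0 ≤ Complex.normSq U * (φ' κ * (starRingEnd ℂ) (φ κ)).im := by positivity
    nlinarith

lemma Wf_ne {f : ℝ} (hf : 0 < f) : Wf f ≠ 0 := by
  unfold Wf
  have h1 : ((f ^ ((1 : ℝ) / 3) : ℝ) : ℂ) ≠ 0 := by exact_mod_cast (Real.rpow_pos_of_pos hf _).ne'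
  have h2 : (π : ℂ) ≠ 0 := by exact_mod_cast Real.pi_ne_zero
  have h3 := Complex.exp_ne_zero (-(π : ℂ) * Complex.I / 6)
  exact div_ne_zero (mul_ne_zero h1 h3) (mul_ne_zero two_ne_zero h2)

lemma Df_ne_upper {κ η f : ℝ} {z : ℂ} (hκ : 0 < κ) (hη : 0 < η) (hf : 0 < f) (hz : 0 < z.im) :
    Df κ η f z ≠ 0 := by
  set c : ℝ := f ^ ((1 : ℝ) / 3) with hc
  set q : ℝ := f ^ (-(2 : ℝ) / 3) with hq
  have hq0 : 0 < q := Real.rpow_pos_of_pos hf _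
  have hc0 : 0 < c := Real.rpow_pos_of_pos hf _
  have hfq : f * q = c := by
    rw [hq, hc]
    nth_rewrite 1 [← Real.rpow_one f]
    rw [← Real.rpow_add hf]; norm_num
  have hcq : c ^ 2 * q = 1 := by
    rw [hq, hc, ← Real.rpow_natCast, ← Real.rpow_mul hf.le, ← Real.rpow_add hf]; norm_num
  have hfqC : (f : ℂ) * q = c := by exact_mod_cast hfq
  have hcqC : (c : ℂ) ^ 2 * q = 1 := by exact_mod_cast hcq
  set ξ : ℝ → ℂ := fun x => -(z - f * x) * q with hξ
  have dξ : ∀ x, HasDerivAt ξ c x := by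
    intro x
    have h1 : HasDerivAt (fun x : ℝ => (x : ℂ)) 1 x := Complex.ofRealCLM.hasDerivAt
    have h2 := (((h1.const_mul (f : ℂ)).const_sub z).neg).mul_const (q : ℂ)
    refine HasDerivAt.congr_deriv h2 ?_
    rw [← hfqC]; ring
  have dωξ : ∀ x, HasDerivAt (fun x => ωc * ξ x) (ωc * c) x := fun x => (dξ x).const_mul ωc
  have key := abstract_ode (z := z) (W := Wf f) (f := f) (κ := κ) (g := η⁻¹) hκ hz
    (φ := fun x => Ai (ξ x)) (φ' := fun x => Ai1 (ξ x) * c)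
    (ψ := fun x => Ai (ωc * ξ x)) (ψ' := fun x => Ai1 (ωc * ξ x) * (ωc * c))
    (fun x => (hasDerivAt_Ai _).comp x (dξ x))
    (fun x => by
      have := ((hasDerivAt_Ai1 _).comp x (dξ x)).mul_const (c : ℂ)
      refine HasDerivAt.congr_deriv this ?_
      simp only [hξ]
      linear_combination ((f * x - z) * Ai (-(z - f * x) * q)) * hcqC)
    (fun x => (hasDerivAt_Ai _).comp x (dωξ x))
    (fun x => by
      have := ((hasDerivAt_Ai1 _).comp x (dωξ x)).mul_const (ωc * c : ℂ)
      refine HasDerivAt.congr_deriv this ?_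
      simp only [hξ]
      linear_combination ((f * x - z) * Ai (ωc * (-(z - f * x) * q))) * hcqC
       + (f * x - z) * Ai (ωc * (-(z - f * x) * q)) * c ^ 2 * q * ωc_cube)
    (fun x => by
      have := airy_wronskian (ξ x)
      unfold Wf
      linear_combination (c : ℂ) * this)
    (Wf_ne hf)
    ?_ ?_ ?_ ?_
  · unfold Df alphaP alphaM betaP betaM
    convert key using 1
    have := Wf_ne hf
    have hη' : (η : ℂ) ≠ 0 := by exact_mod_cast hη.ne'
    simp only [hξ, ← hq]
    rw [show -(z - (f : ℂ) * (κ : ℝ)) * q = -(z - κ * f) * q by ring,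
      show -(z - (f : ℂ) * ((-κ : ℝ) : ℂ)) * q = -(z + κ * f) * q by push_cast; ring,
      show -ωc * (z - κ * f) * q = ωc * (-(z - κ * f) * q) by ring,
      show -ωc * (z + κ * f) * q = ωc * (-(z + κ * f) * q) by ring]
    push_cast
    field_simp
  all_goals
    have t1 : Filter.Tendsto (fun x : ℝ => c * x) Filter.atTop Filter.atTop :=
      Filter.tendsto_id.const_mul_atTop hc0
    have t2 : Filter.Tendsto (fun x : ℝ => -(c * x)) Filter.atBot Filter.atTop :=
      Filter.tendsto_neg_atBot_atTop.comp (Filter.tendsto_id.const_mul_atBot hc0)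
  · have := (decay_right (-z * q)).1.comp t1
    refine this.congr (fun x => ?_)
    simp only [Function.comp, hξ]; congr 1; push_cast; rw [← hfqC]; ring
  · have := ((decay_right (-z * q)).2.comp t1).mul_const (c : ℂ)
    rw [zero_mul] at this
    refine this.congr (fun x => ?_)
    simp only [Function.comp, hξ]; congr 2; push_cast; rw [← hfqC]; ring
  · have := (decay_left (z * q) (by rw [Complex.im_mul_ofReal]; positivity)).1.comp t2
    refine this.congr (fun x => ?_)
    simp only [Function.comp, hξ]; congr 1; push_cast; rw [← hfqC]; ring
  · have := ((decay_left (z * q) (by rw [Complex.im_mul_ofReal]; positivity)).2.comp t2).mul_const (ωc * c : ℂ)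
    rw [zero_mul] at this
    refine this.congr (fun x => ?_)
    simp only [Function.comp, hξ]; congr 2; push_cast; rw [← hfqC]; ring

/-! ### Normalised Airy data -/

noncomputable def lam (r θ : ℝ) : ℂ := (Real.log r / 2 : ℝ) + (θ / 2 : ℝ) * Complex.I
noncomputable def kk (r θ : ℝ) : ℂ := Complex.exp (lam r θ)
noncomputable def cc (f r θ τ : ℝ) : ℂ :=
  Complex.exp (-((τ * Complex.I + lam r θ - (Real.log f / 3 : ℝ)) / 2)) / (2 * Real.sqrt π : ℝ)

lemma kk_sq {r θ : ℝ} (hr : 0 < r) : kk r θ ^ 2 = r * Complex.exp (Complex.I * θ) := by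
  rw [kk, ← Complex.exp_nat_mul, lam]
  rw [show ((2 : ℕ) : ℂ) * (((Real.log r / 2 : ℝ) : ℂ) + (θ / 2 : ℝ) * Complex.I)
    = (Real.log r : ℝ) + Complex.I * θ by push_cast; ring, Complex.exp_add, ← Complex.ofReal_exp, Real.exp_log hr]

lemma lam_re (r θ : ℝ) : (lam r θ).re = Real.log r / 2 := by simp [lam]
lemma lam_im (r θ : ℝ) : (lam r θ).im = θ / 2 := by simp [lam]

lemma kk_norm {r θ : ℝ} (hr : 0 < r) : ‖kk r θ‖ = Real.sqrt r := by
  rw [kk, Complex.norm_exp, lam_re, Real.exp_half, Real.exp_log hr]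

lemma kk_ne (r θ : ℝ) : kk r θ ≠ 0 := Complex.exp_ne_zero _

lemma pt_asym {f r θ τ : ℝ} {h : ℂ} (hf : 0 < f) (hr : 0 < r) (hh : ‖h‖ ≤ 1 / 100)
    (hτ : |τ + θ / 2| ≤ π / 3) :
    ∃ ε : ℂ, ‖ε‖ ≤ 1300 * (‖h‖ + f / (r * Real.sqrt r)) ∧
      Ai (Complex.exp (2 * (τ * Complex.I)) * (kk r θ ^ 2 * (1 + h)) * ((f ^ (-(2 : ℝ) / 3) : ℝ) : ℂ))
      = Complex.exp (-(Complex.exp (3 * (τ * Complex.I)) *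
          (2 / (3 * f) * kk r θ ^ 3 * Complex.exp (3 / 2 * Complex.log (1 + h))))) * cc f r θ τ * (1 + ε) := by
  set μ : ℂ := Complex.log (1 + h) / 2 with hμ
  have hμn : ‖μ‖ ≤ ‖h‖ := by
    have := Complex.norm_log_one_add_half_le_self (z := h) (by linarith)
    rw [hμ, norm_div]; norm_num
    linarith [norm_nonneg h]
  have h1h : 1 + h ≠ 0 := by
    intro h0
    have : h = -1 := by linear_combination h0
    rw [this] at hh; norm_num at hh
  set l0 : ℂ := τ * Complex.I + lam r θ - (Real.log f / 3 : ℝ) with hl0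
  obtain ⟨ε, hε, hA⟩ := Ai_asymp (l0 + μ) (by
    have e1 : (l0 + μ).im = τ + θ / 2 + μ.im := by
      rw [hl0, Complex.add_im, Complex.sub_im, Complex.add_im, lam_im, Complex.ofReal_im]; simp
    have e2 : |μ.im| ≤ 1 / 100 := ((Complex.abs_im_le_norm μ).trans hμn).trans hh
    rw [e1]
    have := Real.pi_lt_d2
    calc |τ + θ / 2 + μ.im| ≤ |τ + θ / 2| + |μ.im| := abs_add_le _ _
      _ ≤ π / 3 + 1 / 100 := by linarith
      _ ≤ _ := by norm_num at this ⊢; linarith)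
  have hre : (l0 + μ).re = Real.log r / 2 - Real.log f / 3 + μ.re := by
    rw [hl0, Complex.add_re, Complex.sub_re, Complex.add_re, lam_re, Complex.ofReal_re]; simp
  have hμre : -μ.re ≤ 1 / 100 := by
    have := (abs_le.1 (((Complex.abs_re_le_norm μ).trans hμn).trans hh)).1
    linarith
  have hε2 : ‖ε‖ ≤ 1200 * (f / (r * Real.sqrt r)) := by
    refine hε.trans ?_
    have e1 : Real.exp (-(3 * (l0 + μ).re)) = f / (r * Real.sqrt r) * Real.exp (-(3 * μ.re)) := by
      rw [hre]
      have : f / (r * Real.sqrt r) = Real.exp (Real.log f - (Real.log r + Real.log r / 2)) := by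
        rw [Real.exp_sub, Real.exp_add, Real.exp_half, Real.exp_log hf, Real.exp_log hr]
      rw [this, ← Real.exp_add]; congr 1; ring
    have e2 : Real.exp (-(3 * μ.re)) ≤ 2 := by
      have : Real.exp (-(3 * μ.re)) ≤ Real.exp (1 / 2) := Real.exp_le_exp.2 (by linarith)
      have h3 : Real.exp (1 / 2) ≤ 2 := by
        rw [Real.exp_half, Real.sqrt_le_left (by norm_num)]
        have := Real.exp_one_lt_d9
        linarith
      linarith
    rw [e1]
    have : 0 ≤ f / (r * Real.sqrt r) := by positivity
    nlinarith
  have e1 : Complex.exp (2 * (l0 + μ)) = Complex.exp (2 * (τ * Complex.I)) * (kk r θ ^ 2 * (1 + h)) * ((f ^ (-(2 : ℝ) / 3) : ℝ) : ℂ) := by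
    rw [show 2 * (l0 + μ) = 2 * (τ * Complex.I) + ((2 : ℕ) * lam r θ + Complex.log (1 + h)) + ((Real.log f * (-(2 : ℝ) / 3) : ℝ) : ℂ) by
      rw [hl0, hμ]; push_cast; ring, Complex.exp_add, Complex.exp_add, Complex.exp_add, Complex.exp_log h1h, Complex.exp_nat_mul,
      ← Complex.ofReal_exp, ← Real.rpow_def_of_pos hf, kk]
  have e2 : 2 / 3 * Complex.exp (3 * (l0 + μ)) = Complex.exp (3 * (τ * Complex.I)) *
          (2 / (3 * f) * kk r θ ^ 3 * Complex.exp (3 / 2 * Complex.log (1 + h))) := by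
    rw [show 3 * (l0 + μ) = 3 * (τ * Complex.I) + ((3 : ℕ) * lam r θ + 3 / 2 * Complex.log (1 + h)) - (Real.log f : ℝ) by
      rw [hl0, hμ]; push_cast; ring, Complex.exp_sub, Complex.exp_add, Complex.exp_add, Complex.exp_nat_mul,
      ← Complex.ofReal_exp, Real.exp_log hf, kk]
    have : (f : ℂ) ≠ 0 := by exact_mod_cast hf.ne'
    field_simp
  rw [e1, e2] at hA
  refine ⟨Complex.exp (-(μ / 2)) * (1 + ε) - 1, ?_, ?_⟩
  · have e3 : Complex.exp (-(μ / 2)) * (1 + ε) - 1 = (Complex.exp (-(μ / 2)) - 1) * (1 + ε) + ε := by ring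
    have hn : ‖-(μ / 2)‖ = ‖μ‖ / 2 := by rw [norm_neg, norm_div]; norm_num
    have e4 := Complex.norm_exp_sub_one_le (x := -(μ / 2)) (by rw [hn]; linarith)
    rw [hn] at e4
    have e5 : ‖Complex.exp (-(μ / 2)) - 1‖ ≤ ‖h‖ := by linarith
    rw [e3]
    have h0 : 0 ≤ f / (r * Real.sqrt r) := by positivity
    calc _ ≤ ‖Complex.exp (-(μ / 2)) - 1‖ * ‖1 + ε‖ + ‖ε‖ := by
            rw [← norm_mul]; exact norm_add_le _ _
      _ ≤ ‖h‖ * (1 + ‖ε‖) + ‖ε‖ := by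
            gcongr
            exact (norm_add_le _ _).trans (by simp)
      _ ≤ _ := by nlinarith [norm_nonneg h, norm_nonneg ε]
  · rw [hA, cc, ← hl0, show -((l0 + μ) / 2) = -(l0 / 2) + -(μ / 2) by ring, Complex.exp_add]
    ring

lemma sqrt_pair {A B h : ℂ} (hA : A ^ 2 = (1 + h) ^ 3) (hB : B ^ 2 = (1 - h) ^ 3)
    (nA : ‖A - 1‖ ≤ 1 / 10) (nB : ‖B - 1‖ ≤ 1 / 10) (hh : ‖h‖ ≤ 1 / 100) :
    ‖A + B - 2‖ ≤ 6 * ‖h‖ ^ 2 ∧ ‖A - B - 3 * h‖ ≤ 20 * ‖h‖ ^ 3 := by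
  have h0 := norm_nonneg h
  -- AB
  have l1 : 1 ≤ ‖A * B + 1‖ := by
    have : A * B + 1 = 2 + ((A - 1) * (B - 1) + (A - 1) + (B - 1)) := by ring
    rw [this]
    have h1 : ‖(A - 1) * (B - 1) + (A - 1) + (B - 1)‖ ≤ 1 := by
      refine (norm_add₃_le).trans ?_
      rw [norm_mul]
      nlinarith [norm_nonneg (A - 1), norm_nonneg (B - 1)]
    have h2 := norm_sub_le (2 + ((A - 1) * (B - 1) + (A - 1) + (B - 1))) ((A - 1) * (B - 1) + (A - 1) + (B - 1))
    rw [add_sub_cancel_right] at h2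
    norm_num at h2
    linarith
  have p1 : (A * B - 1) * (A * B + 1) = -h ^ 2 * (3 - 3 * h ^ 2 + h ^ 4) := by
    linear_combination B ^ 2 * hA + (1 + h) ^ 3 * hB
  have p2 : ‖A * B - 1‖ ≤ 4 * ‖h‖ ^ 2 := by
    have e := congrArg norm p1
    rw [norm_mul, norm_mul, norm_neg, norm_pow] at e
    have e2 : ‖3 - 3 * h ^ 2 + h ^ 4‖ ≤ 4 := by
      refine (norm_add_le _ _).trans ?_
      have := norm_sub_le 3 (3 * h ^ 2)
      simp only [norm_mul, norm_pow] at this ⊢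
      norm_num at this
      have : ‖h‖ ^ 2 ≤ 1 / 100 := by nlinarith
      have : ‖h‖ ^ 4 ≤ 1 / 100 := by nlinarith [sq_nonneg (‖h‖ ^ 2)]
      linarith
    nlinarith [norm_nonneg (A * B - 1), sq_nonneg ‖h‖, mul_le_mul_of_nonneg_left e2 (sq_nonneg ‖h‖)]
  have nab : ‖A + B - 2‖ ≤ 1 / 5 := by
    have : A + B - 2 = (A - 1) + (B - 1) := by ring
    rw [this]; exact (norm_add_le _ _).trans (by linarith)
  have s1 : (A + B - 2) * (A + B + 2) = 6 * h ^ 2 + 2 * (A * B - 1) := by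
    linear_combination hA + hB
  have l2 : 3 ≤ ‖A + B + 2‖ := by
    have h2 := norm_sub_le (A + B + 2) (A + B - 2)
    rw [show A + B + 2 - (A + B - 2) = 4 by ring] at h2
    norm_num at h2
    linarith
  have s2 : ‖A + B - 2‖ ≤ 6 * ‖h‖ ^ 2 := by
    have e := congrArg norm s1
    rw [norm_mul] at e
    have e2 : ‖6 * h ^ 2 + 2 * (A * B - 1)‖ ≤ 6 * ‖h‖ ^ 2 + 2 * ‖A * B - 1‖ := by
      refine (norm_add_le _ _).trans ?_
      simp
    nlinarith [norm_nonneg (A + B - 2)]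
  refine ⟨s2, ?_⟩
  have l3 : 1 ≤ ‖A + B‖ := by
    have h2 := norm_sub_le (A + B) (A + B - 2)
    rw [show A + B - (A + B - 2) = 2 by ring] at h2
    norm_num at h2
    linarith
  have d1 : (A - B - 3 * h) * (A + B) = 2 * h ^ 3 - 3 * h * (A + B - 2) := by
    linear_combination hA - hB
  have e := congrArg norm d1
  rw [norm_mul] at e
  have e2 : ‖2 * h ^ 3 - 3 * h * (A + B - 2)‖ ≤ 2 * ‖h‖ ^ 3 + 3 * ‖h‖ * ‖A + B - 2‖ := by
    refine (norm_sub_le _ _).trans ?_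
    simp
  have e3 : 3 * ‖h‖ * ‖A + B - 2‖ ≤ 3 * ‖h‖ * (6 * ‖h‖ ^ 2) := by gcongr
  nlinarith [norm_nonneg (A - B - 3 * h)]

lemma exp_log_pair {h : ℂ} (hh : ‖h‖ ≤ 1 / 100) :
    Complex.exp (3 / 2 * Complex.log (1 + h)) ^ 2 = (1 + h) ^ 3 ∧
    ‖Complex.exp (3 / 2 * Complex.log (1 + h)) - 1‖ ≤ 1 / 10 := by
  have h1h : 1 + h ≠ 0 := by
    intro h0
    have : h = -1 := by linear_combination h0
    rw [this] at hh; norm_num at hh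
  constructor
  · rw [← Complex.exp_nat_mul, show ((2 : ℕ) : ℂ) * (3 / 2 * Complex.log (1 + h)) = (3 : ℕ) * Complex.log (1 + h) by
      push_cast; ring, Complex.exp_nat_mul, Complex.exp_log h1h]
  · have h1 := Complex.norm_log_one_add_half_le_self (z := h) (by linarith)
    have h2 : ‖3 / 2 * Complex.log (1 + h)‖ ≤ 3 / 2 * (3 / 2 * ‖h‖) := by
      rw [norm_mul]; norm_num; linarith
    have := Complex.norm_exp_sub_one_le (x := 3 / 2 * Complex.log (1 + h)) (by linarith)
    linarith

lemma kk_cube {r θ : ℝ} (hr : 0 < r) : kk r θ ^ 3 = ((r * Real.sqrt r : ℝ) : ℂ) * Complex.exp ((3 * θ / 2 : ℝ) * Complex.I) := by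
  rw [kk, ← Complex.exp_nat_mul, lam]
  have : r * Real.sqrt r = Real.exp (Real.log r + Real.log r / 2) := by
    rw [Real.exp_add, Real.exp_half, Real.exp_log hr]
  rw [this, Complex.ofReal_exp, ← Complex.exp_add]
  congr 1; push_cast; ring

lemma exp_one_add {w ε : ℂ} (hw : ‖w‖ ≤ 1) (hε : ‖ε‖ ≤ 1) : ‖Complex.exp w * (1 + ε) - 1‖ ≤ 4 * ‖w‖ + ‖ε‖ := by
  have e3 : Complex.exp w * (1 + ε) - 1 = (Complex.exp w - 1) * (1 + ε) + ε := by ring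
  have e4 := Complex.norm_exp_sub_one_le hw
  rw [e3]
  have h1 : ‖1 + ε‖ ≤ 2 := (norm_add_le _ _).trans (by simp; linarith)
  calc _ ≤ ‖Complex.exp w - 1‖ * ‖1 + ε‖ + ‖ε‖ := by rw [← norm_mul]; exact norm_add_le _ _
    _ ≤ (2 * ‖w‖) * 2 + ‖ε‖ := by gcongr
    _ = _ := by ring

set_option maxHeartbeats 1000000 in
lemma pair_asym (κ : ℝ) (hκ : 0 < κ) : ∃ C : ℝ, 1 ≤ C ∧ ∀ f r θ : ℝ, 0 < f → f ≤ 1 → 0 < r →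
    C * (f / r + f / (r * Real.sqrt r)) ≤ 1 → ∃ p : ℂ,
      |2 * p.re + 4 / (3 * f) * (r * Real.sqrt r) * Real.sin (3 * θ / 2)| ≤ C * (f / Real.sqrt r) ∧
      ∀ τ s : ℝ, |τ + θ / 2| ≤ π / 3 → |s| = 1 → Complex.exp (3 * (τ * Complex.I)) = -(s * Complex.I) →
        (∃ ε : ℂ, ‖ε‖ ≤ C * (f / r + f / (r * Real.sqrt r)) ∧
          Ai (Complex.exp (2 * (τ * Complex.I)) * (kk r θ ^ 2 + κ * f) * ((f ^ (-(2 : ℝ) / 3) : ℝ) : ℂ))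
          = cc f r θ τ * Complex.exp (s * (p + Complex.I * κ * kk r θ)) * (1 + ε)) ∧
        (∃ ε : ℂ, ‖ε‖ ≤ C * (f / r + f / (r * Real.sqrt r)) ∧
          Ai (Complex.exp (2 * (τ * Complex.I)) * (kk r θ ^ 2 - κ * f) * ((f ^ (-(2 : ℝ) / 3) : ℝ) : ℂ))
          = cc f r θ τ * Complex.exp (s * (p - Complex.I * κ * kk r θ)) * (1 + ε)) := by
  refine ⟨10000 * (1 + κ + κ ^ 2 + κ ^ 3), by nlinarith [pow_pos hκ 2, pow_pos hκ 3], ?_⟩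
  intro f r θ hf hf1 hr hC
  set ρ := Real.sqrt r with hρ
  have hρ0 : 0 < ρ := Real.sqrt_pos.2 hr
  have hrρ : r = ρ ^ 2 := (Real.sq_sqrt hr.le).symm
  set k := kk r θ with hk
  have hk0 : k ≠ 0 := kk_ne r θ
  have hkn : ‖k‖ = ρ := kk_norm hr
  have hfC : (f : ℂ) ≠ 0 := by exact_mod_cast hf.ne'
  set δ1 := f / r with hδ1
  set δ2 := f / (r * ρ) with hδ2
  have hδ1p : 0 < δ1 := by positivity
  have hδ2p : 0 < δ2 := by positivity
  have hκ2 := pow_pos hκ 2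
  have hκ3 := pow_pos hκ 3
  have pr : ∀ x y : ℝ, 0 < x → 0 < y → 0 < x * y := fun x y => mul_pos
  have q1 := pr _ _ hκ hδ1p
  have q2 := pr _ _ hκ hδ2p
  have q3 := pr _ _ hκ2 hδ1p
  have q4 := pr _ _ hκ2 hδ2p
  have q5 := pr _ _ hκ3 hδ1p
  have q6 := pr _ _ hκ3 hδ2p
  set h : ℂ := κ * f / k ^ 2 with hh
  have hhn : ‖h‖ = κ * δ1 := by
    rw [hh, norm_div, norm_mul, norm_pow, hkn, Complex.norm_real, Complex.norm_real, Real.norm_of_nonneg hκ.le,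
      Real.norm_of_nonneg hf.le, hδ1, ← hrρ]; ring
  have hh1 : ‖h‖ ≤ 1 / 100 := by rw [hhn]; nlinarith
  have hhm : ‖-h‖ ≤ 1 / 100 := by rwa [norm_neg]
  obtain ⟨A1, A2⟩ := exp_log_pair hh1
  obtain ⟨B1, B2⟩ := exp_log_pair hhm
  set A := Complex.exp (3 / 2 * Complex.log (1 + h)) with hA
  set B := Complex.exp (3 / 2 * Complex.log (1 + -h)) with hB
  obtain ⟨S1, S2⟩ := sqrt_pair A1 (by rw [B1]; ring) A2 B2 hh1
  set e : ℂ := k ^ 3 / (3 * f) * (A - B - 3 * h) with he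
  have hen : ‖e‖ ≤ 7 * κ ^ 3 * δ2 := by
    rw [he, norm_mul, norm_div, norm_pow, hkn, norm_mul, Complex.norm_real, Real.norm_of_nonneg hf.le]
    norm_num
    calc ρ ^ 3 / (3 * f) * ‖A - B - 3 * h‖ ≤ ρ ^ 3 / (3 * f) * (20 * ‖h‖ ^ 3) := by gcongr
      _ = 20 / 3 * κ ^ 3 * δ2 * f := by
          rw [hhn, hδ1, hδ2, hrρ]; field_simp
      _ ≤ 7 * κ ^ 3 * δ2 * 1 := by gcongr; norm_num
      _ = _ := by ring
  have hen1 : ‖e‖ ≤ 1 := by nlinarith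
  have Tp : ∀ p : ℂ, p = Complex.I * (k ^ 3 / (3 * f) * (A + B)) →
      Complex.I * (2 / (3 * f) * k ^ 3 * A) = p + Complex.I * κ * k + Complex.I * e := by
    intro p hp; rw [hp, he, hh]; field_simp; ring
  have Tm : ∀ p : ℂ, p = Complex.I * (k ^ 3 / (3 * f) * (A + B)) →
      Complex.I * (2 / (3 * f) * k ^ 3 * B) = p - Complex.I * κ * k - Complex.I * e := by
    intro p hp; rw [hp, he, hh]; field_simp; ring
  refine ⟨Complex.I * (k ^ 3 / (3 * f) * (A + B)), ?_, ?_⟩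
  · have e1 : 2 * (Complex.I * (k ^ 3 / (3 * f) * (A + B))).re + 4 / (3 * f) * (r * ρ) * Real.sin (3 * θ / 2)
        = (Complex.I * (k ^ 3 * (2 / (3 * f)) * (A + B - 2))).re := by
      have e2 : (Complex.I * k ^ 3).re = - (r * ρ * Real.sin (3 * θ / 2)) := by
        rw [hk, kk_cube hr, Complex.I_mul_re, Complex.im_ofReal_mul, Complex.exp_ofReal_mul_I_im]
      have e3 : Complex.I * (k ^ 3 * (2 / (3 * f)) * (A + B - 2))
        = ((2 : ℝ) : ℂ) * (Complex.I * (k ^ 3 / (3 * f) * (A + B))) - ((4 / (3 * f) : ℝ) : ℂ) * (Complex.I * k ^ 3) := by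
        push_cast; field_simp; ring
      rw [e3, Complex.sub_re, Complex.re_ofReal_mul, Complex.re_ofReal_mul, e2]; ring
    rw [e1]
    refine (Complex.abs_re_le_norm _).trans ?_
    rw [norm_mul, norm_mul, norm_mul, norm_div, norm_pow, hkn, norm_mul, Complex.norm_real, Real.norm_of_nonneg hf.le]
    norm_num
    calc ρ ^ 3 * (2 / (3 * f)) * ‖A + B - 2‖ ≤ ρ ^ 3 * (2 / (3 * f)) * (6 * ‖h‖ ^ 2) := by gcongr
      _ = 4 * κ ^ 2 * (f / ρ) := by rw [hhn, hδ1, hrρ]; field_simp; norm_num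
      _ ≤ _ := by
        have : 0 < f / ρ := by positivity
        gcongr
        · norm_num
        · linarith
  · intro τ s hτ hs hexp
    have hsI : ‖(s : ℂ) * Complex.I * e‖ = ‖e‖ := by
      rw [norm_mul, norm_mul, Complex.norm_real, Real.norm_eq_abs, hs]; simp
    constructor
    · obtain ⟨ε, hε, hAi⟩ := pt_asym (f := f) (r := r) (θ := θ) (τ := τ) hf hr hh1 hτ
      rw [hhn] at hε
      rw [← hρ, ← hδ2] at hε
      have hε1 : ‖ε‖ ≤ 1 := by nlinarith
      refine ⟨Complex.exp (s * Complex.I * e) * (1 + ε) - 1, ?_, ?_⟩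
      · refine (exp_one_add (by rw [hsI]; exact hen1) hε1).trans ?_
        rw [hsI]; nlinarith
      · rw [← hk, ← hA, hexp] at hAi
        rw [show k ^ 2 + κ * f = k ^ 2 * (1 + h) by rw [hh]; field_simp, hAi]
        rw [show -(-(s * Complex.I) * (2 / (3 * f) * k ^ 3 * A)) = s * (Complex.I * (2 / (3 * f) * k ^ 3 * A)) by ring,
          Tp _ rfl, show (s : ℂ) * (Complex.I * (k ^ 3 / (3 * f) * (A + B)) + Complex.I * κ * k + Complex.I * e)
           = s * (Complex.I * (k ^ 3 / (3 * f) * (A + B)) + Complex.I * κ * k) + s * Complex.I * e by ring, Complex.exp_add]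
        ring
    · obtain ⟨ε, hε, hAi⟩ := pt_asym (f := f) (r := r) (θ := θ) (τ := τ) hf hr hhm hτ
      rw [norm_neg, hhn] at hε
      rw [← hρ, ← hδ2] at hε
      have hε1 : ‖ε‖ ≤ 1 := by nlinarith
      have hsI' : ‖-((s : ℂ) * Complex.I * e)‖ = ‖e‖ := by rw [norm_neg, hsI]
      refine ⟨Complex.exp (-(s * Complex.I * e)) * (1 + ε) - 1, ?_, ?_⟩
      · refine (exp_one_add (by rw [hsI']; exact hen1) hε1).trans ?_
        rw [hsI']; nlinarith
      · rw [← hk, ← hB, hexp] at hAi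
        rw [show k ^ 2 - κ * f = k ^ 2 * (1 + -h) by rw [hh]; field_simp; ring, hAi]
        rw [show -(-(s * Complex.I) * (2 / (3 * f) * k ^ 3 * B)) = s * (Complex.I * (2 / (3 * f) * k ^ 3 * B)) by ring,
          Tm _ rfl, show (s : ℂ) * (Complex.I * (k ^ 3 / (3 * f) * (A + B)) - Complex.I * κ * k - Complex.I * e)
           = s * (Complex.I * (k ^ 3 / (3 * f) * (A + B)) - Complex.I * κ * k) + -(s * Complex.I * e) by ring, Complex.exp_add]
        ring

noncomputable def MainB (X E e1 e2 e3 e4 : ℂ) : ℂ :=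
  E ^ 2 * (1 + e1) ^ 2 + (E⁻¹) ^ 2 * (1 + e2) ^ 2
    - X * (1 + e1) * (1 + e2) * ((E⁻¹) ^ 2 * (1 + e2) * (1 + e3) - E ^ 2 * (1 + e1) * (1 + e4))
noncomputable def RestAC (X E e1 e2 e3 e4 : ℂ) : ℂ :=
  1 + X * ((1 + e2) * (1 + e4) + (1 + e1) * (1 + e3))
    + X ^ 2 * ((1 + e1) * (1 + e2) * (1 + e3) * (1 + e4) - ((E⁻¹) ^ 2 * (1 + e2) * (1 + e3)) ^ 2)
noncomputable def RestBC (X E e1 e2 e3 e4 : ℂ) : ℂ :=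
  1 - X * ((1 + e2) * (1 + e4) + (1 + e1) * (1 + e3))
    + X ^ 2 * ((1 + e1) * (1 + e2) * (1 + e3) * (1 + e4) - (E ^ 2 * (1 + e1) * (1 + e4)) ^ 2)
noncomputable def XX (η r θ : ℝ) : ℂ := -Complex.I / (2 * η * kk r θ)

lemma ωc_sq : ωc ^ 2 = Complex.exp (4 * π * Complex.I / 3) := by
  rw [ωc, ← Complex.exp_nat_mul]; congr 1; push_cast; ring

lemma exp_tauA2 : Complex.exp (2 * (((π / 2 : ℝ) : ℂ) * Complex.I)) = -1 := by
  rw [← Complex.exp_pi_mul_I]; congr 1; push_cast; ring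
lemma exp_tauC2 : Complex.exp (2 * (((π / 6 : ℝ) : ℂ) * Complex.I)) = -ωc ^ 2 := by
  rw [ωc_sq, neg_eq_neg_one_mul, ← Complex.exp_neg_pi_mul_I, ← Complex.exp_add]; congr 1; push_cast; ring
lemma exp_tauB2 : Complex.exp (2 * (((-(π / 6) : ℝ) : ℂ) * Complex.I)) = -ωc := by
  rw [neg_ωc]; congr 1; push_cast; ring
lemma exp_half_pi : Complex.exp ((π : ℂ) / 2 * Complex.I) = Complex.I := Complex.exp_pi_div_two_mul_I
lemma exp_tauA3 : Complex.exp (3 * (((π / 2 : ℝ) : ℂ) * Complex.I)) = -(((1 : ℝ) : ℂ) * Complex.I) := by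
  rw [show 3 * (((π / 2 : ℝ) : ℂ) * Complex.I) = π * Complex.I + (π : ℂ) / 2 * Complex.I by push_cast; ring,
    Complex.exp_add, Complex.exp_pi_mul_I, exp_half_pi]; simp
lemma exp_tauC3 : Complex.exp (3 * (((π / 6 : ℝ) : ℂ) * Complex.I)) = -(((-1 : ℝ) : ℂ) * Complex.I) := by
  rw [show 3 * (((π / 6 : ℝ) : ℂ) * Complex.I) = (π : ℂ) / 2 * Complex.I by push_cast; ring, exp_half_pi]; simp
lemma exp_tauB3 : Complex.exp (3 * (((-(π / 6) : ℝ) : ℂ) * Complex.I)) = -(((1 : ℝ) : ℂ) * Complex.I) := by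
  rw [show 3 * (((-(π / 6) : ℝ) : ℂ) * Complex.I) = -(π * Complex.I) + (π : ℂ) / 2 * Complex.I by push_cast; ring,
    Complex.exp_add, Complex.exp_neg_pi_mul_I, exp_half_pi]; simp

lemma cc_ne (f r θ τ : ℝ) : cc f r θ τ ≠ 0 := by
  unfold cc
  have : (0 : ℝ) < 2 * Real.sqrt π := by positivity
  exact div_ne_zero (Complex.exp_ne_zero _) (by exact_mod_cast this.ne')

lemma cc_shift (f r θ τ τ' : ℝ) : cc f r θ τ' = cc f r θ τ * Complex.exp (((τ - τ') / 2 : ℝ) * Complex.I) := by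
  unfold cc
  rw [div_mul_eq_mul_div, ← Complex.exp_add]
  congr 2; push_cast; ring

lemma cc_C (f r θ : ℝ) : ωc ^ 2 * cc f r θ (π / 6) = -Complex.I * cc f r θ (π / 2) := by
  rw [cc_shift f r θ (π / 2) (π / 6), ωc_sq]
  have : Complex.exp (4 * π * Complex.I / 3) * Complex.exp (((π / 2 - π / 6) / 2 : ℝ) * Complex.I) = -Complex.I := by
    rw [← Complex.exp_add, show (4 * π * Complex.I / 3 + ((π / 2 - π / 6) / 2 : ℝ) * Complex.I : ℂ)
      = π * Complex.I + (π : ℂ) / 2 * Complex.I by push_cast; ring, Complex.exp_add, Complex.exp_pi_mul_I, exp_half_pi]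
    ring
  linear_combination cc f r θ (π / 2) * this

lemma cc_B (f r θ : ℝ) : cc f r θ (-(π / 6)) = -ωc ^ 2 * cc f r θ (π / 2) := by
  rw [cc_shift f r θ (π / 2) (-(π / 6)), ← exp_tauC2, mul_comm]
  congr 2; push_cast; ring

lemma cc_W {f r θ : ℝ} (hf : 0 < f) : Wf f = -ωc ^ 2 * cc f r θ (π / 2) ^ 2 * (2 * kk r θ) := by
  have hsp : (Real.sqrt π : ℂ) ^ 2 = π := by rw [← Complex.ofReal_pow, Real.sq_sqrt Real.pi_pos.le]
  have hpi : (π : ℂ) ≠ 0 := by exact_mod_cast Real.pi_ne_zero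
  have e1 : cc f r θ (π / 2) ^ 2 = Complex.exp (-(((π / 2 : ℝ) : ℂ) * Complex.I + lam r θ - (Real.log f / 3 : ℝ))) / (4 * π) := by
    unfold cc
    rw [div_pow, ← Complex.exp_nat_mul]
    congr 1
    · congr 1; push_cast; ring
    · push_cast; rw [mul_pow, hsp]; norm_num
  have e2 : ((f ^ ((1 : ℝ) / 3) : ℝ) : ℂ) = Complex.exp ((Real.log f / 3 : ℝ) : ℂ) := by
    rw [Real.rpow_def_of_pos hf, Complex.ofReal_exp]; congr 2; ring
  rw [e1, Wf, e2, ← exp_tauC2, kk, ← Complex.exp_add]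
  rw [show Complex.exp (2 * (((π / 6 : ℝ) : ℂ) * Complex.I)) * (Complex.exp (-(((π / 2 : ℝ) : ℂ) * Complex.I + lam r θ - (Real.log f / 3 : ℝ))) / (4 * π)) * (2 * Complex.exp (lam r θ))
    = (Complex.exp (2 * (((π / 6 : ℝ) : ℂ) * Complex.I)) * Complex.exp (-(((π / 2 : ℝ) : ℂ) * Complex.I + lam r θ - (Real.log f / 3 : ℝ))) * Complex.exp (lam r θ)) / (2 * π) by field_simp; ring,
    ← Complex.exp_add, ← Complex.exp_add]
  congr 2; push_cast; ring

lemma Df_alg {κ η f r θ : ℝ} (hf : 0 < f) (hη : 0 < η) {ap am bp bm : ℂ}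
    (hAp : Ai (-(kk r θ ^ 2 + κ * f) * ((f ^ (-(2 : ℝ) / 3) : ℝ) : ℂ)) = cc f r θ (π / 2) * ap)
    (hAm : Ai (-(kk r θ ^ 2 - κ * f) * ((f ^ (-(2 : ℝ) / 3) : ℝ) : ℂ)) = cc f r θ (π / 2) * am)
    (hBp : Ai (-ωc * (kk r θ ^ 2 + κ * f) * ((f ^ (-(2 : ℝ) / 3) : ℝ) : ℂ)) = -ωc ^ 2 * cc f r θ (π / 2) * bp)
    (hBm : Ai (-ωc * (kk r θ ^ 2 - κ * f) * ((f ^ (-(2 : ℝ) / 3) : ℝ) : ℂ)) = -ωc ^ 2 * cc f r θ (π / 2) * bm) :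
    Df κ η f (kk r θ ^ 2) = 1 + Complex.I * XX η r θ * (bm * am + bp * ap)
      - XX η r θ ^ 2 * (bp * am * (bm * ap - bp * am)) := by
  have hk := kk_ne r θ
  have hη' : (η : ℂ) ≠ 0 := by exact_mod_cast hη.ne'
  have hω : ωc ≠ 0 := Complex.exp_ne_zero _
  have hc := cc_ne f r θ (π / 2)
  unfold Df alphaP alphaM betaP betaM
  rw [hAp, hAm, hBp, hBm, cc_W (r := r) (θ := θ) hf]
  have hY : Complex.I * XX η r θ = 1 / (2 * η * kk r θ) := by
    unfold XX
    rw [show Complex.I * (-Complex.I / (2 * η * kk r θ)) = -(Complex.I * Complex.I) / (2 * η * kk r θ) by ring, Complex.I_mul_I]; ring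
  have hX2 : XX η r θ ^ 2 = -(1 / (2 * η * kk r θ)) ^ 2 := by
    rw [← hY, mul_pow, Complex.I_sq]; ring
  rw [hY, hX2]
  field_simp
  ring

lemma D_forms (κ : ℝ) (hκ : 0 < κ) : ∃ C : ℝ, 1 ≤ C ∧ ∀ f r θ : ℝ, 0 < f → f ≤ 1 → 0 < r →
    C * (f / r + f / (r * Real.sqrt r)) ≤ 1 → ∃ p : ℂ,
      |2 * p.re + 4 / (3 * f) * (r * Real.sqrt r) * Real.sin (3 * θ / 2)| ≤ C * (f / Real.sqrt r) ∧
      (-π ≤ θ → θ ≤ -(π / 3) → ∃ e1 e2 e3 e4 : ℂ, ‖e1‖ ≤ C * (f / r + f / (r * Real.sqrt r)) ∧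
        ‖e2‖ ≤ C * (f / r + f / (r * Real.sqrt r)) ∧ ‖e3‖ ≤ C * (f / r + f / (r * Real.sqrt r)) ∧
        ‖e4‖ ≤ C * (f / r + f / (r * Real.sqrt r)) ∧ ∀ η : ℝ, 0 < η →
          Df κ η f (kk r θ ^ 2) = Complex.I * XX η r θ * Complex.exp (2 * p) *
            MainB (XX η r θ) (Complex.exp (Complex.I * κ * kk r θ)) e1 e2 e3 e4
            + RestAC (XX η r θ) (Complex.exp (Complex.I * κ * kk r θ)) e1 e2 e3 e4) ∧
      (-(π / 3) ≤ θ → θ ≤ 0 → ∃ e1 e2 e3 e4 : ℂ, ‖e1‖ ≤ C * (f / r + f / (r * Real.sqrt r)) ∧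
        ‖e2‖ ≤ C * (f / r + f / (r * Real.sqrt r)) ∧ ‖e3‖ ≤ C * (f / r + f / (r * Real.sqrt r)) ∧
        ‖e4‖ ≤ C * (f / r + f / (r * Real.sqrt r)) ∧ ∀ η : ℝ, 0 < η →
          Df κ η f (kk r θ ^ 2) = Complex.I * XX η r θ * Complex.exp (2 * p) *
            MainB (XX η r θ) (Complex.exp (Complex.I * κ * kk r θ)) e1 e2 e3 e4
            + RestBC (XX η r θ) (Complex.exp (Complex.I * κ * kk r θ)) e1 e2 e3 e4) := by
  obtain ⟨C, hC1, hC⟩ := pair_asym κ hκ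
  refine ⟨C, hC1, fun f r θ hf hf1 hr hδ => ?_⟩
  obtain ⟨p, hp, H⟩ := hC f r θ hf hf1 hr hδ
  have hpi := Real.pi_pos
  have hω : ωc ≠ 0 := Complex.exp_ne_zero _
  have hc := cc_ne f r θ (π / 2)
  have hcC := cc_C f r θ
  set k := kk r θ with hk
  set q : ℂ := ((f ^ (-(2 : ℝ) / 3) : ℝ) : ℂ) with hq
  set P := Complex.exp p with hP
  set E := Complex.exp (Complex.I * κ * k) with hE
  have hP0 : P ≠ 0 := Complex.exp_ne_zero _
  have hE0 : E ≠ 0 := Complex.exp_ne_zero _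
  have x1 : Complex.exp (((1 : ℝ) : ℂ) * (p + Complex.I * κ * k)) = P * E := by
    rw [Complex.ofReal_one, one_mul, Complex.exp_add]
  have x2 : Complex.exp (((1 : ℝ) : ℂ) * (p - Complex.I * κ * k)) = P * E⁻¹ := by
    rw [Complex.ofReal_one, one_mul, Complex.exp_sub, div_eq_mul_inv]
  have x3 : Complex.exp (((-1 : ℝ) : ℂ) * (p + Complex.I * κ * k)) = P⁻¹ * E⁻¹ := by
    rw [Complex.ofReal_neg, Complex.ofReal_one, neg_one_mul, Complex.exp_neg, Complex.exp_add, mul_inv]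
  have x4 : Complex.exp (((-1 : ℝ) : ℂ) * (p - Complex.I * κ * k)) = P⁻¹ * E := by
    rw [Complex.ofReal_neg, Complex.ofReal_one, neg_one_mul, Complex.exp_neg, Complex.exp_sub, inv_div, div_eq_mul_inv, mul_comm]
  have x5 : Complex.exp (2 * p) = P ^ 2 := by rw [hP, ← Complex.exp_nat_mul]; norm_num
  refine ⟨p, hp, ?_, ?_⟩
  · intro t1 t2
    obtain ⟨⟨e1, n1, E1⟩, ⟨e2, n2, E2⟩⟩ := H (π / 2) 1 (by rw [abs_le]; constructor <;> linarith) (by norm_num) exp_tauA3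
    obtain ⟨⟨e3, n3, E3⟩, ⟨e4, n4, E4⟩⟩ := H (π / 6) (-1) (by rw [abs_le]; constructor <;> linarith) (by norm_num) exp_tauC3
    refine ⟨e1, e2, e3, e4, n1, n2, n3, n4, fun η hη => ?_⟩
    rw [exp_tauA2, x1] at E1
    rw [exp_tauA2, x2] at E2
    rw [exp_tauC2, x3] at E3
    rw [exp_tauC2, x4] at E4
    have cp := Ai_connection (-(k ^ 2 + κ * f) * q)
    have cm := Ai_connection (-(k ^ 2 - κ * f) * q)
    rw [show ωc * (-(k ^ 2 + κ * f) * q) = -ωc * (k ^ 2 + κ * f) * q by ring,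
      show ωc ^ 2 * (-(k ^ 2 + κ * f) * q) = -ωc ^ 2 * (k ^ 2 + κ * f) * q by ring, E3,
      show -(k ^ 2 + κ * f) * q = -1 * (k ^ 2 + κ * f) * q by ring, E1] at cp
    rw [show ωc * (-(k ^ 2 - κ * f) * q) = -ωc * (k ^ 2 - κ * f) * q by ring,
      show ωc ^ 2 * (-(k ^ 2 - κ * f) * q) = -ωc ^ 2 * (k ^ 2 - κ * f) * q by ring, E4,
      show -(k ^ 2 - κ * f) * q = -1 * (k ^ 2 - κ * f) * q by ring, E2] at cm
    rw [neg_one_mul] at E1 E2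
    have := Df_alg (κ := κ) (η := η) (f := f) (r := r) (θ := θ) (ap := P * E * (1 + e1)) (am := P * E⁻¹ * (1 + e2))
      (bp := P * E * (1 + e1) - Complex.I * (P⁻¹ * E⁻¹ * (1 + e3)))
      (bm := P * E⁻¹ * (1 + e2) - Complex.I * (P⁻¹ * E * (1 + e4))) hf hη
      (by rw [← hk, ← hq, E1]; ring) (by rw [← hk, ← hq, E2]; ring)
      (by
        rw [← hk, ← hq]
        apply mul_left_cancel₀ hω
        linear_combination cp - (P⁻¹ * E⁻¹ * (1 + e3)) * hcC
          + cc f r θ (π / 2) * (P * E * (1 + e1) - Complex.I * (P⁻¹ * E⁻¹ * (1 + e3))) * ωc_cube)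
      (by
        rw [← hk, ← hq]
        apply mul_left_cancel₀ hω
        linear_combination cm - (P⁻¹ * E * (1 + e4)) * hcC
          + cc f r θ (π / 2) * (P * E⁻¹ * (1 + e2) - Complex.I * (P⁻¹ * E * (1 + e4))) * ωc_cube)
    rw [← hk] at this
    rw [this, x5, MainB, RestAC]
    have hI := Complex.I_sq
    generalize XX η r θ = X
    field_simp
    linear_combination (-X*E^4*((1+e2)*(1+e4)+(1+e1)*(1+e3)) - X^2*E^4*(1+e1)*(1+e2)*(1+e3)*(1+e4) + X^2*(1+e2)^2*(1+e3)^2) * hI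
  · intro t1 t2
    obtain ⟨⟨e1, n1, E1⟩, ⟨e2, n2, E2⟩⟩ := H (-(π / 6)) 1 (by rw [abs_le]; constructor <;> linarith) (by norm_num) exp_tauB3
    obtain ⟨⟨e3, n3, E3⟩, ⟨e4, n4, E4⟩⟩ := H (π / 6) (-1) (by rw [abs_le]; constructor <;> linarith) (by norm_num) exp_tauC3
    refine ⟨e1, e2, e3, e4, n1, n2, n3, n4, fun η hη => ?_⟩
    rw [exp_tauB2, x1, cc_B] at E1
    rw [exp_tauB2, x2, cc_B] at E2
    rw [exp_tauC2, x3] at E3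
    rw [exp_tauC2, x4] at E4
    have cp := Ai_connection (-(k ^ 2 + κ * f) * q)
    have cm := Ai_connection (-(k ^ 2 - κ * f) * q)
    rw [show ωc * (-(k ^ 2 + κ * f) * q) = -ωc * (k ^ 2 + κ * f) * q by ring,
      show ωc ^ 2 * (-(k ^ 2 + κ * f) * q) = -ωc ^ 2 * (k ^ 2 + κ * f) * q by ring, E3, E1] at cp
    rw [show ωc * (-(k ^ 2 - κ * f) * q) = -ωc * (k ^ 2 - κ * f) * q by ring,
      show ωc ^ 2 * (-(k ^ 2 - κ * f) * q) = -ωc ^ 2 * (k ^ 2 - κ * f) * q by ring, E4, E2] at cm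
    have := Df_alg (κ := κ) (η := η) (f := f) (r := r) (θ := θ) (bp := P * E * (1 + e1)) (bm := P * E⁻¹ * (1 + e2))
      (ap := P * E * (1 + e1) + Complex.I * (P⁻¹ * E⁻¹ * (1 + e3)))
      (am := P * E⁻¹ * (1 + e2) + Complex.I * (P⁻¹ * E * (1 + e4))) hf hη
      (by
        rw [← hk, ← hq]
        linear_combination cp - (P⁻¹ * E⁻¹ * (1 + e3)) * hcC
          + cc f r θ (π / 2) * (P * E * (1 + e1)) * ωc_cube)
      (by
        rw [← hk, ← hq]
        linear_combination cm - (P⁻¹ * E * (1 + e4)) * hcC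
          + cc f r θ (π / 2) * (P * E⁻¹ * (1 + e2)) * ωc_cube)
      (by rw [← hk, ← hq, E1]; ring) (by rw [← hk, ← hq, E2]; ring)
    rw [← hk] at this
    rw [this, x5, MainB, RestBC]
    have hI := Complex.I_sq
    generalize XX η r θ = X
    field_simp
    linear_combination (X*E^2*((1+e2)*(1+e4)+(1+e1)*(1+e3)) - X^2*E^2*(1+e1)*(1+e2)*(1+e3)*(1+e4) + X^2*E^6*(1+e1)^2*(1+e4)^2) * hI

lemma near_mul {u v : ℂ} {A B : ℝ} (hu : ‖u - 1‖ ≤ A) (hv : ‖v - 1‖ ≤ B) :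
    ‖u * v - 1‖ ≤ A + B + A * B := by
  have h0 := norm_nonneg (u - 1)
  have h1 := norm_nonneg (v - 1)
  calc ‖u * v - 1‖ = ‖(u - 1) + (v - 1) + (u - 1) * (v - 1)‖ := by congr 1; ring
    _ ≤ ‖u - 1‖ + ‖v - 1‖ + ‖(u - 1) * (v - 1)‖ := norm_add₃_le
    _ ≤ _ := by rw [norm_mul]; gcongr; exact h0.trans hu

lemma near_mul2 {a b : ℂ} {d : ℝ} (hd : d ≤ 1) (ha : ‖a‖ ≤ d) (hb : ‖b‖ ≤ d) :
    ‖(1 + a) * (1 + b) - 1‖ ≤ 3 * d := by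
  have h0 := (norm_nonneg a).trans ha
  have := near_mul (u := 1 + a) (v := 1 + b) (A := d) (B := d) (by simpa using ha) (by simpa using hb)
  nlinarith

lemma near_mul4 {a b c e : ℂ} {d : ℝ} (hd : d ≤ 1) (ha : ‖a‖ ≤ d) (hb : ‖b‖ ≤ d) (hc : ‖c‖ ≤ d) (he : ‖e‖ ≤ d) :
    ‖(1 + a) * (1 + b) * ((1 + c) * (1 + e)) - 1‖ ≤ 15 * d := by
  have h0 := (norm_nonneg a).trans ha
  have := near_mul (near_mul2 hd ha hb) (near_mul2 hd hc he)
  nlinarith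

section
variable {X E e1 e2 e3 e4 : ℂ} {d S y : ℝ}

lemma MainB_err (hd : d ≤ 1) (h1 : ‖e1‖ ≤ d) (h2 : ‖e2‖ ≤ d) (h3 : ‖e3‖ ≤ d) (h4 : ‖e4‖ ≤ d)
    (hX : ‖X‖ = S) (hy : 0 ≤ y) (hE : ‖E ^ 2‖ = Real.exp y) :
    ‖MainB X E e1 e2 e3 e4 - (E ^ 2 * (1 + X) + (E⁻¹) ^ 2 * (1 - X))‖ ≤ 30 * d * (1 + S) * Real.exp y := by
  have hd0 := (norm_nonneg e1).trans h1
  have hS : 0 ≤ S := hX ▸ norm_nonneg X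
  have hEi : ‖(E⁻¹) ^ 2‖ ≤ Real.exp y := by
    rw [inv_pow, norm_inv, hE, ← Real.exp_neg]; exact Real.exp_le_exp.2 (by linarith)
  have a1 := near_mul2 hd h1 h1
  have a2 := near_mul2 hd h2 h2
  have a3 := near_mul4 hd h1 h2 h2 h3
  have a4 := near_mul4 hd h1 h2 h1 h4
  have key : MainB X E e1 e2 e3 e4 - (E ^ 2 * (1 + X) + (E⁻¹) ^ 2 * (1 - X))
    = (E ^ 2 * ((1 + e1) * (1 + e1) - 1) + (E⁻¹) ^ 2 * ((1 + e2) * (1 + e2) - 1))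
      + (-(X * (E⁻¹) ^ 2 * ((1 + e1) * (1 + e2) * ((1 + e2) * (1 + e3)) - 1))
      + X * E ^ 2 * ((1 + e1) * (1 + e2) * ((1 + e1) * (1 + e4)) - 1)) := by
    unfold MainB; ring
  rw [key]
  have b1 : ‖E ^ 2 * ((1 + e1) * (1 + e1) - 1)‖ ≤ Real.exp y * (3 * d) := by
    rw [norm_mul, hE]; gcongr
  have b2 : ‖(E⁻¹) ^ 2 * ((1 + e2) * (1 + e2) - 1)‖ ≤ Real.exp y * (3 * d) := by
    rw [norm_mul]; gcongr
  have b3 : ‖-(X * (E⁻¹) ^ 2 * ((1 + e1) * (1 + e2) * ((1 + e2) * (1 + e3)) - 1))‖ ≤ S * Real.exp y * (15 * d) := by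
    rw [norm_neg, norm_mul, norm_mul, hX]; gcongr
  have b4 : ‖X * E ^ 2 * ((1 + e1) * (1 + e2) * ((1 + e1) * (1 + e4)) - 1)‖ ≤ S * Real.exp y * (15 * d) := by
    rw [norm_mul, norm_mul, hX, hE]; gcongr
  have hdy : 0 ≤ d * Real.exp y := mul_nonneg hd0 (Real.exp_pos y).le
  refine (norm_add_le _ _).trans ?_
  have := norm_add_le (E ^ 2 * ((1 + e1) * (1 + e1) - 1)) ((E⁻¹) ^ 2 * ((1 + e2) * (1 + e2) - 1))
  have := norm_add_le (-(X * (E⁻¹) ^ 2 * ((1 + e1) * (1 + e2) * ((1 + e2) * (1 + e3)) - 1))) (X * E ^ 2 * ((1 + e1) * (1 + e2) * ((1 + e1) * (1 + e4)) - 1))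
  nlinarith

lemma MainB_le (hd : d ≤ 1) (h1 : ‖e1‖ ≤ d) (h2 : ‖e2‖ ≤ d) (h3 : ‖e3‖ ≤ d) (h4 : ‖e4‖ ≤ d)
    (hX : ‖X‖ = S) (hy : 0 ≤ y) (hE : ‖E ^ 2‖ = Real.exp y) :
    ‖MainB X E e1 e2 e3 e4‖ ≤ 32 * (1 + S) * Real.exp y := by
  have hd0 := (norm_nonneg e1).trans h1
  have hS : 0 ≤ S := hX ▸ norm_nonneg X
  have hEi : ‖(E⁻¹) ^ 2‖ ≤ Real.exp y := by
    rw [inv_pow, norm_inv, hE, ← Real.exp_neg]; exact Real.exp_le_exp.2 (by linarith)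
  have h := MainB_err hd h1 h2 h3 h4 hX hy hE
  have hp : ‖1 + X‖ ≤ 1 + S := (norm_add_le _ _).trans (by simp [hX])
  have hm : ‖1 - X‖ ≤ 1 + S := (norm_sub_le _ _).trans (by simp [hX])
  have b : ‖E ^ 2 * (1 + X) + (E⁻¹) ^ 2 * (1 - X)‖ ≤ Real.exp y * (1 + S) + Real.exp y * (1 + S) := by
    refine (norm_add_le _ _).trans ?_
    rw [norm_mul, norm_mul, hE]; gcongr
  have t : ‖MainB X E e1 e2 e3 e4‖ ≤ ‖MainB X E e1 e2 e3 e4 - (E ^ 2 * (1 + X) + (E⁻¹) ^ 2 * (1 - X))‖ + ‖E ^ 2 * (1 + X) + (E⁻¹) ^ 2 * (1 - X)‖ := by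
    have := norm_add_le (MainB X E e1 e2 e3 e4 - (E ^ 2 * (1 + X) + (E⁻¹) ^ 2 * (1 - X))) (E ^ 2 * (1 + X) + (E⁻¹) ^ 2 * (1 - X))
    rwa [sub_add_cancel] at this
  have : 30 * d * (1 + S) * Real.exp y ≤ 30 * 1 * (1 + S) * Real.exp y := by gcongr
  linarith

lemma near_norm {u : ℂ} {A : ℝ} (h : ‖u - 1‖ ≤ A) : ‖u‖ ≤ 1 + A := by
  have := norm_add_le (u - 1) 1
  simp at this; linarith

lemma RestBC_le (hd : d ≤ 1) (h1 : ‖e1‖ ≤ d) (h2 : ‖e2‖ ≤ d) (h3 : ‖e3‖ ≤ d) (h4 : ‖e4‖ ≤ d)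
    (hX : ‖X‖ = S) (hy : 0 ≤ y) (hE : ‖E ^ 2‖ = Real.exp y) :
    ‖RestBC X E e1 e2 e3 e4‖ ≤ 32 * (1 + S) ^ 2 * Real.exp y ^ 2 := by
  have hd0 := (norm_nonneg e1).trans h1
  have hS : 0 ≤ S := hX ▸ norm_nonneg X
  have hy1 : 1 ≤ Real.exp y := Real.one_le_exp hy
  have key : RestBC X E e1 e2 e3 e4 = 1 - X * ((1 + e2) * (1 + e4)) - X * ((1 + e1) * (1 + e3))
     + X ^ 2 * ((1 + e1) * (1 + e2) * ((1 + e3) * (1 + e4))) - X ^ 2 * ((E ^ 2) ^ 2 * ((1 + e1) * (1 + e4) * ((1 + e1) * (1 + e4)))) := by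
    unfold RestBC; ring
  have a1 : ‖X * ((1 + e2) * (1 + e4))‖ ≤ S * (1 + 3 * 1) := by
    rw [norm_mul, hX]; gcongr; exact (near_norm (near_mul2 hd h2 h4)).trans (by linarith)
  have a2 : ‖X * ((1 + e1) * (1 + e3))‖ ≤ S * (1 + 3 * 1) := by
    rw [norm_mul, hX]; gcongr; exact (near_norm (near_mul2 hd h1 h3)).trans (by linarith)
  have a3 : ‖X ^ 2 * ((1 + e1) * (1 + e2) * ((1 + e3) * (1 + e4)))‖ ≤ S ^ 2 * 16 := by
    rw [norm_mul, norm_pow, hX]; gcongr; exact (near_norm (near_mul4 hd h1 h2 h3 h4)).trans (by linarith)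
  have a4 : ‖X ^ 2 * ((E ^ 2) ^ 2 * ((1 + e1) * (1 + e4) * ((1 + e1) * (1 + e4))))‖ ≤ S ^ 2 * (Real.exp y ^ 2 * 16) := by
    rw [norm_mul, norm_mul, norm_pow, norm_pow, hX, hE]; gcongr; exact (near_norm (near_mul4 hd h1 h4 h1 h4)).trans (by linarith)
  rw [key]
  have t1 := norm_sub_le (1 - X * ((1 + e2) * (1 + e4)) - X * ((1 + e1) * (1 + e3))
     + X ^ 2 * ((1 + e1) * (1 + e2) * ((1 + e3) * (1 + e4)))) (X ^ 2 * ((E ^ 2) ^ 2 * ((1 + e1) * (1 + e4) * ((1 + e1) * (1 + e4)))))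
  have t2 := norm_add_le (1 - X * ((1 + e2) * (1 + e4)) - X * ((1 + e1) * (1 + e3)))
     (X ^ 2 * ((1 + e1) * (1 + e2) * ((1 + e3) * (1 + e4))))
  have t3 := norm_sub_le (1 - X * ((1 + e2) * (1 + e4))) (X * ((1 + e1) * (1 + e3)))
  have t4 := norm_sub_le 1 (X * ((1 + e2) * (1 + e4)))
  rw [norm_one] at t4
  have hy2 : 1 ≤ Real.exp y ^ 2 := one_le_pow₀ hy1
  have : 1 + 8 * S + 16 * S ^ 2 ≤ (1 + 8 * S + 16 * S ^ 2) * Real.exp y ^ 2 := le_mul_of_one_le_right (by positivity) hy2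
  have : (1 + 8 * S + 32 * S ^ 2) * Real.exp y ^ 2 ≤ 32 * (1 + S) ^ 2 * Real.exp y ^ 2 := by
    gcongr; nlinarith
  linarith

lemma RestAC_le (hd : d ≤ 1) (h1 : ‖e1‖ ≤ d) (h2 : ‖e2‖ ≤ d) (h3 : ‖e3‖ ≤ d) (h4 : ‖e4‖ ≤ d)
    (hX : ‖X‖ = S) (hy : 0 ≤ y) (hE : ‖E ^ 2‖ = Real.exp y) :
    ‖RestAC X E e1 e2 e3 e4‖ ≤ 32 * (1 + S) ^ 2 := by
  have hd0 := (norm_nonneg e1).trans h1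
  have hS : 0 ≤ S := hX ▸ norm_nonneg X
  have hy1 : 1 ≤ Real.exp y := Real.one_le_exp hy
  have hEi : ‖(E⁻¹) ^ 2‖ ≤ 1 := by
    rw [inv_pow, norm_inv, hE]; exact inv_le_one_of_one_le₀ hy1
  have key : RestAC X E e1 e2 e3 e4 = 1 + X * ((1 + e2) * (1 + e4)) + X * ((1 + e1) * (1 + e3))
     + X ^ 2 * ((1 + e1) * (1 + e2) * ((1 + e3) * (1 + e4))) - X ^ 2 * (((E⁻¹) ^ 2) ^ 2 * ((1 + e2) * (1 + e3) * ((1 + e2) * (1 + e3)))) := by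
    unfold RestAC; ring
  have a1 : ‖X * ((1 + e2) * (1 + e4))‖ ≤ S * (1 + 3 * 1) := by
    rw [norm_mul, hX]; gcongr; exact (near_norm (near_mul2 hd h2 h4)).trans (by linarith)
  have a2 : ‖X * ((1 + e1) * (1 + e3))‖ ≤ S * (1 + 3 * 1) := by
    rw [norm_mul, hX]; gcongr; exact (near_norm (near_mul2 hd h1 h3)).trans (by linarith)
  have a3 : ‖X ^ 2 * ((1 + e1) * (1 + e2) * ((1 + e3) * (1 + e4)))‖ ≤ S ^ 2 * 16 := by
    rw [norm_mul, norm_pow, hX]; gcongr; exact (near_norm (near_mul4 hd h1 h2 h3 h4)).trans (by linarith)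
  have a4 : ‖X ^ 2 * (((E⁻¹) ^ 2) ^ 2 * ((1 + e2) * (1 + e3) * ((1 + e2) * (1 + e3))))‖ ≤ S ^ 2 * (1 ^ 2 * 16) := by
    rw [norm_mul, norm_mul, norm_pow, norm_pow _ 2, hX]; gcongr; exact (near_norm (near_mul4 hd h2 h3 h2 h3)).trans (by linarith)
  rw [key]
  have t1 := norm_sub_le (1 + X * ((1 + e2) * (1 + e4)) + X * ((1 + e1) * (1 + e3))
     + X ^ 2 * ((1 + e1) * (1 + e2) * ((1 + e3) * (1 + e4)))) (X ^ 2 * (((E⁻¹) ^ 2) ^ 2 * ((1 + e2) * (1 + e3) * ((1 + e2) * (1 + e3)))))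
  have t2 := norm_add_le (1 + X * ((1 + e2) * (1 + e4)) + X * ((1 + e1) * (1 + e3)))
     (X ^ 2 * ((1 + e1) * (1 + e2) * ((1 + e3) * (1 + e4))))
  have t3 := norm_add_le (1 + X * ((1 + e2) * (1 + e4))) (X * ((1 + e1) * (1 + e3)))
  have t4 := norm_add_le 1 (X * ((1 + e2) * (1 + e4)))
  rw [norm_one] at t4
  nlinarith

lemma nsq_one_add (X : ℂ) : ‖1 + X‖ ^ 2 = 1 + 2 * X.re + ‖X‖ ^ 2 := by
  rw [Complex.sq_norm, Complex.sq_norm, Complex.normSq_apply, Complex.normSq_apply]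
  simp; ring
lemma nsq_one_sub (X : ℂ) : ‖1 - X‖ ^ 2 = 1 - 2 * X.re + ‖X‖ ^ 2 := by
  rw [Complex.sq_norm, Complex.sq_norm, Complex.normSq_apply, Complex.normSq_apply]
  simp; ring

lemma RestAC_ge (hd : d ≤ 1) (h1 : ‖e1‖ ≤ d) (h2 : ‖e2‖ ≤ d) (h3 : ‖e3‖ ≤ d) (h4 : ‖e4‖ ≤ d)
    (hX : ‖X‖ = S) (hy : 0 ≤ y) (hE : ‖E ^ 2‖ = Real.exp y) :
    1 + 2 * X.re - 30 * d * S * (1 + S) ≤ ‖RestAC X E e1 e2 e3 e4‖ := by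
  have hd0 := (norm_nonneg e1).trans h1
  have hS : 0 ≤ S := hX ▸ norm_nonneg X
  have hEi : ‖((E⁻¹) ^ 2) ^ 2‖ ≤ 1 := by
    rw [inv_pow, norm_pow, norm_inv, hE]; exact pow_le_one₀ (by positivity) (inv_le_one_of_one_le₀ (Real.one_le_exp hy))
  have key : RestAC X E e1 e2 e3 e4 = (1 + X) ^ 2 - (X ^ 2 * ((E⁻¹) ^ 2) ^ 2 - (X * ((1 + e2) * (1 + e4) - 1) + X * ((1 + e1) * (1 + e3) - 1)
     + X ^ 2 * ((1 + e1) * (1 + e2) * ((1 + e3) * (1 + e4)) - 1)) + X ^ 2 * (((E⁻¹) ^ 2) ^ 2 * ((1 + e2) * (1 + e3) * ((1 + e2) * (1 + e3)) - 1))) := by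
    unfold RestAC; ring
  have a1 : ‖X * ((1 + e2) * (1 + e4) - 1)‖ ≤ S * (3 * d) := by
    rw [norm_mul, hX]; gcongr; exact near_mul2 hd h2 h4
  have a2 : ‖X * ((1 + e1) * (1 + e3) - 1)‖ ≤ S * (3 * d) := by
    rw [norm_mul, hX]; gcongr; exact near_mul2 hd h1 h3
  have a3 : ‖X ^ 2 * ((1 + e1) * (1 + e2) * ((1 + e3) * (1 + e4)) - 1)‖ ≤ S ^ 2 * (15 * d) := by
    rw [norm_mul, norm_pow, hX]; gcongr; exact near_mul4 hd h1 h2 h3 h4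
  have a4 : ‖X ^ 2 * (((E⁻¹) ^ 2) ^ 2 * ((1 + e2) * (1 + e3) * ((1 + e2) * (1 + e3)) - 1))‖ ≤ S ^ 2 * (1 * (15 * d)) := by
    rw [norm_mul, norm_mul, norm_pow X, hX]; gcongr; exact near_mul4 hd h2 h3 h2 h3
  have a5 : ‖X ^ 2 * ((E⁻¹) ^ 2) ^ 2‖ ≤ S ^ 2 * 1 := by
    rw [norm_mul, norm_pow X, hX]; gcongr
  have a6 : ‖(1 + X) ^ 2‖ = 1 + 2 * X.re + S ^ 2 := by rw [norm_pow, nsq_one_add, hX]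
  rw [key]
  have t1 := norm_sub_norm_le ((1 + X) ^ 2) (X ^ 2 * ((E⁻¹) ^ 2) ^ 2 - (X * ((1 + e2) * (1 + e4) - 1) + X * ((1 + e1) * (1 + e3) - 1)
     + X ^ 2 * ((1 + e1) * (1 + e2) * ((1 + e3) * (1 + e4)) - 1)) + X ^ 2 * (((E⁻¹) ^ 2) ^ 2 * ((1 + e2) * (1 + e3) * ((1 + e2) * (1 + e3)) - 1)))
  have t2 := norm_add_le (X ^ 2 * ((E⁻¹) ^ 2) ^ 2 - (X * ((1 + e2) * (1 + e4) - 1) + X * ((1 + e1) * (1 + e3) - 1)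
     + X ^ 2 * ((1 + e1) * (1 + e2) * ((1 + e3) * (1 + e4)) - 1))) (X ^ 2 * (((E⁻¹) ^ 2) ^ 2 * ((1 + e2) * (1 + e3) * ((1 + e2) * (1 + e3)) - 1)))
  have t3 := norm_sub_le (X ^ 2 * ((E⁻¹) ^ 2) ^ 2) (X * ((1 + e2) * (1 + e4) - 1) + X * ((1 + e1) * (1 + e3) - 1)
     + X ^ 2 * ((1 + e1) * (1 + e2) * ((1 + e3) * (1 + e4)) - 1))
  have t4 := norm_add₃_le (a := X * ((1 + e2) * (1 + e4) - 1)) (b := X * ((1 + e1) * (1 + e3) - 1))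
     (c := X ^ 2 * ((1 + e1) * (1 + e2) * ((1 + e3) * (1 + e4)) - 1))
  have : 0 ≤ d * S := mul_nonneg hd0 hS
  nlinarith

lemma G_ge (hX : ‖X‖ = S) (hXr : 0 ≤ X.re) (hE : ‖E ^ 2‖ = Real.exp y) (hy : 0 ≤ y) :
    (1 + S) / 2 * (Real.exp y - Real.exp (-y)) ≤ ‖E ^ 2 * (1 + X) + (E⁻¹) ^ 2 * (1 - X)‖ := by
  have hS : 0 ≤ S := hX ▸ norm_nonneg X
  have hEi : ‖(E⁻¹) ^ 2‖ = Real.exp (-y) := by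
    rw [inv_pow, norm_inv, hE, ← Real.exp_neg]
  have p := nsq_one_add X
  have m := nsq_one_sub X
  rw [hX] at p m
  have hle : ‖1 - X‖ ≤ ‖1 + X‖ := by
    apply le_of_sq_le_sq _ (norm_nonneg _)
    rw [p, m]; linarith
  have hge : (1 + S) / 2 ≤ ‖1 + X‖ := by
    apply le_of_sq_le_sq _ (norm_nonneg _)
    rw [p]; nlinarith [sq_nonneg (1 - S)]
  have t : ‖E ^ 2 * (1 + X)‖ - ‖(E⁻¹) ^ 2 * (1 - X)‖ ≤ ‖E ^ 2 * (1 + X) + (E⁻¹) ^ 2 * (1 - X)‖ := by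
    have := norm_sub_norm_le (E ^ 2 * (1 + X)) (-((E⁻¹) ^ 2 * (1 - X)))
    rwa [norm_neg, sub_neg_eq_add] at this
  rw [norm_mul, norm_mul, hE, hEi] at t
  have hx : 0 ≤ Real.exp y - Real.exp (-y) := sub_nonneg.2 (Real.exp_le_exp.2 (by linarith))
  calc (1 + S) / 2 * (Real.exp y - Real.exp (-y)) ≤ ‖1 + X‖ * (Real.exp y - Real.exp (-y)) := by gcongr
    _ = Real.exp y * ‖1 + X‖ - Real.exp (-y) * ‖1 + X‖ := by ring
    _ ≤ Real.exp y * ‖1 + X‖ - Real.exp (-y) * ‖1 - X‖ := by gcongr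
    _ ≤ _ := t
end

lemma kk_im {r θ : ℝ} (hr : 0 < r) : (kk r θ).im = Real.sqrt r * Real.sin (θ / 2) := by
  rw [kk, Complex.exp_im, lam_re, lam_im, Real.exp_half, Real.exp_log hr]

lemma XX_norm {η r θ : ℝ} (hη : 0 < η) (hr : 0 < r) : ‖XX η r θ‖ = 1 / (2 * η * Real.sqrt r) := by
  rw [XX, norm_div, norm_neg, Complex.norm_I, norm_mul, norm_mul, kk_norm hr, Complex.norm_real, Real.norm_of_nonneg hη.le]
  norm_num

lemma XX_re {η r θ : ℝ} (hη : 0 < η) (hr : 0 < r) :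
    (XX η r θ).re = 1 / (2 * η * Real.sqrt r) * Real.sin (-θ / 2) := by
  have hρ : 0 < Real.sqrt r := Real.sqrt_pos.2 hr
  have h2 : Complex.normSq (kk r θ) = Real.sqrt r ^ 2 := by rw [Complex.normSq_eq_norm_sq, kk_norm hr]
  have e : XX η r θ = ((1 / (2 * η) : ℝ) : ℂ) * (-Complex.I * (kk r θ)⁻¹) := by
    unfold XX; push_cast; field_simp
  rw [e, Complex.re_ofReal_mul, Complex.mul_re, Complex.inv_re, Complex.inv_im, h2, kk_im hr]
  rw [show -θ / 2 = -(θ / 2) by ring, Real.sin_neg]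
  simp
  field_simp

lemma EE_norm {κ r θ : ℝ} (hr : 0 < r) :
    ‖Complex.exp (Complex.I * κ * kk r θ) ^ 2‖ = Real.exp (2 * κ * Real.sqrt r * Real.sin (-θ / 2)) := by
  rw [norm_pow, Complex.norm_exp, ← Real.exp_nat_mul]
  congr 1
  rw [show -θ / 2 = -(θ / 2) by ring, Real.sin_neg]
  have := kk_im (θ := θ) hr
  rw [mul_assoc, Complex.I_mul_re, Complex.im_ofReal_mul, this]
  push_cast; ring

lemma exp_quad {w : ℂ} (hw : ‖w‖ ≤ 1) : ‖Complex.exp w - 1 - w‖ ≤ ‖w‖ ^ 2 := by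
  exact Complex.norm_exp_sub_one_sub_id_le hw

lemma G_small {κ η r θ : ℝ} (hκ : 0 < κ) (hη : 0 < η) (hr : 0 < r) (h : 4 * κ * Real.sqrt r ≤ 1) :
    3 / 2 ≤ ‖Complex.exp (Complex.I * κ * kk r θ) ^ 2 * (1 + XX η r θ)
      + ((Complex.exp (Complex.I * κ * kk r θ))⁻¹) ^ 2 * (1 - XX η r θ)‖ := by
  have hρ : 0 < Real.sqrt r := Real.sqrt_pos.2 hr
  set ρ := Real.sqrt r
  set w : ℂ := 2 * (Complex.I * κ * kk r θ) with hw
  have e1 : Complex.exp (Complex.I * κ * kk r θ) ^ 2 = Complex.exp w := by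
    rw [← Complex.exp_nat_mul]; norm_num [hw]
  have e2 : ((Complex.exp (Complex.I * κ * kk r θ))⁻¹) ^ 2 = Complex.exp (-w) := by
    rw [inv_pow, e1, Complex.exp_neg]
  rw [e1, e2]
  have hwn : ‖w‖ = 2 * κ * ρ := by
    rw [hw, norm_mul, norm_mul, norm_mul, kk_norm hr, Complex.norm_real, Real.norm_of_nonneg hκ.le, Complex.norm_I]; norm_num; ring
  have hw1 : ‖w‖ ≤ 1 := by rw [hwn]; nlinarith
  have q1 := exp_quad hw1
  have q2 := exp_quad (w := -w) (by rwa [norm_neg])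
  rw [norm_neg] at q2
  have hXn := XX_norm (θ := θ) hη hr
  have hXw : XX η r θ * (2 * w) = ((2 * κ / η : ℝ) : ℂ) := by
    have hk := kk_ne r θ
    have hη' : (η : ℂ) ≠ 0 := by exact_mod_cast hη.ne'
    rw [XX, hw]; push_cast; field_simp
    rw [Complex.I_sq]; ring
  set X := XX η r θ
  have key : Complex.exp w * (1 + X) + Complex.exp (-w) * (1 - X)
    = ((2 + 2 * κ / η : ℝ) : ℂ) - (-((Complex.exp w - 1 - w) + (Complex.exp (-w) - 1 - -w)
      + X * ((Complex.exp w - 1 - w) - (Complex.exp (-w) - 1 - -w)))) := by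
    push_cast at hXw ⊢
    linear_combination hXw
  rw [key]
  refine le_trans ?_ (norm_sub_norm_le _ _)
  have hpos : 0 < κ / η := by positivity
  rw [Complex.norm_real, Real.norm_of_nonneg (by positivity), norm_neg]
  have t1 := norm_add₃_le (a := Complex.exp w - 1 - w) (b := Complex.exp (-w) - 1 - -w) (c := X * ((Complex.exp w - 1 - w) - (Complex.exp (-w) - 1 - -w)))
  have t2 : ‖X * ((Complex.exp w - 1 - w) - (Complex.exp (-w) - 1 - -w))‖ ≤ 1 / (2 * η * ρ) * (‖w‖ ^ 2 + ‖w‖ ^ 2) := by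
    rw [norm_mul, hXn]; gcongr; exact (norm_sub_le _ _).trans (add_le_add q1 q2)
  have t3 : 1 / (2 * η * ρ) * (‖w‖ ^ 2 + ‖w‖ ^ 2) = κ / η * (4 * κ * ρ) := by
    rw [hwn]; field_simp; ring
  have t4 : κ / η * (4 * κ * ρ) ≤ κ / η * 1 := by gcongr
  have t5 : ‖w‖ ^ 2 ≤ 1 / 4 := by rw [hwn]; nlinarith [mul_pos hκ hρ]
  have t6 : 2 * κ / η = 2 * (κ / η) := by ring
  linarith

lemma exp_gap {y : ℝ} (hy : 0 ≤ y) : Real.exp y * min (1 / 2) y ≤ Real.exp y - Real.exp (-y) := by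
  have h : Real.exp (-y) = Real.exp y * Real.exp (-(2 * y)) := by rw [← Real.exp_add]; congr 1; ring
  rw [h]
  have hm : min (1 / 2) y ≤ 1 - Real.exp (-(2 * y)) := by
    rw [Real.exp_neg]
    have h1 : 2 * y + 1 ≤ Real.exp (2 * y) := Real.add_one_le_exp _
    have h2 : (Real.exp (2 * y))⁻¹ ≤ (2 * y + 1)⁻¹ := inv_anti₀ (by linarith) h1
    have h3 : min (1 / 2) y ≤ 1 - (2 * y + 1)⁻¹ := by
      have e : 1 - (2 * y + 1)⁻¹ = 2 * y / (2 * y + 1) := by field_simp; ring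
      rw [e, le_div_iff₀ (by linarith)]
      rcases le_total (1 / 2) y with h | h
      · rw [min_eq_left h]; linarith
      · rw [min_eq_right h]; nlinarith
    linarith
  nlinarith [Real.exp_pos y]

/-- Lower bound for the main factor in region 1. -/
lemma MainB_ge {κ η r θ d R : ℝ} {e1 e2 e3 e4 : ℂ} (hκ : 0 < κ) (hη : 0 < η) (hr : 0 < r)
    (ht0 : θ ≤ 0) (ht1 : -π ≤ θ)
    (h1 : ‖e1‖ ≤ d) (h2 : ‖e2‖ ≤ d) (h3 : ‖e3‖ ≤ d) (h4 : ‖e4‖ ≤ d)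
    (hdS : 240 * (d * (1 + 1 / (2 * η * Real.sqrt r))) ≤ 1) (hR : 2 ≤ R)
    (hbig : 1 ≤ 4 * κ * Real.sqrt r → 120 * d ≤ 2 * κ * Real.sqrt r * Real.sin (-θ / 2) ∧
      1 / R ^ 2 ≤ 2 * κ * Real.sqrt r * Real.sin (-θ / 2)) :
    Real.exp (2 * κ * Real.sqrt r * Real.sin (-θ / 2)) * (1 / (4 * R ^ 2)) ≤
      ‖MainB (XX η r θ) (Complex.exp (Complex.I * κ * kk r θ)) e1 e2 e3 e4‖ := by
  have hρ : 0 < Real.sqrt r := Real.sqrt_pos.2 hr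
  have hs : 0 ≤ Real.sin (-θ / 2) := Real.sin_nonneg_of_nonneg_of_le_pi (by linarith) (by linarith [Real.pi_pos])
  have hd0 : 0 ≤ d := (norm_nonneg e1).trans h1
  have hS0 : 0 < 1 / (2 * η * Real.sqrt r) := by positivity
  have hX := XX_norm (θ := θ) hη hr
  have hXr := XX_re (θ := θ) hη hr
  have hE := EE_norm (κ := κ) (θ := θ) hr
  have hsm := G_small (θ := θ) hκ hη hr
  set ρ := Real.sqrt r
  set S := 1 / (2 * η * ρ)
  set X := XX η r θ
  set E := Complex.exp (Complex.I * κ * kk r θ)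
  have hs1 : Real.sin (-θ / 2) ≤ 1 := Real.sin_le_one _
  have hXr0 : 0 ≤ X.re := by rw [hXr]; positivity
  have hy : 0 ≤ 2 * κ * ρ * Real.sin (-θ / 2) := by positivity
  have hyl : 2 * κ * ρ * Real.sin (-θ / 2) ≤ 2 * κ * ρ * 1 := by gcongr
  set y := 2 * κ * ρ * Real.sin (-θ / 2)
  have hdS' : 0 ≤ d * S := mul_nonneg hd0 hS0.le
  have hd1 : d ≤ 1 / 240 := by nlinarith
  have err := MainB_err (by linarith : d ≤ 1) h1 h2 h3 h4 hX hy hE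
  have tri : ‖E ^ 2 * (1 + X) + (E⁻¹) ^ 2 * (1 - X)‖ - ‖MainB X E e1 e2 e3 e4 - (E ^ 2 * (1 + X) + (E⁻¹) ^ 2 * (1 - X))‖ ≤ ‖MainB X E e1 e2 e3 e4‖ := by
    have := norm_sub_norm_le (E ^ 2 * (1 + X) + (E⁻¹) ^ 2 * (1 - X)) (-(MainB X E e1 e2 e3 e4 - (E ^ 2 * (1 + X) + (E⁻¹) ^ 2 * (1 - X))))
    rw [norm_neg, sub_neg_eq_add, add_sub_cancel] at this
    exact this
  have hey := Real.exp_pos y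
  have hR2 : 1 / (4 * R ^ 2) ≤ 1 / 16 := by
    apply one_div_le_one_div_of_le (by norm_num); nlinarith
  rcases le_total (4 * κ * ρ) 1 with hc | hc
  · have h32 := hsm hc
    have he2 : Real.exp y ≤ 2 := by
      have : y ≤ 1 / 2 := by linarith
      have h2 : Real.exp (1 / 2) ^ 2 ≤ 4 := by
        rw [← Real.exp_nat_mul]; norm_num; linarith [Real.exp_one_lt_d9]
      have : Real.exp (1 / 2) ≤ 2 := by nlinarith [Real.exp_pos (1 / 2)]
      exact (Real.exp_le_exp.2 ‹y ≤ 1 / 2›).trans this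
    have a : 30 * d * (1 + S) * Real.exp y ≤ 30 * d * (1 + S) * 2 := by gcongr
    have b : Real.exp y * (1 / (4 * R ^ 2)) ≤ 2 * (1 / 16) := by gcongr
    linarith
  · obtain ⟨b1, b2⟩ := hbig hc
    have hg := G_ge hX hXr0 hE hy
    have gap := exp_gap hy
    have hRR : 1 / R ^ 2 ≤ 1 / 2 := by apply one_div_le_one_div_of_le (by norm_num); nlinarith
    have c2 : 1 / R ^ 2 ≤ min (1 / 2) y := le_min hRR b2
    have hmin : 120 * d ≤ min (1 / 2) y := le_min (by linarith) b1
    have c3 : (1 + S) / 2 * (Real.exp y * min (1 / 2) y) ≤ (1 + S) / 2 * (Real.exp y - Real.exp (-y)) := by gcongr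
    have c4 : 30 * d * (1 + S) * Real.exp y ≤ (1 + S) / 4 * Real.exp y * min (1 / 2) y := by
      have := mul_le_mul_of_nonneg_right hmin (by positivity : 0 ≤ (1 + S) / 4 * Real.exp y)
      linarith
    have c5 : Real.exp y * (1 / R ^ 2) ≤ Real.exp y * min (1 / 2) y := by gcongr
    have c6 : 1 / (4 * R ^ 2) = 1 / R ^ 2 / 4 := by rw [mul_comm, div_div]
    have c7 : 0 ≤ S * (Real.exp y * min (1 / 2) y) := mul_nonneg hS0.le ((by positivity : 0 ≤ Real.exp y * (1 / R ^ 2)).trans c5)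
    rw [c6]
    nlinarith

lemma S_sq_le {η R S : ℝ} (hR : 1 ≤ R) (hS2 : S ^ 2 ≤ R * (1 / (4 * η ^ 2))) :
    (1 + S) ^ 2 ≤ (2 + 1 / (2 * η ^ 2)) * R := by
  have : 1 / (2 * η ^ 2) = 2 * (1 / (4 * η ^ 2)) := by ring
  rw [this]
  nlinarith [sq_nonneg (1 - S)]

lemma fin1 {η R S P m N : ℝ} (hη : 0 < η) (hR : 1 + 768 * η * (2 + 1 / (2 * η ^ 2)) ≤ R)
    (hS : 1 / (2 * η * R) ≤ S) (hS2 : S ^ 2 ≤ R * (1 / (4 * η ^ 2))) (hP : R ^ 20 / 3 ≤ P)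
    (hm : 1 / (4 * R ^ 2) ≤ m) (hN : N ≤ 32 * (1 + S) ^ 2) : N < S * P * m := by
  have hK : 0 < 2 + 1 / (2 * η ^ 2) := by positivity
  set K := 2 + 1 / (2 * η ^ 2) with hKd
  have hR1 : 1 ≤ R := by nlinarith [mul_pos hη hK]
  have h1 := S_sq_le hR1 hS2
  have hR0 : 0 < R := by linarith
  have hS0 : 0 ≤ S := le_trans (by positivity) hS
  have hP0 : 0 ≤ P := le_trans (by positivity) hP
  have low : 1 / (2 * η * R) * (R ^ 20 / 3) * (1 / (4 * R ^ 2)) ≤ S * P * m := by gcongr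
  have e : 1 / (2 * η * R) * (R ^ 20 / 3) * (1 / (4 * R ^ 2)) = R ^ 16 * R / (24 * η) := by field_simp; norm_num
  have h16 : R ≤ R ^ 16 := le_self_pow₀ hR1 (by norm_num)
  have : 32 * (K * R) < R ^ 16 * R / (24 * η) := by
    rw [lt_div_iff₀ (by positivity)]
    have : 768 * η * K < R ^ 16 := by linarith
    nlinarith
  linarith

lemma fin2 {η R S Q m : ℝ} (hη : 0 < η) (hR : 1 + 384 * (2 + 1 / (2 * η ^ 2)) ≤ R) (hS0 : 0 ≤ S)
    (hS2 : S ^ 2 ≤ R * (1 / (4 * η ^ 2))) (hm0 : 0 ≤ m) (hQ0 : 0 ≤ Q) (hmQ : m * Q ≤ 96 * (1 + S) * (R ^ 20)⁻¹) :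
    S * (m * Q) ≤ 1 / 4 := by
  have hK : 0 < 2 + 1 / (2 * η ^ 2) := by positivity
  set K := 2 + 1 / (2 * η ^ 2) with hKd
  have hR1 : 1 ≤ R := by nlinarith
  have h1 := S_sq_le hR1 hS2
  have hR0 : 0 < R := by linarith
  have h19 : R ≤ R ^ 19 := le_self_pow₀ hR1 (by norm_num)
  calc S * (m * Q) ≤ S * (96 * (1 + S) * (R ^ 20)⁻¹) := by gcongr
    _ ≤ (1 + S) * (96 * (1 + S) * (R ^ 20)⁻¹) := by gcongr; linarith
    _ = 96 * (1 + S) ^ 2 * (R ^ 20)⁻¹ := by ring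
    _ ≤ 96 * (K * R) * (R ^ 20)⁻¹ := by gcongr
    _ = 96 * K / R ^ 19 := by field_simp
    _ ≤ 1 / 4 := by
      rw [div_le_iff₀ (by positivity)]; linarith

lemma le_mul_pow {f τ ρ : ℝ} (hτ : 0 < τ) (hρ : 0 < ρ) (h0 : f ≤ τ) (h4 : f ≤ τ * ρ ^ 4) {j : ℕ} (hj : j ≤ 4) :
    f ≤ τ * ρ ^ j := by
  rcases le_total ρ 1 with h | h
  · exact h4.trans (mul_le_mul_of_nonneg_left (pow_le_pow_of_le_one hρ.le h hj) hτ.le)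
  · exact h0.trans (le_mul_of_one_le_right hτ.le (one_le_pow₀ h))

lemma sin_ge {x : ℝ} (h0 : 0 ≤ x) (h1 : x ≤ π / 2) : 2 / π * x ≤ Real.sin x := Real.mul_le_sin h0 h1

lemma le_of_sq_le_big {x R : ℝ} (hR : 1 ≤ R) (h : x ^ 2 ≤ R) : x ≤ R := by nlinarith

set_option maxHeartbeats 4000000 in
lemma core (κ η M : ℝ) (hκ : 0 < κ) (hη : 0 < η) (hM : 20 < M) :
    ∃ τ : ℝ, 0 < τ ∧ ∀ f r θ : ℝ, 0 < f → f ≤ τ → 0 < r → f ≤ τ * r ^ 2 →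
      ((f * M * Real.log (r + f⁻¹) ≤ r * Real.sqrt r * (-θ) ∧
        f * M * Real.log (r + f⁻¹) ≤ r * Real.sqrt r * (θ + 2 * π / 3)) ∨
       (-π ≤ θ ∧ f * M * Real.log (r + f⁻¹) * (Real.sqrt r + 1) ≤ r * Real.sqrt r * (-(2 * π / 3) - θ))) →
      Df κ η f (kk r θ ^ 2) ≠ 0 := by
  obtain ⟨C, hC1, hC⟩ := D_forms κ hκ
  have hC0 : 0 < C := by linarith
  set K := 2 + 1 / (2 * η ^ 2) with hK
  have hK0 : 0 < K := by positivity
  clear_value K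
  set L0 := κ + 12 * C * (1 + 4 * κ) / κ with hL0
  set B := 2 + 768 * η * K + 384 * K + Real.exp L0 + 240 * C * (2 + 1 / η) + C + 4 * κ with hB
  have p1 : 0 < 768 * η * K := by positivity
  have p2 : 0 < 384 * K := by positivity
  have p3 := Real.exp_pos L0
  have p4 : 0 < 240 * C * (2 + 1 / η) := by positivity
  have hB0 : 0 < B := by positivity
  clear_value B L0
  refine ⟨1 / B, by positivity, ?_⟩
  intro f r θ hf hfτ hr hfr hreg hD
  have hpi := Real.pi_pos
  have hpi3 := Real.pi_gt_three
  have hpi4 := Real.pi_lt_d2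
  have hρ : 0 < Real.sqrt r := Real.sqrt_pos.2 hr
  have hX := XX_norm (θ := θ) hη hr
  have hXr := XX_re (θ := θ) hη hr
  have hE := EE_norm (κ := κ) (θ := θ) hr
  have hCf := hC f r θ hf
  have hMge := fun d R e1 e2 e3 e4 => @MainB_ge κ η r θ d R e1 e2 e3 e4 hκ hη hr
  set ρ := Real.sqrt r with hρd
  have hrρ : r = ρ ^ 2 := (Real.sq_sqrt hr.le).symm
  clear_value ρ
  set τ := 1 / B with hτ
  have hτ0 : 0 < τ := by positivity
  have hτB : τ * B = 1 := by rw [hτ]; field_simp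
  clear_value τ
  have f4 : f ≤ τ * ρ ^ 4 := by rw [hrρ] at hfr; calc f ≤ _ := hfr
                                   _ = _ := by ring
  have fj := fun j hj => le_mul_pow hτ0 hρ hfτ f4 (j := j) hj
  have τb : ∀ b, b ≤ B → b * τ ≤ 1 := fun b hb => by rw [← hτB, mul_comm]; gcongr
  have hf1 : f ≤ 1 := by have := τb 1 (by linarith); linarith
  -- R, L
  set R := r + f⁻¹ with hR
  have hfi : 0 < f⁻¹ := inv_pos.2 hf
  have hBR : B ≤ R := by
    have : B ≤ f⁻¹ := by rw [le_inv_comm₀ hB0 hf, ← one_div]; rw [← hτ]; exact hfτ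
    linarith
  have hR2 : 2 ≤ R := by linarith
  have hR0 : 0 < R := by linarith
  set L := Real.log R with hL
  have hLL0 : L0 ≤ L := by rw [hL, Real.le_log_iff_exp_le hR0]; linarith
  clear_value L R
  have hq0 : 0 < 12 * C * (1 + 4 * κ) / κ := by positivity
  have hLκ : κ ≤ L := by rw [hL0] at hLL0; linarith
  have hL1 : 12 * C * (1 + 4 * κ) ≤ κ * L := by
    have : 12 * C * (1 + 4 * κ) / κ ≤ L := by rw [hL0] at hLL0; linarith
    rwa [div_le_iff₀ hκ, mul_comm L] at this
  have hLpos : 0 < L := by linarith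
  -- delta
  set S := 1 / (2 * η * ρ) with hS
  have hS0 : 0 < S := by positivity
  clear_value S
  set δ := f / r + f / (r * ρ) with hδ
  have hδ0 : 0 < δ := by positivity
  clear_value δ
  have dj : ∀ j : ℕ, j ≤ 4 → f / ρ ^ j ≤ τ := fun j hj => by
    rw [div_le_iff₀ (by positivity)]; exact fj j hj
  have hδe : δ = f / ρ ^ 2 + f / ρ ^ 3 := by rw [hδ, hrρ]; ring
  have hδS : δ * (1 + S) ≤ (2 + 1 / η) * τ := by
    have e : δ * (1 + S) = f / ρ ^ 2 + f / ρ ^ 3 + 1 / (2 * η) * (f / ρ ^ 3 + f / ρ ^ 4) := by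
      rw [hδe, hS]; field_simp
    have a2 := dj 2 (by norm_num)
    have a3 := dj 3 (by norm_num)
    have a4 := dj 4 (by norm_num)
    have : 1 / (2 * η) * (f / ρ ^ 3 + f / ρ ^ 4) ≤ 1 / (2 * η) * (τ + τ) := by gcongr
    have e2 : 1 / (2 * η) * (τ + τ) = 1 / η * τ := by field_simp; ring
    rw [e]; linarith
  have hdS : 240 * (C * δ * (1 + S)) ≤ 1 := by
    calc 240 * (C * δ * (1 + S)) = 240 * C * (δ * (1 + S)) := by ring
      _ ≤ 240 * C * ((2 + 1 / η) * τ) := by gcongr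
      _ = 240 * C * (2 + 1 / η) * τ := by ring
      _ ≤ 1 := τb _ (by linarith)
  have hd0 : 0 < C * δ := by positivity
  have hdS0 : 0 < C * δ * S := by positivity
  have hd1 : C * δ ≤ 1 := by linarith
  have hfρ : C * (f / ρ) ≤ 1 := by
    have := dj 1 (by norm_num)
    rw [pow_one] at this
    exact (mul_le_mul_of_nonneg_left this hC0.le).trans (τb C (by linarith))
  have hκf : κ * (f / r) ≤ 1 / 4 := by
    have := dj 2 (by norm_num)
    rw [← hrρ] at this
    have h2 := τb (4 * κ) (by linarith)
    have h3 := mul_le_mul_of_nonneg_left this hκ.le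
    linarith
  -- S bounds
  have hrR : r ≤ R := by linarith
  have hfR : f⁻¹ ≤ R := by linarith
  have hSl : 1 / (2 * η * R) ≤ S := by
    rw [hS]
    have : ρ ≤ R := le_of_sq_le_big (by linarith) (hrρ ▸ hrR)
    gcongr
  have hrinv : 1 / r ≤ R := by
    have h1 : f ≤ r ^ 2 := hfr.trans (by have := τb 1 (by linarith); rw [one_mul] at this; exact mul_le_of_le_one_left (sq_nonneg r) this)
    have h2 : (1 / r) ^ 2 ≤ f⁻¹ := by
      rw [one_div, inv_pow]; exact inv_anti₀ hf h1
    exact le_of_sq_le_big (by linarith) (h2.trans hfR)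
  have hS2 : S ^ 2 ≤ R * (1 / (4 * η ^ 2)) := by
    have e : S ^ 2 = 1 / r * (1 / (4 * η ^ 2)) := by rw [hS, hrρ]; field_simp; norm_num
    rw [e]; gcongr
  have hR1 : 1 + 768 * η * K ≤ R := by linarith
  have hR3 : 1 + 384 * K ≤ R := by linarith
  have hexpR : Real.exp (20 * L) = R ^ 20 := by
    rw [hL, ← Real.exp_log (pow_pos hR0 20), Real.log_pow]; norm_num
  have hexp3 : (1 : ℝ) / 3 ≤ Real.exp (-1) := by
    rw [Real.exp_neg, one_div]; exact inv_anti₀ (Real.exp_pos 1) (by linarith [Real.exp_one_lt_d9])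
  have hFL : 0 < f * M * L := by positivity
  have hrr : 0 < r * ρ := by positivity
  obtain ⟨p, hp, hAC, hBC⟩ := hCf hf1 hr hd1
  have hp1 := abs_le.1 (hp.trans hfρ)
  have hsin : Real.sin (3 * θ / 2) = -Real.sin (3 * (-θ) / 2) := by rw [← Real.sin_neg]; congr 1; ring
  rw [hsin] at hp1
  have hPn : ‖Complex.exp (2 * p)‖ = Real.exp (2 * p.re) := by rw [Complex.norm_exp]; congr 1; simp
  have hsn : -π ≤ θ → θ ≤ 0 → 0 ≤ Real.sin (-θ / 2) := fun _ _ => Real.sin_nonneg_of_nonneg_of_le_pi (by linarith) (by linarith)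
  have hsl : -π ≤ θ → θ ≤ 0 → 1 / π * (-θ) ≤ Real.sin (-θ / 2) := fun _ _ => by
    have := sin_ge (x := -θ / 2) (by linarith) (by linarith)
    refine le_trans (le_of_eq ?_) this; ring
  rcases hreg with ⟨g1, g2⟩ | ⟨g1, g2⟩
  · have hθ0 : θ < 0 := by
      have : 0 < r * ρ * (-θ) := by linarith
      have := (pos_iff_pos_of_mul_pos this).1 hrr
      linarith
    have hθ1 : -(2 * π / 3) < θ := by
      have : 0 < r * ρ * (θ + 2 * π / 3) := by linarith
      have := (pos_iff_pos_of_mul_pos this).1 hrr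
      linarith
    have s0 := hsn (by linarith) hθ0.le
    have s1 := hsl (by linarith) hθ0.le
    set y := 2 * κ * ρ * Real.sin (-θ / 2) with hy
    have hy0 : 0 ≤ y := by positivity
    clear_value y
    have hey : 1 ≤ Real.exp y := Real.one_le_exp hy0
    -- y lower bound
    have hyl : 10 * κ * L * (f / r) ≤ y := by
      have a1 : f / r * (M * L) ≤ ρ * (-θ) := by
        rw [div_mul_eq_mul_div, div_le_iff₀ hr]; linarith
      have a2 : 2 * κ * ρ * (1 / π * (-θ)) ≤ y := by rw [hy]; gcongr
      have a3 : 1 / 4 ≤ 1 / π := one_div_le_one_div_of_le hpi (by linarith)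
      have a4 : 2 * κ * (1 / 4) * (f / r * (20 * L)) ≤ 2 * κ * (1 / π) * (f / r * (M * L)) := by gcongr
      have a5 : 2 * κ * (1 / π) * (f / r * (M * L)) ≤ 2 * κ * (1 / π) * (ρ * (-θ)) := by gcongr
      linarith
    have hbig : 1 ≤ 4 * κ * ρ → 120 * (C * δ) ≤ y ∧ 1 / R ^ 2 ≤ y := by
      intro hc
      have hfr0 : 0 < f / r := by positivity
      constructor
      · have e : δ = f / r * (1 + 1 / ρ) := by rw [hδ]; field_simp
        have : 1 / ρ ≤ 4 * κ := by rw [div_le_iff₀ hρ]; exact hc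
        calc 120 * (C * δ) = 120 * C * (f / r) * (1 + 1 / ρ) := by rw [e]; ring
          _ ≤ 120 * C * (f / r) * (1 + 4 * κ) := by gcongr
          _ = 10 * (12 * C * (1 + 4 * κ)) * (f / r) := by ring
          _ ≤ 10 * (κ * L) * (f / r) := by gcongr
          _ ≤ y := by linarith
      · have h1 : 1 ≤ 10 * κ * L := by have := mul_pos hC0 hκ; linarith
        have h2 : f / r ≤ y := (le_mul_of_one_le_left hfr0.le h1).trans hyl
        refine le_trans ?_ h2
        have : 1 / R ≤ f := by rw [one_div]; exact (inv_le_comm₀ hf hR0).1 hfR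
        have : 1 / R ≤ 1 / r := one_div_le_one_div_of_le hr hrR
        calc 1 / R ^ 2 = 1 / R * (1 / R) := by field_simp
          _ ≤ f * (1 / r) := by gcongr
          _ = f / r := by ring
    rcases le_total θ (-(π / 3)) with hc | hc
    · obtain ⟨e1, e2, e3, e4, n1, n2, n3, n4, hDf⟩ := hAC (by linarith) hc
      have hm := hMge _ R e1 e2 e3 e4 hθ0.le (by linarith) n1 n2 n3 n4 hdS hR2 hbig
      have hrest := RestAC_le hd1 n1 n2 n3 n4 hX hy0 hE
      have hP : R ^ 20 / 3 ≤ Real.exp (2 * p.re) := by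
        have hs : 3 / π * (θ + 2 * π / 3) ≤ Real.sin (3 * (-θ) / 2) := by
          have := sin_ge (x := 3 * (θ + 2 * π / 3) / 2) (by linarith) (by linarith)
          rw [show 3 * (-θ) / 2 = π - 3 * (θ + 2 * π / 3) / 2 by ring, Real.sin_pi_sub]
          refine le_trans (le_of_eq ?_) this; ring
        have a1 : 4 / (3 * f) * (r * ρ) * (3 / π * (θ + 2 * π / 3)) ≤ 4 / (3 * f) * (r * ρ) * Real.sin (3 * (-θ) / 2) := by gcongr
        have a2 : 4 / (3 * f) * (r * ρ) * (3 / π * (θ + 2 * π / 3)) = 4 / π * (r * ρ * (θ + 2 * π / 3) / f) := by field_simp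
        have a3 : M * L ≤ r * ρ * (θ + 2 * π / 3) / f := by rw [le_div_iff₀ hf]; linarith
        have a4 : 1 ≤ 4 / π := by rw [le_div_iff₀ hpi]; linarith
        have a5 : 1 * (20 * L) ≤ 4 / π * (r * ρ * (θ + 2 * π / 3) / f) := by
          have : 20 * L ≤ M * L := by gcongr
          exact mul_le_mul a4 (this.trans a3) (by positivity) (by positivity)
        have a6 : 20 * L + -1 ≤ 2 * p.re := by linarith [hp1.1]
        calc R ^ 20 / 3 = R ^ 20 * (1 / 3) := by ring
          _ ≤ Real.exp (20 * L) * Real.exp (-1) := by rw [hexpR]; gcongr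
          _ ≤ _ := by rw [← Real.exp_add]; exact Real.exp_le_exp.2 a6
      have hm' : 1 / (4 * R ^ 2) ≤ ‖MainB (XX η r θ) (Complex.exp (Complex.I * κ * kk r θ)) e1 e2 e3 e4‖ :=
        (le_mul_of_one_le_left (by positivity) hey).trans hm
      have := fin1 hη (hK ▸ hR1) hSl hS2 hP hm' hrest
      rw [hDf η hη] at hD
      have hn := congrArg norm (eq_neg_of_add_eq_zero_left hD)
      rw [norm_neg, norm_mul, norm_mul, norm_mul, Complex.norm_I, one_mul, hX, hPn] at hn
      linarith
    · obtain ⟨e1, e2, e3, e4, n1, n2, n3, n4, hDf⟩ := hBC hc hθ0.le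
      have hm := hMge _ R e1 e2 e3 e4 hθ0.le (by linarith) n1 n2 n3 n4 hdS hR2 hbig
      have hrest := RestBC_le hd1 n1 n2 n3 n4 hX hy0 hE
      have hP : R ^ 20 / 3 ≤ Real.exp (2 * p.re - y) := by
        have hs : 3 / π * (-θ) ≤ Real.sin (3 * (-θ) / 2) := by
          have := sin_ge (x := 3 * (-θ) / 2) (by linarith) (by linarith)
          refine le_trans (le_of_eq ?_) this; ring
        have a1 : 4 / (3 * f) * (r * ρ) * (3 / π * (-θ)) ≤ 4 / (3 * f) * (r * ρ) * Real.sin (3 * (-θ) / 2) := by gcongr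
        set q := r * ρ * (-θ) / f with hq
        have a2 : 4 / (3 * f) * (r * ρ) * (3 / π * (-θ)) = 4 / π * q := by rw [hq]; field_simp
        have a3 : M * L ≤ q := by rw [hq, le_div_iff₀ hf]; linarith
        have a4 : 5 / 4 ≤ 4 / π := by rw [le_div_iff₀ hpi]; linarith
        have a5 : 20 * L ≤ M * L := by gcongr
        have hq0 : 0 < q := by linarith
        have hyu : y ≤ 1 / 4 * q := by
          have : Real.sin (-θ / 2) ≤ -θ / 2 := Real.sin_le (by linarith)
          calc y ≤ 2 * κ * ρ * (-θ / 2) := by rw [hy]; gcongr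
            _ = κ * (f / r) * q := by rw [hq]; field_simp
            _ ≤ 1 / 4 * q := by gcongr
        have a6 : 5 / 4 * q ≤ 4 / π * q := by gcongr
        have a7 : 20 * L + -1 ≤ 2 * p.re - y := by linarith [hp1.1]
        calc R ^ 20 / 3 = R ^ 20 * (1 / 3) := by ring
          _ ≤ Real.exp (20 * L) * Real.exp (-1) := by rw [hexpR]; gcongr
          _ ≤ _ := by rw [← Real.exp_add]; exact Real.exp_le_exp.2 a7
      have := fin1 hη (hK ▸ hR1) hSl hS2 hP le_rfl le_rfl
      rw [hDf η hη] at hD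
      have hn := congrArg norm (eq_neg_of_add_eq_zero_left hD)
      rw [norm_neg, norm_mul, norm_mul, norm_mul, Complex.norm_I, one_mul, hX, hPn] at hn
      have hsplit : Real.exp (2 * p.re) = Real.exp (2 * p.re - y) * Real.exp y := by rw [← Real.exp_add]; congr 1; ring
      have h3 : S * Real.exp (2 * p.re) * (Real.exp y * (1 / (4 * R ^ 2))) ≤ 32 * (1 + S) ^ 2 * Real.exp y ^ 2 := by
        refine le_trans ?_ (hn.le.trans hrest); gcongr
      rw [hsplit] at h3
      have h4 := mul_lt_mul_of_pos_right this (pow_pos (Real.exp_pos y) 2)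
      linarith
  · have hθ0 : θ < -(2 * π / 3) := by
      have h : 0 < f * M * L * (ρ + 1) := by positivity
      have : 0 < r * ρ * (-(2 * π / 3) - θ) := by linarith
      have := (pos_iff_pos_of_mul_pos this).1 hrr
      linarith
    have s0 := hsn g1 (by linarith)
    have s1 := hsl g1 (by linarith)
    have s2 : 1 / 2 ≤ Real.sin (-θ / 2) := by
      refine le_trans ?_ s1
      rw [one_div_mul_eq_div, le_div_iff₀ hpi]; linarith
    set y := 2 * κ * ρ * Real.sin (-θ / 2) with hy
    have hy0 : 0 ≤ y := by positivity
    clear_value y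
    have hyu : y ≤ 2 * L * ρ := by
      have : Real.sin (-θ / 2) ≤ 1 := Real.sin_le_one _
      calc y ≤ 2 * κ * ρ * 1 := by rw [hy]; gcongr
        _ ≤ 2 * L * ρ * 1 := by gcongr
        _ = _ := by ring
    obtain ⟨e1, e2, e3, e4, n1, n2, n3, n4, hDf⟩ := hAC g1 (by linarith)
    have hrest := RestAC_ge hd1 n1 n2 n3 n4 hX hy0 hE
    have hmain := MainB_le hd1 n1 n2 n3 n4 hX hy0 hE
    have hP : 2 * p.re + y ≤ 1 - 20 * L := by
      have hs : 3 / π * (-(2 * π / 3) - θ) ≤ -Real.sin (3 * (-θ) / 2) := by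
        have := sin_ge (x := 3 * (-(2 * π / 3) - θ) / 2) (by linarith) (by linarith)
        rw [show 3 * (-θ) / 2 = 3 * (-(2 * π / 3) - θ) / 2 + π by ring, Real.sin_add_pi, neg_neg]
        refine le_trans (le_of_eq ?_) this; ring
      have a1 : 4 / (3 * f) * (r * ρ) * (3 / π * (-(2 * π / 3) - θ)) ≤ 4 / (3 * f) * (r * ρ) * (-Real.sin (3 * (-θ) / 2)) := by gcongr
      have a2 : 4 / (3 * f) * (r * ρ) * (3 / π * (-(2 * π / 3) - θ)) = 4 / π * (r * ρ * (-(2 * π / 3) - θ) / f) := by field_simp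
      have a3 : M * L * (ρ + 1) ≤ r * ρ * (-(2 * π / 3) - θ) / f := by rw [le_div_iff₀ hf]; linarith
      have a4 : 1 ≤ 4 / π := by rw [le_div_iff₀ hpi]; linarith
      have a5 : 1 * (20 * L * (ρ + 1)) ≤ 4 / π * (r * ρ * (-(2 * π / 3) - θ) / f) := by
        have : 20 * L * (ρ + 1) ≤ M * L * (ρ + 1) := by gcongr
        exact mul_le_mul a4 (this.trans a3) (by positivity) (by positivity)
      have : 0 < L * ρ := by positivity
      linarith [hp1.2]
    have hmQ : Real.exp (2 * p.re) * ‖MainB (XX η r θ) (Complex.exp (Complex.I * κ * kk r θ)) e1 e2 e3 e4‖ ≤ 96 * (1 + S) * (R ^ 20)⁻¹ := by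
      calc _ ≤ Real.exp (2 * p.re) * (32 * (1 + S) * Real.exp y) := by gcongr
        _ = 32 * (1 + S) * Real.exp (2 * p.re + y) := by rw [Real.exp_add]; ring
        _ ≤ 32 * (1 + S) * Real.exp (1 - 20 * L) := by gcongr
        _ = 32 * (1 + S) * (Real.exp 1 * (R ^ 20)⁻¹) := by rw [Real.exp_sub, hexpR]; ring
        _ ≤ 32 * (1 + S) * (3 * (R ^ 20)⁻¹) := by gcongr; linarith [Real.exp_one_lt_d9]
        _ = _ := by ring
    have := fin2 hη (hK ▸ hR3) hS0.le hS2 (Real.exp_pos _).le (norm_nonneg _) hmQ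
    rw [hDf η hη] at hD
    have hn := congrArg norm (eq_neg_of_add_eq_zero_left hD)
    rw [norm_neg, norm_mul, norm_mul, norm_mul, Complex.norm_I, one_mul, hX, hPn] at hn
    rw [hXr] at hrest
    have h1 : S * (1 / 2) ≤ S * Real.sin (-θ / 2) := by gcongr
    have h2 : 30 * (C * δ) * S * (1 + S) ≤ 1 / 2 * (1 + S) := by
      gcongr; linarith
    linarith

/-- For small `f`, `D_f` has no zeros in the regions `R₁` (near but off the ray
`arg z = −2π/3`) and `R₂` (the sector between the two critical rays), for
`z = re^{iθ}` with `r > f^a`. -/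
theorem stmt8 (κ η : ℝ) (hκ : 0 < κ) (hη : 0 < η) (a M : ℝ)
    (ha0 : 0 < a) (ha1 : a < 1 / 2) (hM : 20 < M) :
    ∃ f₀ > (0 : ℝ), ∀ f : ℝ, 0 < f → f < f₀ → ∀ r θ : ℝ,
      ((f ^ a < r ∧
          -(2 * π / 3) + r ^ (-(3 : ℝ) / 2) * M * f * Real.log (r + f⁻¹) < θ ∧
          θ < -(r ^ (-(3 : ℝ) / 2) * M * f * Real.log (r + f⁻¹))) ∨
       (f ^ a < r ∧ -(2 * π) < θ ∧
          θ < -(2 * π / 3) - r⁻¹ * (1 + r ^ (-(1 : ℝ) / 2)) * M * f * Real.log (r + f⁻¹))) →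
      Df κ η f ((r : ℂ) * Complex.exp (Complex.I * θ)) ≠ 0 := by
  obtain ⟨τ, hτ, H⟩ := core κ η M hκ hη hM
  have hb : 0 < 1 - 2 * a := by linarith
  refine ⟨min τ (τ ^ (1 / (1 - 2 * a))), lt_min hτ (Real.rpow_pos_of_pos hτ _), ?_⟩
  intro f hf hff r θ hreg
  have hfa : 0 < f ^ a := Real.rpow_pos_of_pos hf a
  have hra : f ^ a < r := by rcases hreg with h | h <;> exact h.1
  have hr : 0 < r := hfa.trans hra
  have hρ : 0 < Real.sqrt r := Real.sqrt_pos.2 hr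
  have hfr : f ≤ τ * r ^ 2 := by
    have h1 : f ^ (1 - 2 * a) ≤ τ := by
      have := Real.rpow_le_rpow hf.le (hff.le.trans (min_le_right _ _)) hb.le
      rwa [← Real.rpow_mul hτ.le, one_div_mul_cancel hb.ne', Real.rpow_one] at this
    have h2 : f = f ^ (1 - 2 * a) * (f ^ a) ^ 2 := by
      rw [← Real.rpow_natCast, ← Real.rpow_mul hf.le, ← Real.rpow_add hf]
      rw [show 1 - 2 * a + a * ((2 : ℕ) : ℝ) = 1 by push_cast; ring, Real.rpow_one]
    rw [h2]
    gcongr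
  have hH := H f r θ hf (hff.le.trans (min_le_left _ _)) hr hfr
  rw [← kk_sq hr]
  have e32 : r ^ (-(3 : ℝ) / 2) = (r * Real.sqrt r)⁻¹ := by
    rw [neg_div, Real.rpow_neg hr.le, Real.sqrt_eq_rpow]
    nth_rewrite 2 [← Real.rpow_one r]
    rw [← Real.rpow_add hr]; norm_num
  have e12 : r ^ (-(1 : ℝ) / 2) = (Real.sqrt r)⁻¹ := by
    rw [neg_div, Real.rpow_neg hr.le, Real.sqrt_eq_rpow]
  rw [e32, e12] at hreg
  have hrr : 0 < r * Real.sqrt r := by positivity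
  have hmul := fun x y (h : x ≤ y) => mul_le_mul_of_nonneg_left (a := r * Real.sqrt r) (b := x) (c := y) h hrr.le
  rcases hreg with ⟨-, h1, h2⟩ | ⟨-, h1, h2⟩
  · apply hH
    left
    have e : r * Real.sqrt r * ((r * Real.sqrt r)⁻¹ * M * f * Real.log (r + f⁻¹)) = f * M * Real.log (r + f⁻¹) := by
      field_simp
    rw [← e]
    exact ⟨hmul _ _ (by linarith), hmul _ _ (by linarith)⟩
  · rcases lt_or_ge θ (-π) with hc | hc
    · apply Df_ne_upper hκ hη hf
      rw [kk_sq hr, Complex.im_ofReal_mul, mul_comm Complex.I, Complex.exp_ofReal_mul_I_im]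
      apply mul_pos hr
      rw [show θ = (θ + 2 * π) - 2 * π by ring, Real.sin_sub_two_pi]
      exact Real.sin_pos_of_pos_of_lt_pi (by linarith) (by linarith)
    · apply hH
      right
      refine ⟨hc, ?_⟩
      have e : r * Real.sqrt r * (r⁻¹ * (1 + (Real.sqrt r)⁻¹) * M * f * Real.log (r + f⁻¹)) = f * M * Real.log (r + f⁻¹) * (Real.sqrt r + 1) := by
        field_simp
      rw [← e]
      exact hmul _ _ (by linarith)
end
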